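/- arXiv:1412.4259 — 2 statements merged into one kernel-verified Lean document; each statement's English description precedes it below -/
import Mathlib

section
/- There exist constants c₁, c₂ ∈ ℕ such that for every 2-VASS V = (Q,T) there exist a natural number D ≤ (|Q| + ‖T‖)^{c₁} and a finite set X of linear path schemes over V such that, writing O = [D,∞)×[D,∞) ⊆ ℕ²: for all states p,q ∈ Q and all u,v ∈ O, p(u) →*_O q(v) holds if and only if p(u) →^X_{ℕ²} q(v) holds; moreover every ρ ∈ X has length at most (|Q| + ‖T‖)^{c₂} and at most 2·|Q| cycles. -/
namespace VASS

/-- Integer vectors of dimension `d`. -/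
abbrev Vec (d : ℕ) := Fin d → ℤ

/-- A transition of a `d`-VASS: source state, update vector, target state. -/
abbrev Trans (d : ℕ) := ℕ × Vec d × ℕ

/-- The norm of a vector: maximum of absolute values of its components. -/
def vnorm {d : ℕ} (z : Vec d) : ℕ := Finset.univ.sup fun i => (z i).natAbs

/-- The norm of a transition set. -/
def tnorm {d : ℕ} (T : Finset (Trans d)) : ℕ := T.sup fun t => vnorm t.2.1

/-- The displacement of a word of transitions. -/
def disp {d : ℕ} (π : List (Trans d)) : Vec d := (π.map fun t => t.2.1).sum

/-- `IsPathFrom p q π` : `π` is a path from `p` to `q`. -/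
def IsPathFrom {d : ℕ} : ℕ → ℕ → List (Trans d) → Prop
  | p, q, [] => p = q
  | p, q, t :: rest => t.1 = p ∧ IsPathFrom t.2.2 q rest

/-- ℕ^d as a subset of ℤ^d. -/
def NatSet (d : ℕ) : Set (Vec d) := {v | ∀ i, 0 ≤ v i}

/-- `p(u) →^π_A q(v)`. -/
def Run {d : ℕ} (T : Finset (Trans d)) (A : Set (Vec d)) (p : ℕ) (u : Vec d)
    (q : ℕ) (v : Vec d) (π : List (Trans d)) : Prop :=
  (∀ t ∈ π, t ∈ T) ∧ IsPathFrom p q π ∧ u ∈ A ∧ v = u + disp π ∧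
    ∀ i, 1 ≤ i → i ≤ π.length → u + disp (π.take i) ∈ A

/-- `p(u) →*_A q(v)`. -/
def Reach {d : ℕ} (T : Finset (Trans d)) (A : Set (Vec d)) (p : ℕ) (u : Vec d)
    (q : ℕ) (v : Vec d) : Prop := ∃ π, Run T A p u q v π

/-- A linear path scheme `α₀ β₁* α₁ ⋯ β_k* α_k`, presented as the initial
segment `α₀` together with the list of pairs `(βᵢ, αᵢ)`. -/
abbrev LPS (d : ℕ) := List (Trans d) × List (List (Trans d) × List (Trans d))

/-- The underlying word `α₀ β₁ α₁ ⋯ β_k α_k` of a linear path scheme. -/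
def lpsSupport {d : ℕ} (ρ : LPS d) : List (Trans d) :=
  ρ.1 ++ (ρ.2.map fun s => s.1 ++ s.2).flatten

/-- The length of a linear path scheme. -/
def lpsLen {d : ℕ} (ρ : LPS d) : ℕ := (lpsSupport ρ).length

/-- The number of cycles of a linear path scheme. -/
def numCycles {d : ℕ} (ρ : LPS d) : ℕ := ρ.2.length

/-- `ρ` is a linear path scheme from `p` to `q` over the transition set `T`:
its underlying word uses transitions from `T` and is a path from `p` to `q`,
and each `βᵢ` is a cycle. -/
def IsLPSFrom {d : ℕ} (T : Finset (Trans d)) (p q : ℕ) (ρ : LPS d) : Prop :=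
  (∀ t ∈ lpsSupport ρ, t ∈ T) ∧ IsPathFrom p q (lpsSupport ρ) ∧
    ∀ s ∈ ρ.2, s.1 ≠ [] ∧ ∃ r, IsPathFrom r r s.1

/-- The word `α₀ β₁^{e₁} α₁ ⋯ β_k^{e_k} α_k` of a linear path scheme. -/
def lpsWord {d : ℕ} (ρ : LPS d) (e : List ℕ) : List (Trans d) :=
  ρ.1 ++ (List.zipWith (fun s n => (List.replicate n s.1).flatten ++ s.2) ρ.2 e).flatten

/-- Membership in the language of a linear path scheme. -/
def InLang {d : ℕ} (ρ : LPS d) (π : List (Trans d)) : Prop :=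
  ∃ e : List ℕ, e.length = numCycles ρ ∧ π = lpsWord ρ e

/-- `p(u) →^S_A q(v)` for a finite set `S` of linear path schemes. -/
def SReach {d : ℕ} (T : Finset (Trans d)) (S : Finset (LPS d)) (A : Set (Vec d))
    (p : ℕ) (u : Vec d) (q : ℕ) (v : Vec d) : Prop :=
  ∃ ρ ∈ S, ∃ π, InLang ρ π ∧ Run T A p u q v π

/-- δ(ρ): the set of displacements of words in the language of `ρ`. -/
def DispSet {d : ℕ} (ρ : LPS d) : Set (Vec d) := {z | ∃ π, InLang ρ π ∧ z = disp π}

/-- A quadrant of ℤ². -/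
def IsQuadrant (Z : Set (Vec 2)) : Prop :=
  ∃ ε : Fin 2 → Bool, Z = {v | ∀ i, if ε i then 0 ≤ v i else v i ≤ 0}

/-- A linear path scheme is zigzag-free if the displacements of all its cycles
lie in a single quadrant. -/
def ZigzagFree (ρ : LPS 2) : Prop :=
  ∃ Z, IsQuadrant Z ∧ ∀ s ∈ ρ.2, disp s.1 ∈ Z

/-!
Already `D = 0` works: reachability in `ℕ²` is captured by small schemes. Cutting a run at its
last visit to each state, in the order of first appearance, leaves at most `|Q|` closed runs, so
it is enough to replace a closed run at `p` by a scheme with two cycles.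

If the closed run stays in a strip of polynomial width around a line, then the state and the
position across the strip take polynomially many values and the position along the line is a
single counter. Away from the axes two cycles suffice: shorten the run modulo the effect of one
cycle and make up for the loss by pumping.

If the closed run leaves every such strip, it can be entered and left through short runs to and
from points deep inside `ℕ²`, where the only constraint is the displacement. The displacement then
lies in the lattice and, with a margin, in the cone of the short cycles, hence up to a bounded
error in the cone of two of them. Replacing these by cycles near the axes makes both point into
one quadrant, so pumping them does not leave `ℕ²`. A tour through all short cycles, with
adjustable multiplicities, corrects the error.
-/

/-! ### Runs and removal of cycles -/

section Words

variable {d : ℕ}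

@[simp]
lemma disp_nil : disp ([] : List (Trans d)) = 0 := rfl

@[simp]
lemma disp_cons (t : Trans d) (π : List (Trans d)) : disp (t :: π) = t.2.1 + disp π := by
  simp [disp]

@[simp]
lemma disp_append (π π' : List (Trans d)) : disp (π ++ π') = disp π + disp π' := by
  simp [disp]

lemma disp_flatten_replicate (n : ℕ) (β : List (Trans d)) :
    disp (List.replicate n β).flatten = n • disp β := by
  induction n with
  | zero => simp
  | succ n ih =>
    rw [List.replicate_succ, List.flatten_cons, disp_append, ih, succ_nsmul, add_comm]

lemma map_sum_disp {Γ : Type*} [AddCommGroup Γ] (h : Vec d →+ Γ) (cs : List (List (Trans d))) :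
    h (cs.map disp).sum = (cs.map fun c => h (disp c)).sum := by
  rw [map_list_sum, List.map_map]
  rfl

lemma abs_map_disp_le {E : Set (Trans d)} {h : Vec d →+ ℤ} {H : ℕ}
    (hH : ∀ t ∈ E, |h t.2.1| ≤ H) {π : List (Trans d)} (hπ : ∀ t ∈ π, t ∈ E) {L : ℕ}
    (hL : π.length ≤ L) : |h (disp π)| ≤ (L * H : ℤ) := by
  have length_bound : |h (disp π)| ≤ (π.length * H : ℤ) := by
    clear hL
    induction π with
    | nil => simp
    | cons t π ih =>
      have ht := hH t (hπ t (by simp))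
      have htail := ih fun s hs => hπ s (by simp [hs])
      have := abs_add_le (h t.2.1) (h (disp π))
      simp only [disp_cons, map_add, List.length_cons]
      push_cast
      linarith
  exact length_bound.trans (by exact_mod_cast Nat.mul_le_mul_right H hL)

lemma IsPathFrom.append {π π' : List (Trans d)} {p q r : ℕ} (h : IsPathFrom p q π)
    (h' : IsPathFrom q r π') : IsPathFrom p r (π ++ π') := by
  induction π generalizing p with
  | nil => cases h; exact h'
  | cons t π ih => exact ⟨h.1, ih h.2⟩

lemma IsPathFrom.target_unique {π : List (Trans d)} {p q q' : ℕ} (h : IsPathFrom p q π)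
    (h' : IsPathFrom p q' π) : q = q' := by
  induction π generalizing p with
  | nil => exact h.symm.trans h'
  | cons t π ih => exact ih h.2 h'.2

end Words

/-- A run that records, instead of the counter vector, only its *key*: the image in `Γ` under the
homomorphism `ω`. All visited pairs of a state and a key, endpoints included, satisfy `P`. Genuine
runs have `ω = id`; other choices of `ω` give the quotients in which runs are shortened. -/
def KeyedRun {d : ℕ} {Γ : Type*} [AddCommGroup Γ] (E : Set (Trans d)) (ω : Vec d →+ Γ)
    (P : ℕ → Γ → Prop) : ℕ → Γ → List (Trans d) → ℕ → Γ → Prop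
  | p, g, [], q, g' => P p g ∧ p = q ∧ g = g'
  | p, g, t :: π, q, g' => P p g ∧ t ∈ E ∧ t.1 = p ∧ KeyedRun E ω P t.2.2 (g + ω t.2.1) π q g'

namespace KeyedRun

variable {d : ℕ} {Γ Δ : Type*} [AddCommGroup Γ] [AddCommGroup Δ] {E E' : Set (Trans d)}
  {ω : Vec d →+ Γ} {ω' : Vec d →+ Δ} {P P' : ℕ → Γ → Prop} {π π₁ π₂ : List (Trans d)}
  {p q r : ℕ} {g g' k : Γ}

lemma source (h : KeyedRun E ω P p g π q g') : P p g := by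
  cases π <;> exact h.1

lemma target (h : KeyedRun E ω P p g π q g') : P q g' := by
  induction π generalizing p g with
  | nil => obtain ⟨hP, rfl, rfl⟩ := h; exact hP
  | cons t π ih => exact ih h.2.2.2

lemma refl (h : P p g) : KeyedRun E ω P p g [] p g := ⟨h, rfl, rfl⟩

lemma singleton {t : Trans d} (ht : t ∈ E) (hP : P t.1 g) (hP' : P t.2.2 (g + ω t.2.1)) :
    KeyedRun E ω P t.1 g [t] t.2.2 (g + ω t.2.1) := ⟨hP, ht, rfl, refl hP'⟩

lemma append_iff : KeyedRun E ω P p g (π₁ ++ π₂) q g' ↔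
    ∃ r k, KeyedRun E ω P p g π₁ r k ∧ KeyedRun E ω P r k π₂ q g' := by
  induction π₁ generalizing p g with
  | nil =>
    constructor
    · exact fun h => ⟨p, g, refl h.source, h⟩
    · rintro ⟨r, k, ⟨_, rfl, rfl⟩, h⟩
      exact h
  | cons t π ih =>
    simp only [List.cons_append, KeyedRun, ih]
    constructor
    · rintro ⟨hP, htE, htp, r, k, h₁, h₂⟩
      exact ⟨r, k, ⟨hP, htE, htp, h₁⟩, h₂⟩
    · rintro ⟨r, k, ⟨hP, htE, htp, h₁⟩, h₂⟩
      exact ⟨hP, htE, htp, r, k, h₁, h₂⟩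

lemma trans (h₁ : KeyedRun E ω P p g π₁ r k) (h₂ : KeyedRun E ω P r k π₂ q g') :
    KeyedRun E ω P p g (π₁ ++ π₂) q g' :=
  append_iff.2 ⟨r, k, h₁, h₂⟩

lemma key_eq (h : KeyedRun E ω P p g π q g') : g' = g + ω (disp π) := by
  induction π generalizing p g with
  | nil => simp [← h.2.2]
  | cons t π ih => rw [ih h.2.2.2, disp_cons, map_add, add_assoc]

lemma map_disp_eq_zero (h : KeyedRun E ω P p g π q g) : ω (disp π) = 0 := by
  simpa using h.key_eq

lemma isPathFrom (h : KeyedRun E ω P p g π q g') : IsPathFrom p q π := by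
  induction π generalizing p g with
  | nil => exact h.2.1
  | cons t π ih => exact ⟨h.2.2.1, ih h.2.2.2⟩

lemma mem (h : KeyedRun E ω P p g π q g') : ∀ t ∈ π, t ∈ E := by
  induction π generalizing p g with
  | nil => simp
  | cons t π ih => exact List.forall_mem_cons.2 ⟨h.2.1, ih h.2.2.2⟩

lemma map {P' : ℕ → Δ → Prop} (φ : Γ → Δ) (hφ : ∀ g z, φ (g + ω z) = φ g + ω' z)
    (hP : ∀ s g, P s g → P' s (φ g)) (hE : ∀ t ∈ π, t ∈ E → t ∈ E')
    (h : KeyedRun E ω P p g π q g') : KeyedRun E' ω' P' p (φ g) π q (φ g') := by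
  induction π generalizing p g with
  | nil => obtain ⟨hg, rfl, rfl⟩ := h; exact refl (hP _ _ hg)
  | cons t π ih =>
    obtain ⟨hg, htE, htp, htail⟩ := h
    refine ⟨hP _ _ hg, hE t (by simp) htE, htp, ?_⟩
    rw [← hφ]
    exact ih (fun s hs => hE s (by simp [hs])) htail

lemma mono (hE : ∀ t ∈ E, t ∈ E') (hP : ∀ s g, P s g → P' s g)
    (h : KeyedRun E ω P p g π q g') : KeyedRun E' ω P' p g π q g' :=
  h.map id (fun _ _ => rfl) hP fun t _ ht => hE t ht

lemma weaken (hP : ∀ s g, P s g → P' s g) (h : KeyedRun E ω P p g π q g') :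
    KeyedRun E ω P' p g π q g' :=
  h.mono (fun _ ht => ht) hP

lemma with_states {Q : Finset ℕ} (hQ : ∀ t ∈ E, t.2.2 ∈ Q) (hp : p ∈ Q)
    (h : KeyedRun E ω P p g π q g') : KeyedRun E ω (fun s x => P s x ∧ s ∈ Q) p g π q g' := by
  induction π generalizing p g with
  | nil => exact ⟨⟨h.1, hp⟩, h.2⟩
  | cons t π ih => exact ⟨⟨h.1, hp⟩, h.2.1, h.2.2.1, ih (hQ t h.2.1) h.2.2.2⟩

lemma iterate (h : KeyedRun E ω P p g π p g) (n : ℕ) :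
    KeyedRun E ω P p g (List.replicate n π).flatten p g := by
  induction n with
  | zero => exact refl h.source
  | succ n ih => exact h.trans ih

lemma split (h : KeyedRun E ω P p g (π₁ ++ π₂) q g') (h₁ : KeyedRun E ω P' p g π₁ r k) :
    KeyedRun E ω P p g π₁ r k ∧ KeyedRun E ω P r k π₂ q g' := by
  obtain ⟨r', k', hl, hr⟩ := append_iff.1 h
  obtain rfl : r' = r := hl.isPathFrom.target_unique h₁.isPathFrom
  obtain rfl : k' = k := hl.key_eq.trans h₁.key_eq.symm
  exact ⟨hl, hr⟩

lemma exists_visited (h : KeyedRun E ω P p g π q g') :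
    ∃ P' : ℕ → Γ → Prop, (∀ s k, P' s k → P s k) ∧ KeyedRun E ω P' p g π q g' ∧
      ∀ s k, P' s k → ∃ π₁ π₂, π₁ ++ π₂ = π ∧ KeyedRun E ω P' p g π₁ s k ∧
        KeyedRun E ω P' s k π₂ q g' := by
  let visited : ℕ → Γ → Prop := fun s k => ∃ π₁ π₂, π₁ ++ π₂ = π ∧ KeyedRun E ω P p g π₁ s k ∧
    KeyedRun E ω P s k π₂ q g'
  have suffix_visited : ∀ {σ ρ s k}, σ ++ ρ = π → KeyedRun E ω P p g σ s k →
      KeyedRun E ω P s k ρ q g' → KeyedRun E ω visited s k ρ q g' := by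
    intro σ ρ
    induction ρ generalizing σ with
    | nil => exact fun hπ hσ hρ => ⟨⟨σ, [], hπ, hσ, hρ⟩, hρ.2⟩
    | cons t ρ ih =>
      rintro s k hπ hσ hρ
      obtain ⟨hP, htE, rfl, htail⟩ := id hρ
      exact ⟨⟨σ, t :: ρ, hπ, hσ, hρ⟩, htE, rfl,
        ih (by simpa using hπ) (hσ.trans (singleton htE hP htail.source)) htail⟩
  have run_visited := suffix_visited (σ := []) rfl (refl h.source) h
  refine ⟨visited, fun s k ⟨_, _, _, _, h₂⟩ => h₂.source, run_visited, ?_⟩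
  rintro s k ⟨π₁, π₂, rfl, h₁, -⟩
  exact ⟨π₁, π₂, rfl, run_visited.split h₁⟩

lemma exists_first (G : ℕ → Γ → Prop) (h : KeyedRun E ω P p g π q g') :
    KeyedRun E ω (fun s x => P s x ∧ ¬ G s x) p g π q g' ∨
    ∃ s k π₁ π₂, π = π₁ ++ π₂ ∧ G s k ∧
      KeyedRun E ω (fun s' x => P s' x ∧ (¬ G s' x ∨ (s' = s ∧ x = k))) p g π₁ s k ∧
      KeyedRun E ω P s k π₂ q g' := by
  induction π generalizing p g with
  | nil =>
    by_cases hG : G p g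
    · exact .inr ⟨p, g, [], [], rfl, hG, refl ⟨h.1, .inr ⟨rfl, rfl⟩⟩, h⟩
    · exact .inl ⟨⟨h.1, hG⟩, h.2⟩
  | cons t π ih =>
    by_cases hG : G p g
    · exact .inr ⟨p, g, [], t :: π, rfl, hG, refl ⟨h.1, .inr ⟨rfl, rfl⟩⟩, h⟩
    · obtain ⟨hP, htE, htp, htail⟩ := h
      rcases ih htail with avoids | ⟨s, k, π₁, π₂, rfl, hGk, h₁, h₂⟩
      · exact .inl ⟨⟨hP, hG⟩, htE, htp, avoids⟩
      · exact .inr ⟨s, k, t :: π₁, π₂, rfl, hGk, ⟨⟨hP, .inl hG⟩, htE, htp, h₁⟩, h₂⟩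

lemma exists_last (G : ℕ → Γ → Prop) (h : KeyedRun E ω P p g π q g') :
    KeyedRun E ω (fun s x => P s x ∧ ¬ G s x) p g π q g' ∨
    ∃ s k π₁, G s k ∧ KeyedRun E ω P p g π₁ s k ∧ ((q = s ∧ g' = k) ∨
      ∃ t ∈ E, t.1 = s ∧
        ∃ π₂, KeyedRun E ω (fun s x => P s x ∧ ¬ G s x) t.2.2 (k + ω t.2.1) π₂ q g') := by
  induction π generalizing p g with
  | nil =>
    obtain ⟨hP, rfl, rfl⟩ := h
    by_cases hG : G p g
    · exact .inr ⟨p, g, [], hG, refl hP, .inl ⟨rfl, rfl⟩⟩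
    · exact .inl (refl ⟨hP, hG⟩)
  | cons t π ih =>
    obtain ⟨hP, htE, htp, htail⟩ := h
    rcases ih htail with avoids | ⟨s, k, π₁, hG, h₁, h₂⟩
    · by_cases hG : G p g
      · exact .inr ⟨p, g, [], hG, refl hP, .inr ⟨t, htE, htp, π, avoids⟩⟩
      · exact .inl ⟨⟨hP, hG⟩, htE, htp, avoids⟩
    · exact .inr ⟨s, k, t :: π₁, hG, ⟨hP, htE, htp, h₁⟩, h₂⟩

lemma lift (χ : Vec d →+ Δ) (y : Δ) (h : KeyedRun E ω P p g π q g') :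
    KeyedRun E (ω.prod χ) (fun s x => P s x.1) p (g, y) π q (g', y + χ (disp π)) := by
  induction π generalizing p g y with
  | nil => exact ⟨h.1, h.2.1, by simp [h.2.2]⟩
  | cons t π ih =>
    refine ⟨h.1, h.2.1, h.2.2.1, ?_⟩
    simpa [add_assoc] using ih (y + χ t.2.1) h.2.2.2

lemma unlift {χ : Vec d →+ Δ} {x x' : Γ × Δ}
    (h : KeyedRun E (ω.prod χ) (fun s x => P s x.1) p x π q x') : KeyedRun E ω P p x.1 π q x'.1 :=
  h.map Prod.fst (fun _ _ => rfl) (fun _ _ hx => hx) fun _ _ ht => ht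

end KeyedRun

section Shortening

variable {d : ℕ} {Γ : Type*} [AddCommGroup Γ] {E : Set (Trans d)} {ω : Vec d →+ Γ}
  {P : ℕ → Γ → Prop} {π : List (Trans d)} {p q : ℕ} {g g' : Γ}

/-- `c` is a nonempty word of length at most `N` along which some keyed run is closed. -/
def ShortKeyedCycle (E : Set (Trans d)) (ω : Vec d →+ Γ) (P : ℕ → Γ → Prop) (N : ℕ)
    (c : List (Trans d)) : Prop :=
  c ≠ [] ∧ c.length ≤ N ∧ ∃ r k, KeyedRun E ω P r k c r k

lemma ShortKeyedCycle.mem {N : ℕ} {c : List (Trans d)} (h : ShortKeyedCycle E ω P N c) :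
    ∀ t ∈ c, t ∈ E :=
  let ⟨_, _, _, _, hc⟩ := h
  hc.mem

lemma KeyedRun.exists_cycle (V : Finset (ℕ × Γ)) (hV : ∀ s k, P s k → (s, k) ∈ V)
    (h : KeyedRun E ω P p g π q g') (hπ : V.card ≤ π.length) :
    ∃ x c y, π = x ++ c ++ y ∧ ShortKeyedCycle E ω P V.card c ∧
      KeyedRun E ω P p g (x ++ y) q g' := by
  have configuration (i : ℕ) : ∃ sk : ℕ × Γ, KeyedRun E ω P p g (π.take i) sk.1 sk.2 ∧
      KeyedRun E ω P sk.1 sk.2 (π.drop i) q g' := by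
    obtain ⟨s, k, h₁, h₂⟩ := KeyedRun.append_iff.1 (List.take_append_drop i π ▸ h)
    exact ⟨(s, k), h₁, h₂⟩
  choose F initial_run final_run using configuration
  have maps_to : ∀ i ∈ Finset.range (V.card + 1), F i ∈ V := fun i _ =>
    hV _ _ (initial_run i).target
  obtain ⟨i, hi, j, hj, hij, hFij⟩ := Finset.exists_ne_map_eq_of_card_lt_of_maps_to
    (by simp : V.card < (Finset.range (V.card + 1)).card) maps_to
  wlog hlt : i < j generalizing i j
  · exact this j hj i hi hij.symm hFij.symm (by omega)
  simp only [Finset.mem_range] at hi hj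
  have take_j : π.take j = π.take i ++ (π.drop i).take (j - i) := by
    rw [← List.take_add, Nat.add_sub_cancel' hlt.le]
  have cycle := ((take_j ▸ initial_run j).split (initial_run i)).2
  rw [← hFij] at cycle
  refine ⟨π.take i, (π.drop i).take (j - i), π.drop j, ?_, ⟨?_, ?_, _, _, cycle⟩,
    (initial_run i).trans (hFij ▸ final_run j)⟩
  · rw [← take_j, List.take_append_drop]
  · refine List.ne_nil_of_length_pos ?_
    simp only [List.length_take, List.length_drop]
    omega
  · simp only [List.length_take, List.length_drop]
    omega

lemma KeyedRun.exists_decomposition (V : Finset (ℕ × Γ)) (hV : ∀ s k, P s k → (s, k) ∈ V)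
    (h : KeyedRun E ω P p g π q g') :
    ∃ (σ : List (Trans d)) (cs : List (List (Trans d))), KeyedRun E ω P p g σ q g' ∧
      σ.length ≤ V.card ∧ (∀ c ∈ cs, ShortKeyedCycle E ω P V.card c) ∧
      disp π = disp σ + (cs.map disp).sum := by
  induction hn : π.length using Nat.strong_induction_on generalizing π with
  | _ n ih =>
    rcases le_total π.length V.card with hπ | hπ
    · exact ⟨π, [], h, hπ, by simp, by simp⟩
    obtain ⟨x, c, y, rfl, hc, hxy⟩ := h.exists_cycle V hV hπ
    have := List.length_pos_iff.2 hc.1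
    obtain ⟨σ, cs, hσ, hσ_length, hcs, hdisp⟩ :=
      ih (x ++ y).length (by simp at hn ⊢; omega) hxy rfl
    refine ⟨σ, c :: cs, hσ, hσ_length, List.forall_mem_cons.2 ⟨hc, hcs⟩, ?_⟩
    simp only [disp_append, List.map_cons, List.sum_cons] at hdisp ⊢
    rw [add_left_comm, ← hdisp]
    abel

lemma KeyedRun.exists_cycle_decomposition (V : Finset (ℕ × Γ))
    (hV : ∀ s k, P s k → (s, k) ∈ V) (h : KeyedRun E ω P p g π p g) :
    ∃ cs : List (List (Trans d)), (∀ c ∈ cs, ShortKeyedCycle E ω P V.card c) ∧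
      disp π = (cs.map disp).sum := by
  obtain ⟨σ, cs, hσ, hσ_length, hcs, hdisp⟩ := h.exists_decomposition V hV
  by_cases hnil : σ = []
  · exact ⟨cs, hcs, by simpa [hnil] using hdisp⟩
  · exact ⟨σ :: cs, List.forall_mem_cons.2 ⟨⟨hnil, hσ_length, p, g, hσ⟩, hcs⟩, by simpa using hdisp⟩

lemma KeyedRun.map_disp_nonneg_of_closed (V : Finset (ℕ × Γ)) (hV : ∀ s k, P s k → (s, k) ∈ V)
    {h : Vec d →+ ℤ} (hpos : ∀ c, ShortKeyedCycle E ω P V.card c → 0 ≤ h (disp c))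
    (hπ : KeyedRun E ω P p g π p g) : 0 ≤ h (disp π) := by
  obtain ⟨cs, hcs, hdisp⟩ := hπ.exists_cycle_decomposition V hV
  rw [hdisp, map_sum_disp]
  exact List.sum_nonneg (List.forall_mem_map.2 fun c hc => hpos c (hcs c hc))

/- Cycles are removed from the run whose key also records `h` modulo `m`. -/
lemma KeyedRun.exists_shortening (V : Finset (ℕ × Γ)) (hV : ∀ s k, P s k → (s, k) ∈ V)
    (h : Vec d →+ ℤ) {m : ℕ} (hm : 0 < m) (hπ : KeyedRun E ω P p g π q g') :
    ∃ σ : List (Trans d), KeyedRun E ω P p g σ q g' ∧ σ.length ≤ V.card * m ∧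
      (m : ℤ) ∣ h (disp π) - h (disp σ) ∧
      ((∀ c, ShortKeyedCycle E ω P V.card c → 0 ≤ h (disp c)) → h (disp σ) ≤ h (disp π)) := by
  classical
  have : NeZero m := ⟨hm.ne'⟩
  let χ : Vec d →+ ZMod m := (Int.castAddHom (ZMod m)).comp h
  let V' : Finset (ℕ × (Γ × ZMod m)) :=
    (V ×ˢ (Finset.univ : Finset (ZMod m))).image fun a => (a.1.1, (a.1.2, a.2))
  have hV' : ∀ s (y : Γ × ZMod m), P s y.1 → (s, y) ∈ V' := fun s y hy =>
    Finset.mem_image.2 ⟨((s, y.1), y.2), by simp [hV _ _ hy], rfl⟩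
  have card_V' : V'.card ≤ V.card * m := by
    refine Finset.card_image_le.trans ?_
    rw [Finset.card_product, Finset.card_univ, ZMod.card]
  obtain ⟨σ, cs, hσ, hσ_length, hcs, hdisp⟩ := (hπ.lift χ 0).exists_decomposition V' hV'
  refine ⟨σ, hσ.unlift, hσ_length.trans card_V', ?_, fun hpos => ?_⟩
  · have : ((h (disp π) : ℤ) : ZMod m) = h (disp σ) := by
      simpa [χ] using congrArg Prod.snd hσ.key_eq
    rw [← ZMod.intCast_zmod_eq_zero_iff_dvd]
    push_cast
    rw [this, sub_self]
  · have : 0 ≤ (cs.map fun c => h (disp c)).sum := by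
      refine List.sum_nonneg (List.forall_mem_map.2 fun c hc => ?_)
      obtain ⟨_, _, r, k, hck⟩ := hcs c hc
      exact hck.unlift.map_disp_nonneg_of_closed V hV hpos
    rw [hdisp, map_add, map_sum_disp]
    linarith

end Shortening

/-! ### Compression to linear path schemes -/

/-- A run all of whose configurations, endpoints included, lie in `ℕ^d`. -/
abbrev NatRun {d : ℕ} (E : Set (Trans d)) (p : ℕ) (u : Vec d) (π : List (Trans d)) (q : ℕ)
    (v : Vec d) : Prop :=
  KeyedRun E (AddMonoidHom.id (Vec d)) (fun _ w => 0 ≤ w) p u π q v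

lemma NatRun.disp_eq {d : ℕ} {E : Set (Trans d)} {π : List (Trans d)} {p q : ℕ} {u v : Vec d}
    (h : NatRun E p u π q v) : v = u + disp π :=
  h.key_eq

lemma run_natSet_iff {d : ℕ} {T : Finset (Trans d)} {π : List (Trans d)} {p q : ℕ} {u v : Vec d} :
    Run T (NatSet d) p u q v π ↔ NatRun T p u π q v := by
  induction π generalizing p u with
  | nil =>
    constructor
    · rintro ⟨-, hpath, hu, hv, -⟩
      exact ⟨hu, hpath, by simp [hv]⟩
    · rintro ⟨hu, rfl, rfl⟩
      exact ⟨by simp, rfl, hu, by simp, fun i hi hi' => absurd (hi.trans hi') (by simp)⟩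
  | cons t π ih =>
    simp only [NatRun, KeyedRun, AddMonoidHom.id_apply]
    constructor
    · rintro ⟨hmem, hpath, hu, hv, hpos⟩
      refine ⟨hu, hmem t (by simp), hpath.1, ih.1 ⟨fun s hs => hmem s (by simp [hs]), hpath.2,
        by simpa using hpos 1 le_rfl (by simp), by simp [hv, add_assoc], fun i _ hi => ?_⟩⟩
      simpa [add_assoc] using hpos (i + 1) (by omega) (by simpa using hi)
    · rintro ⟨hu, htE, htp, htail⟩
      obtain ⟨hmem, hpath, hu', hv, hpos⟩ := ih.2 htail
      refine ⟨List.forall_mem_cons.2 ⟨htE, hmem⟩, ⟨htp, hpath⟩, hu, by simp [hv, add_assoc], ?_⟩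
      rintro (_ | _ | i) hi hi'
      · omega
      · simpa using hu'
      · simpa [add_assoc] using hpos (i + 1) (by omega) (by simpa using hi')

/-- `p(u)` reaches `q(v)` in `ℕ^d` along a word of some linear path scheme with at most `k` cycles
and length at most `L`. -/
inductive Compressible {d : ℕ} (E : Set (Trans d)) : ℕ → ℕ → ℕ → Vec d → ℕ → Vec d → Prop
  | nil {k L p u} (hu : 0 ≤ u) : Compressible E k L p u p u
  | step {k L q u v t} (hu : 0 ≤ u) (ht : t ∈ E)
      (tail : Compressible E k L t.2.2 (u + t.2.1) q v) : Compressible E k (L + 1) t.1 u q v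
  | pump {k L p u q v w β} (n : ℕ) (hβ : β ≠ []) (hpath : IsPathFrom p p β)
      (hmem : ∀ t ∈ β, t ∈ E) (hrun : NatRun E p u (List.replicate n β).flatten p w)
      (tail : Compressible E k L p w q v) : Compressible E (k + 1) (L + β.length) p u q v

namespace Compressible

variable {d : ℕ} {E E' : Set (Trans d)} {k k' L L' p q r : ℕ} {u v w : Vec d}

lemma of_le (h : Compressible E k L p u q v) (hk : k ≤ k') (hL : L ≤ L') :
    Compressible E k' L' p u q v := by
  induction h generalizing k' L' with
  | nil hu => exact nil hu
  | @step k L _ _ _ _ hu ht _ ih =>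
    obtain ⟨L', rfl⟩ : ∃ l, L' = l + 1 := ⟨L' - 1, by omega⟩
    exact step hu ht (ih hk (by omega))
  | @pump k L _ _ _ _ _ β n hβ hpath hmem hrun _ ih =>
    obtain ⟨k', rfl⟩ : ∃ l, k' = l + 1 := ⟨k' - 1, by omega⟩
    obtain ⟨L', rfl⟩ : ∃ l, L' = l + β.length := ⟨L' - β.length, by omega⟩
    exact pump n hβ hpath hmem hrun (ih (by omega) (by omega))

lemma trans (h : Compressible E k L p u r w) (h' : Compressible E k' L' r w q v) :
    Compressible E (k + k') (L + L') p u q v := by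
  induction h with
  | nil _ => exact h'.of_le (by omega) (by omega)
  | step hu ht _ ih => exact (step hu ht (ih h')).of_le le_rfl (by omega)
  | pump n hβ hpath hmem hrun _ ih =>
    exact (pump n hβ hpath hmem hrun (ih h')).of_le (by omega) (by omega)

lemma mono (hE : ∀ t ∈ E, t ∈ E') (h : Compressible E k L p u q v) :
    Compressible E' k L p u q v := by
  induction h with
  | nil hu => exact nil hu
  | step hu ht _ ih => exact step hu (hE _ ht) ih
  | pump n hβ hpath hmem hrun _ ih =>
    exact pump n hβ hpath (fun t ht => hE t (hmem t ht)) (hrun.mono hE fun _ _ h => h) ih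

lemma of_run {π : List (Trans d)} (h : NatRun E p u π q v) (hL : π.length ≤ L) :
    Compressible E 0 L p u q v := by
  suffices Compressible E 0 π.length p u q v from this.of_le le_rfl hL
  clear hL
  induction π generalizing p u with
  | nil => obtain ⟨hu, rfl, rfl⟩ := h; exact nil hu
  | cons t π ih => obtain ⟨hu, htE, rfl, htail⟩ := h; exact step hu htE (ih htail)

lemma of_cycle {β : List (Trans d)} {n : ℕ} (hβ : β ≠ []) (hpath : IsPathFrom p p β)
    (hmem : ∀ t ∈ β, t ∈ E) (h : NatRun E p u (List.replicate n β).flatten p v)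
    (hL : β.length ≤ L) : Compressible E 1 L p u p v :=
  (pump (k := 0) (L := 0) n hβ hpath hmem h (nil h.target)).of_le le_rfl (by omega)

lemma exists_lps {T : Finset (Trans d)} (h : Compressible T k L p u q v) :
    ∃ (ρ : LPS d) (π : List (Trans d)), IsLPSFrom T p q ρ ∧ numCycles ρ ≤ k ∧ lpsLen ρ ≤ L ∧
      InLang ρ π ∧ NatRun T p u π q v := by
  induction h with
  | nil hu =>
    exact ⟨([], []), [], by simp [IsLPSFrom, lpsSupport, IsPathFrom], by simp [numCycles],
      by simp [lpsLen, lpsSupport], ⟨[], rfl, rfl⟩, KeyedRun.refl hu⟩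
  | @step k L _ _ _ t hu ht _ ih =>
    obtain ⟨ρ, _, ⟨hmem, hpath, hcyc⟩, hk, hL, ⟨e, he, rfl⟩, hrun⟩ := ih
    refine ⟨(t :: ρ.1, ρ.2), t :: lpsWord ρ e, ⟨?_, ⟨rfl, hpath⟩, hcyc⟩, hk, ?_, ⟨e, he, rfl⟩,
      hu, ht, rfl, hrun⟩
    · exact List.forall_mem_cons.2 ⟨ht, hmem⟩
    · exact Nat.succ_le_succ hL
  | @pump k L p _ _ _ _ β n hβ hβpath hβmem hβrun _ ih =>
    obtain ⟨ρ, _, ⟨hmem, hpath, hcyc⟩, hk, hL, ⟨e, he, rfl⟩, hrun⟩ := ih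
    have support : lpsSupport ([], (β, ρ.1) :: ρ.2) = β ++ lpsSupport ρ := by simp [lpsSupport]
    refine ⟨([], (β, ρ.1) :: ρ.2), _, ⟨?_, ?_, ?_⟩, Nat.succ_le_succ hk, ?_,
      ⟨n :: e, congrArg Nat.succ he, rfl⟩, ?_⟩
    · rw [support]
      exact List.forall_mem_append.2 ⟨hβmem, hmem⟩
    · rw [support]
      exact hβpath.append hpath
    · exact List.forall_mem_cons.2 ⟨⟨hβ, p, hβpath⟩, hcyc⟩
    · rw [lpsLen, support, List.length_append, add_comm]
      exact Nat.add_le_add_right hL _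
    · simpa [lpsWord] using hβrun.trans hrun

end Compressible

/-- Every update has entries of absolute value at most `b`. -/
def StepBounded {d : ℕ} (E : Set (Trans d)) (b : ℕ) : Prop :=
  ∀ t ∈ E, ∀ i, |t.2.1 i| ≤ (b : ℤ)

lemma StepBounded.abs_disp_le {d : ℕ} {E : Set (Trans d)} {b : ℕ} (hb : StepBounded E b)
    {π : List (Trans d)} (hπ : ∀ t ∈ π, t ∈ E) {L : ℕ} (hL : π.length ≤ L) (i : Fin d) :
    |disp π i| ≤ (L * b : ℤ) :=
  abs_map_disp_le (h := Pi.evalAddMonoidHom (fun _ => ℤ) i) (fun t ht => hb t ht i) hπ hL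

/-- The key condition `P` forces the coordinates outside `A` to be nonnegative, so that a keyed run
is a run in `ℕ^d` as soon as the coordinates in `A` stay large. -/
def Guards {d : ℕ} {Γ : Type*} [AddCommGroup Γ] (ω : Vec d →+ Γ) (P : ℕ → Γ → Prop)
    (A : Set (Fin d)) : Prop :=
  ∀ s w, P s (ω w) → ∀ i ∉ A, 0 ≤ w i

section Lifting

variable {d : ℕ} {Γ : Type*} [AddCommGroup Γ] {E : Set (Trans d)} {ω : Vec d →+ Γ}
  {P : ℕ → Γ → Prop} {A : Set (Fin d)} {b L : ℕ}

lemma KeyedRun.natRun (hb : StepBounded E b) (hA : Guards ω P A) {π : List (Trans d)} {p q : ℕ}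
    {w : Vec d} {g g' : Γ} (hg : ω w = g) (h : KeyedRun E ω P p g π q g') (hL : π.length ≤ L)
    (hw : ∀ i ∈ A, (L * b : ℤ) ≤ w i) : NatRun E p w π q (w + disp π) := by
  subst hg
  have nonneg : 0 ≤ w := fun i => by
    by_cases hi : i ∈ A
    · exact le_trans (by positivity) (hw i hi)
    · exact hA p w h.source i hi
  induction π generalizing p w L with
  | nil => exact ⟨nonneg, h.2.1, by simp⟩
  | cons t π ih =>
    obtain ⟨hP, htE, rfl, htail⟩ := h
    rw [← map_add] at htail
    obtain ⟨L, rfl⟩ : ∃ l, L = l + 1 := ⟨L - 1, by simp at hL; omega⟩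
    have hw' : ∀ i ∈ A, (L * b : ℤ) ≤ (w + t.2.1) i := fun i hi => by
      have := hw i hi
      have := neg_le_of_abs_le (hb t htE i)
      push_cast at *
      simp only [Pi.add_apply]
      linarith
    refine ⟨nonneg, htE, rfl, ?_⟩
    rw [disp_cons, ← add_assoc]
    refine ih (by simpa using hL) hw' htail fun i => ?_
    by_cases hi : i ∈ A
    · exact le_trans (by positivity) (hw' i hi)
    · exact hA _ _ htail.source i hi

/- Coordinatewise, the values along the iteration lie between those at its two ends. -/
lemma KeyedRun.natRun_iterate (hb : StepBounded E b) (hA : Guards ω P A) {β : List (Trans d)}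
    {r e : ℕ} {w : Vec d} {g : Γ} (hg : ω w = g) (hβ : KeyedRun E ω P r g β r g)
    (hL : β.length ≤ L) (hw : ∀ i ∈ A, (L * b : ℤ) ≤ w i)
    (hw' : ∀ i ∈ A, (L * b : ℤ) ≤ (w + e • disp β) i) :
    NatRun E r w (List.replicate e β).flatten r (w + e • disp β) := by
  induction e generalizing w with
  | zero =>
    have := (refl (E := E) (ω := ω) hβ.source).natRun hb hA hg (Nat.zero_le L) hw
    simpa using this
  | succ e ih =>
    rw [succ_nsmul', ← add_assoc] at hw' ⊢
    refine (hβ.natRun hb hA hg hL hw).trans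
      (ih (by rw [map_add, hg, hβ.map_disp_eq_zero, add_zero]) (fun i hi => ?_) hw')
    have hstart := hw i hi
    have hend := hw' i hi
    simp only [Pi.add_apply, nsmul_eq_mul, Pi.mul_apply, Pi.natCast_apply] at hend ⊢
    rcases le_total 0 (disp β i) with hsign | hsign
    · linarith
    · have := mul_nonpos_of_nonneg_of_nonpos (Int.natCast_nonneg e) hsign
      linarith

lemma partial_sums_large {B Y x a s c t z : ℤ} (hY : 0 ≤ Y) (ha : |a| ≤ B) (hc : |c| ≤ B)
    (hz : |z| ≤ B) (hx : 6 * B + 2 * Y ≤ x) (hend : 6 * B + 2 * Y ≤ x + a + s + c + t + z)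
    (hst : (-Y ≤ s ∧ -Y ≤ t) ∨ (s ≤ Y ∧ t ≤ Y)) :
    B ≤ x ∧ B ≤ x + a ∧ B ≤ x + a + s ∧ B ≤ x + a + s + c ∧ B ≤ x + a + s + c + t := by
  rw [abs_le] at ha hc hz
  omega

/-- A keyed run with two marked closed runs on it, i.e. a keyed linear path scheme with two cycles,
all of whose pieces have length at most `L`. -/
structure TwoCycleScheme (E : Set (Trans d)) (ω : Vec d →+ Γ) (P : ℕ → Γ → Prop) (L p : ℕ) (g : Γ)
    (q : ℕ) (g' : Γ) where
  {pre cyc₁ mid cyc₂ post : List (Trans d)}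
  {r₁ r₂ : ℕ}
  {k₁ k₂ : Γ}
  pre_run : KeyedRun E ω P p g pre r₁ k₁
  cyc₁_run : KeyedRun E ω P r₁ k₁ cyc₁ r₁ k₁
  mid_run : KeyedRun E ω P r₁ k₁ mid r₂ k₂
  cyc₂_run : KeyedRun E ω P r₂ k₂ cyc₂ r₂ k₂
  post_run : KeyedRun E ω P r₂ k₂ post q g'
  cyc₁_ne_nil : cyc₁ ≠ []
  cyc₂_ne_nil : cyc₂ ≠ []
  pre_length : pre.length ≤ L
  cyc₁_length : cyc₁.length ≤ L
  mid_length : mid.length ≤ L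
  cyc₂_length : cyc₂.length ≤ L
  post_length : post.length ≤ L

namespace TwoCycleScheme

variable {p q : ℕ} {g g' : Γ} (S : TwoCycleScheme E ω P L p g q g') (e₁ e₂ : ℕ)

/-- The displacement of the word of the scheme with exponents `e₁` and `e₂`. -/
def displacement : Vec d :=
  disp S.pre + e₁ • disp S.cyc₁ + disp S.mid + e₂ • disp S.cyc₂ + disp S.post

lemma key_eq : g' = g + ω (S.displacement e₁ e₂) := by
  simp only [displacement, map_add, map_nsmul, S.cyc₁_run.map_disp_eq_zero,
    S.cyc₂_run.map_disp_eq_zero, smul_zero, add_zero, ← add_assoc, ← S.pre_run.key_eq,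
    ← S.mid_run.key_eq, ← S.post_run.key_eq]

/- The coordinates in `A` stay large because both cycles move such a coordinate essentially in the
same direction, and both ends of the run are large. -/
lemma compressible (hb : StepBounded E b) (hA : Guards ω P A) {Y : ℤ} (hY : 0 ≤ Y) {w w' : Vec d}
    (hg : ω w = g) (hw' : w' = w + S.displacement e₁ e₂)
    (w_large : ∀ i ∈ A, 6 * (L * b : ℤ) + 2 * Y ≤ w i)
    (w'_large : ∀ i ∈ A, 6 * (L * b : ℤ) + 2 * Y ≤ w' i)
    (same_direction : ∀ i ∈ A, (-Y ≤ e₁ * disp S.cyc₁ i ∧ -Y ≤ e₂ * disp S.cyc₂ i) ∨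
      (e₁ * disp S.cyc₁ i ≤ Y ∧ e₂ * disp S.cyc₂ i ≤ Y)) :
    Compressible E 2 (5 * L) p w q w' := by
  set w₁ := w + disp S.pre with hw₁
  set w₂ := w₁ + e₁ • disp S.cyc₁ with hw₂
  set w₃ := w₂ + disp S.mid with hw₃
  set w₄ := w₃ + e₂ • disp S.cyc₂ with hw₄
  have hw₅ : w' = w₄ + disp S.post := by
    rw [hw', hw₄, hw₃, hw₂, hw₁, displacement]
    abel
  have large : ∀ i ∈ A, (L * b : ℤ) ≤ w i ∧ (L * b : ℤ) ≤ w₁ i ∧ (L * b : ℤ) ≤ w₂ i ∧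
      (L * b : ℤ) ≤ w₃ i ∧ (L * b : ℤ) ≤ w₄ i := fun i hi => by
    have := w'_large i hi
    rw [hw₅] at this
    simp only [hw₁, hw₂, hw₃, hw₄, Pi.add_apply, nsmul_eq_mul, Pi.mul_apply,
      Pi.natCast_apply] at this ⊢
    exact partial_sums_large hY (hb.abs_disp_le S.pre_run.mem S.pre_length i)
      (hb.abs_disp_le S.mid_run.mem S.mid_length i) (hb.abs_disp_le S.post_run.mem S.post_length i)
      (w_large i hi) this (same_direction i hi)
  have key₁ : ω w₁ = S.k₁ := by rw [hw₁, map_add, hg, S.pre_run.key_eq]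
  have key₂ : ω w₂ = S.k₁ := by
    rw [hw₂, map_add, map_nsmul, S.cyc₁_run.map_disp_eq_zero, smul_zero, add_zero, key₁]
  have key₃ : ω w₃ = S.k₂ := by rw [hw₃, map_add, key₂, S.mid_run.key_eq]
  have key₄ : ω w₄ = S.k₂ := by
    rw [hw₄, map_add, map_nsmul, S.cyc₂_run.map_disp_eq_zero, smul_zero, add_zero, key₃]
  have run₁ := S.pre_run.natRun hb hA hg S.pre_length fun i hi => (large i hi).1
  have run₂ := S.cyc₁_run.natRun_iterate hb hA key₁ S.cyc₁_length
    (fun i hi => (large i hi).2.1) fun i hi => (large i hi).2.2.1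
  have run₃ := S.mid_run.natRun hb hA key₂ S.mid_length fun i hi => (large i hi).2.2.1
  have run₄ := S.cyc₂_run.natRun_iterate hb hA key₃ S.cyc₂_length
    (fun i hi => (large i hi).2.2.2.1) fun i hi => (large i hi).2.2.2.2
  have run₅ := S.post_run.natRun hb hA key₄ S.post_length fun i hi => (large i hi).2.2.2.2
  rw [← hw₅] at run₅
  exact ((((Compressible.of_run run₁ S.pre_length).trans
    (.of_cycle S.cyc₁_ne_nil S.cyc₁_run.isPathFrom S.cyc₁_run.mem run₂ S.cyc₁_length)).trans
    (.of_run run₃ S.mid_length)).trans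
    (.of_cycle S.cyc₂_ne_nil S.cyc₂_run.isPathFrom S.cyc₂_run.mem run₄ S.cyc₂_length)).trans
    (.of_run run₅ S.post_length) |>.of_le le_rfl (by omega)

end TwoCycleScheme

end Lifting

/-! ### Runs with a single unbounded counter -/

lemma exists_natCast_combination {x y t : ℤ} (hxy : x * y < 0) (hxt : x ∣ t) :
    ∃ e₁ e₂ : ℕ, t = e₁ * x + e₂ * y ∧ (e₁ ≤ y.natAbs ∨ e₂ = 0) := by
  obtain ⟨k, rfl⟩ := hxt
  rcases le_or_gt 0 k with hk | hk
  · exact ⟨k.toNat, 0, by rw [Int.toNat_of_nonneg hk]; ring, .inr rfl⟩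
  have hy : 0 < |y| := abs_pos.2 (by rintro rfl; simp at hxy)
  have hopp : |x| * y = -(x * |y|) := by
    rcases abs_cases x with ⟨hx, _⟩ | ⟨hx, _⟩ <;> rcases abs_cases y with ⟨hy', _⟩ | ⟨hy', _⟩ <;>
      rw [hx, hy'] <;> nlinarith
  have hdiv := Int.mul_ediv_add_emod (-k) |y|
  have hmod := Int.emod_nonneg (-k) hy.ne'
  have hmod' := Int.emod_lt_of_pos (-k) hy
  set m := -k / |y| + 1 with hm
  have he₁ : k + |y| * m = |y| - -k % |y| := by rw [hm]; linarith
  refine ⟨(k + |y| * m).toNat, (|x| * m).toNat, ?_, .inl ?_⟩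
  · have : 0 ≤ m := by have := Int.ediv_nonneg (by omega : 0 ≤ -k) hy.le; omega
    rw [Int.toNat_of_nonneg (by omega), Int.toNat_of_nonneg (by positivity)]
    linear_combination -m * hopp
  · rw [he₁, Int.toNat_le, Int.natCast_natAbs]
    omega

/-- Bound for the pieces of the two-cycle scheme replacing a keyed run with `N` possible
configurations, when a step changes the supplementary linear form by at most `H`. -/
def middleLength (N H : ℕ) : ℕ := N * (N * H) + N

/-- How large the unguarded coordinates have to be for `middleLength` to apply. -/
def middleDepth (N H b : ℕ) : ℕ :=
  6 * (middleLength N H * b) + 2 * (N * H * (middleLength N H * b))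

section Middle

variable {d : ℕ} {Γ : Type*} [AddCommGroup Γ] {E : Set (Trans d)} {ω : Vec d →+ Γ}
  {P : ℕ → Γ → Prop} {A : Set (Fin d)} {b H L p q : ℕ} {g g' : Γ} {w w' : Vec d} {h : Vec d →+ ℤ}
  {V : Finset (ℕ × Γ)}

lemma TwoCycleScheme.compressible_of_map_eq (S : TwoCycleScheme E ω P L p g q g') {e₁ e₂ J : ℕ}
    (hb : StepBounded E b) (hA : Guards ω P A) (hinj : ∀ z, ω z = 0 → h z = 0 → z = 0)
    (hJ : e₁ ≤ J ∨ e₂ ≤ J) (hg : ω w = g) (hg' : ω w' = g')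
    (hh : h w' = h w + h (S.displacement e₁ e₂))
    (w_large : ∀ i ∈ A, 6 * (L * b : ℤ) + 2 * (J * (L * b)) ≤ w i)
    (w'_large : ∀ i ∈ A, 6 * (L * b : ℤ) + 2 * (J * (L * b)) ≤ w' i) :
    Compressible E 2 (5 * L) p w q w' := by
  have endpoint : w' = w + S.displacement e₁ e₂ := by
    rw [← sub_eq_zero]
    refine hinj _ ?_ (by rw [map_sub, map_add, hh, sub_self])
    have key := S.key_eq e₁ e₂
    rw [map_sub, map_add, hg, hg', ← key, sub_self]
  have small : ∀ {e : ℕ} {β : List (Trans d)}, e ≤ J → (∀ t ∈ β, t ∈ E) → β.length ≤ L → ∀ i,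
      |(e : ℤ) * disp β i| ≤ (J * (L * b) : ℤ) := fun he hβ hβL i => by
    rw [abs_mul, Nat.abs_cast]
    exact mul_le_mul (by exact_mod_cast he) (hb.abs_disp_le hβ hβL i) (abs_nonneg _) (by positivity)
  refine S.compressible e₁ e₂ hb hA (by positivity) hg endpoint w_large w'_large fun i _ => ?_
  rcases hJ with hJ | hJ
  · have := abs_le.1 (small hJ S.cyc₁_run.mem S.cyc₁_length i)
    omega
  · have := abs_le.1 (small hJ S.cyc₂_run.mem S.cyc₂_length i)
    omega

lemma ShortKeyedCycle.natAbs_map_disp_le {N : ℕ} {c : List (Trans d)}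
    (hc : ShortKeyedCycle E ω P N c) (hH : ∀ t ∈ E, |h t.2.1| ≤ H) :
    (h (disp c)).natAbs ≤ N * H := by
  have := abs_map_disp_le hH hc.mem hc.2.1
  zify
  exact this

/- After shortening modulo `h (disp c₁)`, the missing multiple of `h (disp c₁)` is supplied by the
two cycles, one of which is used a bounded number of times. -/
lemma compressible_of_opposite_cycles (hb : StepBounded E b) (hA : Guards ω P A)
    (hinj : ∀ z, ω z = 0 → h z = 0 → z = 0) (hH : ∀ t ∈ E, |h t.2.1| ≤ H)
    (hV : ∀ s k, P s k → (s, k) ∈ V) {r₁ r₂ : ℕ} {k₁ k₂ : Γ} {π₁ π₂ π₃ c₁ c₂ : List (Trans d)}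
    (hπ₁ : KeyedRun E ω P p (ω w) π₁ r₁ k₁) (hπ₂ : KeyedRun E ω P r₁ k₁ π₂ r₂ k₂)
    (hπ₃ : KeyedRun E ω P r₂ k₂ π₃ q (ω w')) (hw' : w' = w + disp (π₁ ++ π₂ ++ π₃))
    (hc₁ : ShortKeyedCycle E ω P V.card c₁) (hc₂ : ShortKeyedCycle E ω P V.card c₂)
    (hc₁_run : KeyedRun E ω P r₁ k₁ c₁ r₁ k₁) (hc₂_run : KeyedRun E ω P r₂ k₂ c₂ r₂ k₂)
    (opposite : h (disp c₁) * h (disp c₂) < 0)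
    (w_large : ∀ i ∈ A, (middleDepth V.card H b : ℤ) ≤ w i)
    (w'_large : ∀ i ∈ A, (middleDepth V.card H b : ℤ) ≤ w' i) :
    Compressible E 2 (5 * middleLength V.card H) p w q w' := by
  have hm : 0 < (h (disp c₁)).natAbs := Int.natAbs_pos.2 fun h0 => by simp [h0] at opposite
  have piece_length : V.card * (h (disp c₁)).natAbs ≤ middleLength V.card H :=
    (Nat.mul_le_mul_left _ (hc₁.natAbs_map_disp_le hH)).trans (Nat.le_add_right _ _)
  have cycle_length : V.card ≤ middleLength V.card H := Nat.le_add_left _ _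
  obtain ⟨σ₁, hσ₁, hσ₁_length, hσ₁_dvd, -⟩ := hπ₁.exists_shortening V hV h hm
  obtain ⟨σ₂, hσ₂, hσ₂_length, hσ₂_dvd, -⟩ := hπ₂.exists_shortening V hV h hm
  obtain ⟨σ₃, hσ₃, hσ₃_length, hσ₃_dvd, -⟩ := hπ₃.exists_shortening V hV h hm
  obtain ⟨e₁, e₂, he, hsmall⟩ := exists_natCast_combination opposite
    (Int.natAbs_dvd.1 (dvd_add (dvd_add hσ₁_dvd hσ₂_dvd) hσ₃_dvd))
  let S : TwoCycleScheme E ω P (middleLength V.card H) p (ω w) q (ω w') :=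
    { pre_run := hσ₁, cyc₁_run := hc₁_run, mid_run := hσ₂, cyc₂_run := hc₂_run, post_run := hσ₃
      cyc₁_ne_nil := hc₁.1, cyc₂_ne_nil := hc₂.1, pre_length := hσ₁_length.trans piece_length
      cyc₁_length := hc₁.2.1.trans cycle_length, mid_length := hσ₂_length.trans piece_length
      cyc₂_length := hc₂.2.1.trans cycle_length, post_length := hσ₃_length.trans piece_length }
  refine S.compressible_of_map_eq (e₁ := e₁) (e₂ := e₂) (J := V.card * H) hb hA hinj
    (hsmall.imp (·.trans (hc₂.natAbs_map_disp_le hH)) fun h0 => h0.trans_le (Nat.zero_le _))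
    rfl rfl ?_ (by simpa [middleDepth] using w_large) (by simpa [middleDepth] using w'_large)
  have h_w' : h w' = h w + h (disp (π₁ ++ π₂ ++ π₃)) := by rw [hw', map_add]
  simp only [S, TwoCycleScheme.displacement, h_w', disp_append, map_add, map_nsmul]
  simp only [nsmul_eq_mul]
  linarith

/- Pumping a cycle `c` with `h (disp c) > 0` restores what shortening modulo `h (disp c)` lost. -/
lemma compressible_of_pos_cycle (hb : StepBounded E b) (hA : Guards ω P A)
    (hinj : ∀ z, ω z = 0 → h z = 0 → z = 0) (hH : ∀ t ∈ E, |h t.2.1| ≤ H)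
    (hV : ∀ s k, P s k → (s, k) ∈ V) {r : ℕ} {k : Γ} {π₁ π₂ c : List (Trans d)}
    (hπ₁ : KeyedRun E ω P p (ω w) π₁ r k) (hπ₂ : KeyedRun E ω P r k π₂ q (ω w'))
    (hw' : w' = w + disp (π₁ ++ π₂)) (hc : ShortKeyedCycle E ω P V.card c)
    (hc_run : KeyedRun E ω P r k c r k) (hpos : 0 < h (disp c))
    (nonneg : ∀ c, ShortKeyedCycle E ω P V.card c → 0 ≤ h (disp c))
    (w_large : ∀ i ∈ A, (middleDepth V.card H b : ℤ) ≤ w i)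
    (w'_large : ∀ i ∈ A, (middleDepth V.card H b : ℤ) ≤ w' i) :
    Compressible E 2 (5 * middleLength V.card H) p w q w' := by
  have hm : 0 < (h (disp c)).natAbs := Int.natAbs_pos.2 hpos.ne'
  have piece_length : V.card * (h (disp c)).natAbs ≤ middleLength V.card H :=
    (Nat.mul_le_mul_left _ (hc.natAbs_map_disp_le hH)).trans (Nat.le_add_right _ _)
  have cycle_length := hc.2.1.trans (Nat.le_add_left _ (V.card * (V.card * H)))
  obtain ⟨σ₁, hσ₁, hσ₁_length, hσ₁_dvd, hσ₁_le⟩ := hπ₁.exists_shortening V hV h hm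
  obtain ⟨σ₂, hσ₂, hσ₂_length, hσ₂_dvd, hσ₂_le⟩ := hπ₂.exists_shortening V hV h hm
  obtain ⟨e, he⟩ := Int.natAbs_dvd.1 (dvd_add hσ₁_dvd hσ₂_dvd)
  have he_nonneg : 0 ≤ e := nonneg_of_mul_nonneg_right
    (by linarith [hσ₁_le nonneg, hσ₂_le nonneg] : 0 ≤ h (disp c) * e) hpos
  let S : TwoCycleScheme E ω P (middleLength V.card H) p (ω w) q (ω w') :=
    { pre_run := hσ₁, cyc₁_run := hc_run, mid_run := .refl hc_run.source, cyc₂_run := hc_run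
      post_run := hσ₂, cyc₁_ne_nil := hc.1, cyc₂_ne_nil := hc.1
      pre_length := hσ₁_length.trans piece_length, cyc₁_length := cycle_length
      mid_length := Nat.zero_le _, cyc₂_length := cycle_length
      post_length := hσ₂_length.trans piece_length }
  refine S.compressible_of_map_eq (e₁ := e.toNat) (e₂ := 0) (J := V.card * H) hb hA hinj
    (.inr (Nat.zero_le _)) rfl rfl ?_ (by simpa [middleDepth] using w_large)
    (by simpa [middleDepth] using w'_large)
  have h_w' : h w' = h w + h (disp (π₁ ++ π₂)) := by rw [hw', map_add]
  simp only [S, TwoCycleScheme.displacement, h_w', disp_append, disp_nil, map_add,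
    map_nsmul, zero_smul, add_zero]
  simp only [nsmul_eq_mul, Int.toNat_of_nonneg he_nonneg]
  linarith

lemma compressible_of_zero_cycles (hb : StepBounded E b) (hA : Guards ω P A)
    (hinj : ∀ z, ω z = 0 → h z = 0 → z = 0) (hV : ∀ s k, P s k → (s, k) ∈ V)
    {π : List (Trans d)} (hπ : KeyedRun E ω P p (ω w) π q (ω w')) (hw' : w' = w + disp π)
    (zero : ∀ c, ShortKeyedCycle E ω P V.card c → h (disp c) = 0)
    (w_large : ∀ i ∈ A, (V.card * b : ℤ) ≤ w i) :
    Compressible E 0 V.card p w q w' := by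
  obtain ⟨σ, cs, hσ, hσ_length, hcs, hdisp⟩ := hπ.exists_decomposition V hV
  have same_disp : disp π = disp σ := by
    rw [← sub_eq_zero]
    refine hinj _ ?_ ?_
    · rw [map_sub, sub_eq_zero, ← add_right_inj (ω w), ← hπ.key_eq, ← hσ.key_eq]
    · rw [hdisp, add_sub_cancel_left, map_sum_disp]
      exact List.sum_eq_zero (List.forall_mem_map.2 fun c hc => zero c (hcs c hc))
  rw [hw', same_disp]
  exact .of_run (hσ.natRun hb hA rfl hσ_length w_large) hσ_length

lemma middleDepth_ge (N H b : ℕ) : (N * b : ℤ) ≤ middleDepth N H b := by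
  have : N * b ≤ middleLength N H * b := Nat.mul_le_mul_right b (Nat.le_add_left _ _)
  unfold middleDepth
  exact_mod_cast (by omega : N * b ≤ _)

lemma compressible_of_nonneg_cycles (hb : StepBounded E b) (hA : Guards ω P A)
    (hinj : ∀ z, ω z = 0 → h z = 0 → z = 0) (hH : ∀ t ∈ E, |h t.2.1| ≤ H)
    (hV : ∀ s k, P s k → (s, k) ∈ V) {π : List (Trans d)}
    (hπ : KeyedRun E ω P p (ω w) π q (ω w')) (hw' : w' = w + disp π)
    (visited : ∀ s k, P s k → ∃ π₁ π₂, π₁ ++ π₂ = π ∧ KeyedRun E ω P p (ω w) π₁ s k ∧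
      KeyedRun E ω P s k π₂ q (ω w'))
    (nonneg : ∀ c, ShortKeyedCycle E ω P V.card c → 0 ≤ h (disp c))
    (w_large : ∀ i ∈ A, (middleDepth V.card H b : ℤ) ≤ w i)
    (w'_large : ∀ i ∈ A, (middleDepth V.card H b : ℤ) ≤ w' i) :
    Compressible E 2 (5 * middleLength V.card H) p w q w' := by
  by_cases zero : ∀ c, ShortKeyedCycle E ω P V.card c → h (disp c) = 0
  · have := compressible_of_zero_cycles hb hA hinj hV hπ hw' zero
      fun i hi => (middleDepth_ge _ _ _).trans (w_large i hi)
    exact this.of_le (by omega) (by unfold middleLength; omega)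
  push Not at zero
  obtain ⟨c, hc, hne⟩ := zero
  obtain ⟨r, k, hc_run⟩ := hc.2.2
  obtain ⟨π₁, π₂, rfl, hπ₁, hπ₂⟩ := visited r k hc_run.source
  exact compressible_of_pos_cycle hb hA hinj hH hV hπ₁ hπ₂ hw' hc hc_run
    (lt_of_le_of_ne (nonneg c hc) hne.symm) nonneg w_large w'_large

lemma KeyedRun.compressible_middle (hb : StepBounded E b) (hA : Guards ω P A)
    (hinj : ∀ z, ω z = 0 → h z = 0 → z = 0) (hH : ∀ t ∈ E, |h t.2.1| ≤ H)
    (hV : ∀ s k, P s k → (s, k) ∈ V) {π : List (Trans d)}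
    (hπ : KeyedRun E ω P p (ω w) π q (ω w')) (hw' : w' = w + disp π)
    (w_large : ∀ i ∈ A, (middleDepth V.card H b : ℤ) ≤ w i)
    (w'_large : ∀ i ∈ A, (middleDepth V.card H b : ℤ) ≤ w' i) :
    Compressible E 2 (5 * middleLength V.card H) p w q w' := by
  obtain ⟨P', hP', hπ, visited⟩ := hπ.exists_visited
  replace hV := fun s k hsk => hV s k (hP' s k hsk)
  replace hA : Guards ω P' A := fun s x hx => hA s x (hP' s _ hx)
  by_cases nonneg : ∀ c, ShortKeyedCycle E ω P' V.card c → 0 ≤ h (disp c)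
  · exact compressible_of_nonneg_cycles hb hA hinj hH hV hπ hw' visited nonneg w_large w'_large
  by_cases nonpos : ∀ c, ShortKeyedCycle E ω P' V.card c → h (disp c) ≤ 0
  · exact compressible_of_nonneg_cycles (h := -h) hb hA
      (fun z hz hz' => hinj z hz (neg_eq_zero.1 hz')) (fun t ht => (abs_neg _).trans_le (hH t ht))
      hV hπ hw' visited (fun c hc => neg_nonneg.2 (nonpos c hc)) w_large w'_large
  push Not at nonneg nonpos
  obtain ⟨c₁, hc₁, hneg⟩ := nonneg
  obtain ⟨c₂, hc₂, hpos⟩ := nonpos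
  obtain ⟨r₁, k₁, hc₁_run⟩ := hc₁.2.2
  obtain ⟨r₂, k₂, hc₂_run⟩ := hc₂.2.2
  obtain ⟨π₁, π₁', rfl, hπ₁, hπ₁'⟩ := visited r₁ k₁ hc₁_run.source
  obtain ⟨π₂, π₂', heq, hπ₂, hπ₂'⟩ := visited r₂ k₂ hc₂_run.source
  rcases List.append_eq_append_iff.1 heq.symm with ⟨σ, rfl, rfl⟩ | ⟨σ, rfl, rfl⟩
  · exact compressible_of_opposite_cycles hb hA hinj hH hV hπ₁ (hπ₂.split hπ₁).2 hπ₂'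
      (by simpa using hw') hc₁ hc₂ hc₁_run hc₂_run (mul_neg_of_neg_of_pos hneg hpos) w_large
      w'_large
  · exact compressible_of_opposite_cycles hb hA hinj hH hV hπ₂ (hπ₁.split hπ₂).2 hπ₁'
      (by simpa using hw') hc₂ hc₁ hc₂_run hc₁_run (mul_neg_of_pos_of_neg hpos hneg) w_large
      w'_large

end Middle

/-! ### Planar geometry -/

section Plane

/-- The determinant of two planar vectors. -/
def cross : Vec 2 →+ Vec 2 →+ ℤ :=
  AddMonoidHom.mk' (fun x => AddMonoidHom.mk' (fun y => x 0 * y 1 - x 1 * y 0)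
    fun y z => by simp only [Pi.add_apply]; ring)
    fun x y => AddMonoidHom.ext fun z => by
      simp only [AddMonoidHom.mk'_apply, AddMonoidHom.add_apply, Pi.add_apply]; ring

lemma cross_apply (x y : Vec 2) : cross x y = x 0 * y 1 - x 1 * y 0 := rfl

lemma cross_self (x : Vec 2) : cross x x = 0 := by
  rw [cross_apply]; ring

lemma cross_antisymm (x y : Vec 2) : cross x y = -cross y x := by
  simp only [cross_apply]; ring

lemma vec_two_ext {x y : Vec 2} (h₀ : x 0 = y 0) (h₁ : x 1 = y 1) : x = y :=
  funext (Fin.forall_fin_two.2 ⟨h₀, h₁⟩)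

lemma cramer (x y z : Vec 2) : cross x y • z = cross z y • x + cross x z • y := by
  apply vec_two_ext <;> simp only [Pi.add_apply, Pi.smul_apply, smul_eq_mul, cross_apply] <;> ring

lemma sq_add_sq_pos {f : Vec 2} (hf : f ≠ 0) : 0 < f 0 * f 0 + f 1 * f 1 := by
  refine (add_nonneg (mul_self_nonneg _) (mul_self_nonneg _)).lt_of_ne' fun h => hf ?_
  obtain ⟨h₀, h₁⟩ := (add_eq_zero_iff_of_nonneg (mul_self_nonneg _) (mul_self_nonneg _)).1 h
  exact vec_two_ext (mul_self_eq_zero.1 h₀) (mul_self_eq_zero.1 h₁)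

lemma abs_mul_le_of_abs_le {a c A C : ℤ} (ha : |a| ≤ A) (hc : |c| ≤ C) : |a * c| ≤ A * C := by
  rw [abs_mul]
  exact mul_le_mul ha hc (abs_nonneg _) ((abs_nonneg _).trans ha)

lemma abs_cross_le {x y : Vec 2} {R W : ℤ} (hx : ∀ i, |x i| ≤ R) (hy : ∀ i, |y i| ≤ W) :
    |cross x y| ≤ 2 * R * W := by
  rw [cross_apply]
  linarith [abs_sub (x 0 * y 1) (x 1 * y 0), abs_mul_le_of_abs_le (hx 0) (hy 1),
    abs_mul_le_of_abs_le (hx 1) (hy 0)]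

lemma abs_sum_apply_le (C : Finset (Vec 2)) (F : Vec 2 → Vec 2) {K : ℤ}
    (h : ∀ c ∈ C, ∀ i, |F c i| ≤ K) (i : Fin 2) : |(∑ c ∈ C, F c) i| ≤ C.card * K := by
  rw [Finset.sum_apply, ← nsmul_eq_mul]
  exact (Finset.abs_sum_le_sum_abs _ _).trans (Finset.sum_le_card_nsmul _ _ K fun c hc => h c hc i)

/- In an open half-plane, directions are ordered by slope. -/
lemma exists_extreme_directions {e : Vec 2} {S : Finset (Vec 2)} (hS : S.Nonempty)
    (h : ∀ c ∈ S, 0 < cross e c) :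
    (∃ m ∈ S, ∀ c ∈ S, 0 ≤ cross m c) ∧ ∃ m ∈ S, ∀ c ∈ S, 0 ≤ cross c m := by
  let dot : Vec 2 → ℤ := fun c => e 0 * c 0 + e 1 * c 1
  let slope : Vec 2 → ℚ := fun c => dot c / cross e c
  have cross_nonneg : ∀ x ∈ S, ∀ y ∈ S, slope y ≤ slope x → 0 ≤ cross x y := by
    intro x hx y hy hxy
    have he : e ≠ 0 := by rintro rfl; simpa using h x hx
    have hxy : dot y * cross e x ≤ dot x * cross e y := by
      have := (div_le_div_iff₀ (by exact_mod_cast h y hy) (by exact_mod_cast h x hx)).1 hxy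
      exact_mod_cast this
    refine nonneg_of_mul_nonneg_right (a := e 0 * e 0 + e 1 * e 1) ?_ (sq_add_sq_pos he)
    have : (e 0 * e 0 + e 1 * e 1) * cross x y = dot x * cross e y - dot y * cross e x := by
      simp only [cross_apply, dot]; ring
    linarith
  obtain ⟨m, hm, hmax⟩ := S.exists_max_image slope hS
  obtain ⟨m', hm', hmin⟩ := S.exists_min_image slope hS
  exact ⟨⟨m, hm, fun c hc => cross_nonneg m hm c hc (hmax c hc)⟩,
    ⟨m', hm', fun c hc => cross_nonneg c hc m' hm' (hmin c hc)⟩⟩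

/-- `e` lies in the cone spanned by the positively oriented pair `x`, `y`. -/
def InCone (x y e : Vec 2) : Prop := 0 < cross x y ∧ 0 ≤ cross x e ∧ 0 ≤ cross e y

lemma exists_inCone_of_cross_pos {C : Finset (Vec 2)} {e : Vec 2}
    (supported : ∀ f ∈ C, (∀ c ∈ C, 0 ≤ cross f c) → 0 ≤ cross f e)
    (hpos : ∃ c ∈ C, 0 < cross e c) : ∃ x ∈ C, ∃ y ∈ C, InCone x y e := by
  obtain ⟨⟨m, hm, hmin⟩, -⟩ := exists_extreme_directions
    (S := C.filter fun c => 0 < cross e c) (by simpa [Finset.Nonempty] using hpos)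
    fun c hc => (Finset.mem_filter.1 hc).2
  obtain ⟨hmC, hem⟩ := Finset.mem_filter.1 hm
  by_cases hx : ∃ x ∈ C, cross e x ≤ 0 ∧ 0 < cross x m
  · obtain ⟨x, hxC, hex, hxm⟩ := hx
    exact ⟨x, hxC, m, hmC, hxm, by rw [cross_antisymm]; omega, hem.le⟩
  push Not at hx
  have := supported m hmC fun c hc => by
    by_cases hec : 0 < cross e c
    · exact hmin c (Finset.mem_filter.2 ⟨hc, hec⟩)
    · have := hx c hc (by omega)
      rw [cross_antisymm]
      omega
  rw [cross_antisymm] at this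
  omega

lemma exists_inCone_of_cross_neg {C : Finset (Vec 2)} {e : Vec 2}
    (supported : ∀ f ∈ C, (∀ c ∈ C, cross f c ≤ 0) → cross f e ≤ 0)
    (hneg : ∃ c ∈ C, cross e c < 0) : ∃ x ∈ C, ∃ y ∈ C, InCone x y e := by
  obtain ⟨-, m, hm, hmax⟩ := exists_extreme_directions (e := -e)
    (S := C.filter fun c => cross e c < 0) (by simpa [Finset.Nonempty] using hneg)
    fun c hc => by simpa using (Finset.mem_filter.1 hc).2
  obtain ⟨hmC, hem⟩ := Finset.mem_filter.1 hm
  by_cases hy : ∃ y ∈ C, 0 ≤ cross e y ∧ 0 < cross m y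
  · obtain ⟨y, hyC, hey, hmy⟩ := hy
    exact ⟨m, hmC, y, hyC, hmy, by rw [cross_antisymm]; omega, hey⟩
  push Not at hy
  have := supported m hmC fun c hc => by
    by_cases hec : cross e c < 0
    · rw [cross_antisymm]
      linarith [hmax c (Finset.mem_filter.2 ⟨hc, hec⟩)]
    · exact hy c hc (by omega)
  rw [cross_antisymm] at this
  omega

/- A planar Farkas lemma: it suffices to test `e` against the half-planes that contain `C` and are
bounded by a line through an element of `C`. -/
lemma exists_inCone {C : Finset (Vec 2)} {e : Vec 2} (hind : ∃ x ∈ C, ∃ y ∈ C, cross x y ≠ 0)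
    (supported : ∀ f, f ∈ C ∨ -f ∈ C → (∀ c ∈ C, 0 ≤ cross f c) → 0 ≤ cross f e) :
    ∃ x ∈ C, ∃ y ∈ C, InCone x y e := by
  by_cases hpos : ∃ c ∈ C, 0 < cross e c
  · exact exists_inCone_of_cross_pos (fun f hf => supported f (.inl hf)) hpos
  by_cases hneg : ∃ c ∈ C, cross e c < 0
  · refine exists_inCone_of_cross_neg (fun f hf hfC => ?_) hneg
    simpa using supported (-f) (.inr (by simpa using hf)) (by simpa using hfC)
  push Not at hpos hneg
  have zero : ∀ c ∈ C, cross e c = 0 := fun c hc => le_antisymm (hpos c hc) (hneg c hc)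
  have zero' : ∀ c ∈ C, cross c e = 0 := fun c hc => by rw [cross_antisymm, zero c hc, neg_zero]
  obtain ⟨x, hx, y, hy, hxy⟩ := hind
  rcases lt_or_gt_of_ne hxy with hlt | hgt
  · exact ⟨y, hy, x, hx, by rw [cross_antisymm]; omega, (zero' y hy).ge, (zero x hx).ge⟩
  · exact ⟨x, hx, y, hy, hgt, (zero' x hx).ge, (zero y hy).ge⟩

lemma InCone.exists_nat_approximation {x y e : Vec 2} (h : InCone x y e) {R : ℤ}
    (hx : ∀ i, |x i| ≤ R) (hy : ∀ i, |y i| ≤ R) :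
    ∃ m n : ℕ, ∀ i, |(e - (m • x + n • y)) i| ≤ 2 * R := by
  obtain ⟨hxy, hxe, hey⟩ := h
  set D := cross x y with hD
  refine ⟨(cross e y / D).toNat, (cross x e / D).toNat, fun i => ?_⟩
  have hcramer := congrFun (cramer x y e) i
  simp only [Pi.sub_apply, Pi.add_apply, Pi.smul_apply, smul_eq_mul, nsmul_eq_mul, Pi.mul_apply,
    Pi.natCast_apply, ← hD, Int.toNat_of_nonneg (Int.ediv_nonneg hey hxy.le),
    Int.toNat_of_nonneg (Int.ediv_nonneg hxe hxy.le)] at hcramer ⊢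
  have remainder : D * (e i - (cross e y / D * x i + cross x e / D * y i)) =
      cross e y % D * x i + cross x e % D * y i := by
    linear_combination hcramer - x i * Int.emod_add_mul_ediv (cross e y) D -
      y i * Int.emod_add_mul_ediv (cross x e) D
  have small (a z : ℤ) (hz : |z| ≤ R) : |a % D * z| ≤ D * R := by
    rw [abs_mul, abs_of_nonneg (Int.emod_nonneg a hxy.ne')]
    exact mul_le_mul (Int.emod_lt_of_pos a hxy).le hz (abs_nonneg _) hxy.le
  refine le_of_mul_le_mul_left ?_ hxy
  calc D * |e i - (cross e y / D * x i + cross x e / D * y i)|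
      = |cross e y % D * x i + cross x e % D * y i| := by rw [← remainder, abs_mul, abs_of_pos hxy]
    _ ≤ D * R + D * R := (abs_add_le _ _).trans (add_le_add (small _ _ (hx i)) (small _ _ (hy i)))
    _ = D * (2 * R) := by ring

/-- Bound on the integer coefficients that suffice to write a vector of norm at most `W` as a
combination of `n` given planar vectors of norm at most `R`. -/
def coeffBound (R W n : ℕ) : ℕ := 2 * R * R + 2 * (2 * R * (W + n * (2 * R * R * R)))

lemma coeffBound_mono (R W : ℕ) {n m : ℕ} (h : n ≤ m) : coeffBound R W n ≤ coeffBound R W m := by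
  unfold coeffBound
  gcongr

lemma exists_small_residues {C : Finset (Vec 2)} {R W : ℕ} (hR : ∀ c ∈ C, ∀ i, |c i| ≤ (R : ℤ))
    {D : ℤ} (hD : D ≠ 0) (hDR : |D| ≤ 2 * R * R) {ρ : Vec 2}
    (hρ : ρ ∈ Submodule.span ℤ (C : Set (Vec 2))) (hW : ∀ i, |ρ i| ≤ (W : ℤ)) :
    ∃ (r : Vec 2 → ℤ) (z : Vec 2), ρ = ∑ c ∈ C, r c • c + D • z ∧ (∀ c, |r c| ≤ 2 * R * R) ∧
      ∀ i, |z i| ≤ (W + C.card * (2 * R * R * R) : ℤ) := by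
  obtain ⟨y, -, hy⟩ := Submodule.mem_span_finset.1 hρ
  have division : ρ = ∑ c ∈ C, (y c % D) • c + D • ∑ c ∈ C, (y c / D) • c := by
    rw [← hy, Finset.smul_sum, ← Finset.sum_add_distrib]
    refine Finset.sum_congr rfl fun c _ => ?_
    rw [smul_smul, ← add_smul, Int.emod_add_mul_ediv]
  have residue_le (c : Vec 2) : |y c % D| ≤ 2 * R * R := by
    rw [abs_of_nonneg (Int.emod_nonneg _ hD)]
    exact (Int.emod_lt_abs _ hD).le.trans hDR
  refine ⟨_, _, division, residue_le, fun i => ?_⟩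
  set z := ∑ c ∈ C, (y c / D) • c
  have sum_le := abs_sum_apply_le C (fun c => (y c % D) • c) (K := 2 * R * R * R)
    (fun c hc j => by
      rw [Pi.smul_apply, smul_eq_mul]
      exact abs_mul_le_of_abs_le (residue_le c) (hR c hc j)) i
  calc |z i| ≤ |D| * |z i| := le_mul_of_one_le_left (abs_nonneg _) (Int.one_le_abs hD)
    _ = |ρ i - (∑ c ∈ C, (y c % D) • c) i| := by
      rw [division, Pi.add_apply, add_sub_cancel_left, Pi.smul_apply, smul_eq_mul, abs_mul]
    _ ≤ _ := (abs_sub _ _).trans (add_le_add (hW i) sum_le)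

/- Reduce all coefficients modulo `cross x y` and write the rest, a multiple of `cross x y`, in
terms of `x` and `y` by Cramer's rule. -/
lemma exists_small_coefficients {C : Finset (Vec 2)} {R W : ℕ}
    (hR : ∀ c ∈ C, ∀ i, |c i| ≤ (R : ℤ)) (hind : ∃ x ∈ C, ∃ y ∈ C, cross x y ≠ 0) {ρ : Vec 2}
    (hρ : ρ ∈ Submodule.span ℤ (C : Set (Vec 2))) (hW : ∀ i, |ρ i| ≤ (W : ℤ)) :
    ∃ a : Vec 2 → ℤ, ρ = ∑ c ∈ C, a c • c ∧ ∀ c, |a c| ≤ (coeffBound R W C.card : ℤ) := by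
  classical
  obtain ⟨x, hx, y, hy, hxy⟩ := hind
  obtain ⟨r, z, hρ, hr, hz⟩ :=
    exists_small_residues hR hxy (abs_cross_le (hR x hx) (hR y hy)) hρ hW
  refine ⟨fun c => r c + (if c = x then cross z y else 0) + if c = y then cross x z else 0, ?_,
    fun c => ?_⟩
  · simp only [add_smul, Finset.sum_add_distrib, ite_smul, zero_smul, Finset.sum_ite_eq', hx, hy,
      if_true]
    rw [add_assoc, ← cramer, hρ]
  · set K : ℤ := 2 * R * (W + C.card * (2 * R * R * R)) with hK
    have hzy : |cross z y| ≤ K := (abs_cross_le hz (hR y hy)).trans_eq (by rw [hK]; ring)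
    have hxz : |cross x z| ≤ K := abs_cross_le (hR x hx) hz
    have ite_le (p : Prop) [Decidable p] {t : ℤ} (ht : |t| ≤ K) : |if p then t else 0| ≤ K := by
      split_ifs
      · exact ht
      · exact abs_zero.trans_le ((abs_nonneg _).trans ht)
    calc |r c + (if c = x then cross z y else 0) + if c = y then cross x z else 0|
        ≤ 2 * R * R + K + K :=
          (abs_add_three _ _ _).trans (add_le_add_three (hr c) (ite_le _ hzy) (ite_le _ hxz))
      _ = coeffBound R W C.card := by unfold coeffBound; push_cast; rw [hK]; ring

end Plane

/-! ### Runs in a strip -/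

section FiniteExceptions

variable {d : ℕ} {E : Set (Trans d)} {P : ℕ → Vec d → Prop} {π : List (Trans d)} {p q : ℕ}
  {u v : Vec d}

lemma KeyedRun.compressible_of_finite (hP : ∀ s w, P s w → 0 ≤ w) {V : Finset (ℕ × Vec d)}
    (hV : ∀ s w, P s w → (s, w) ∈ V) (h : KeyedRun E (AddMonoidHom.id _) P p u π q v) :
    Compressible E 0 V.card p u q v := by
  obtain ⟨σ, -, hσ, hlen, -⟩ := h.exists_decomposition V hV
  exact .of_run (hσ.weaken hP) hlen

lemma KeyedRun.exists_short_first {Γ : Type*} [AddCommGroup Γ] {ω : Vec d →+ Γ}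
    {P G : ℕ → Γ → Prop} {g g' : Γ} {V : Finset (ℕ × Γ)}
    (hV : ∀ s k, P s k → ¬ G s k → (s, k) ∈ V)
    (h : KeyedRun E ω (fun s k => P s k ∧ (¬ G s k ∨ (s = q ∧ k = g'))) p g π q g') :
    ∃ σ, KeyedRun E ω P p g σ q g' ∧ σ.length ≤ V.card + 1 := by
  classical
  obtain ⟨σ, -, hσ, hlen, -⟩ := h.exists_decomposition (insert (q, g') V) <| by
    rintro s k ⟨hP, hG | ⟨rfl, rfl⟩⟩
    · exact Finset.mem_insert_of_mem (hV s k hP hG)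
    · exact Finset.mem_insert_self _ _
  exact ⟨σ, hσ.weaken fun _ _ hk => hk.1, hlen.trans (Finset.card_insert_le _ _)⟩

/- Cut the run at its first and its last visit to `G`. -/
lemma KeyedRun.compressible_of_finite_compl (G : ℕ → Vec d → Prop) {k L : ℕ}
    (hP : ∀ s w, P s w → 0 ≤ w) {V : Finset (ℕ × Vec d)}
    (hV : ∀ s w, P s w → ¬ G s w → (s, w) ∈ V)
    (middle : ∀ {s w π s' w'}, G s w → G s' w' →
      KeyedRun E (AddMonoidHom.id _) P s w π s' w' → Compressible E k L s w s' w')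
    (h : KeyedRun E (AddMonoidHom.id _) P p u π q v) :
    Compressible E k (2 * V.card + L + 2) p u q v := by
  have outside {p u π q v} (h : KeyedRun E (AddMonoidHom.id _) (fun s w => P s w ∧ ¬ G s w)
      p u π q v) : Compressible E 0 V.card p u q v :=
    h.compressible_of_finite (fun s w hw => hP s w hw.1) fun s w hw => hV s w hw.1 hw.2
  rcases h.exists_first G with avoids | ⟨s, w, π₁, π₂, -, hw, first, rest⟩
  · exact (outside avoids).of_le (by omega) (by omega)
  obtain ⟨σ, hσ, lσ⟩ := first.exists_short_first hV
  have initial : Compressible E 0 (V.card + 1) p u s w := .of_run (hσ.weaken hP) lσ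
  rcases rest.exists_last G with avoids | ⟨s', w', π₃, hw', inside, last⟩
  · exact absurd hw avoids.source.2
  have central := initial.trans (middle hw hw' inside)
  rcases last with ⟨rfl, rfl⟩ | ⟨t, ht, rfl, π₄, final⟩
  · exact central.of_le (by omega) (by omega)
  · have crossing : Compressible E 0 1 t.1 w' t.2.2 (w' + t.2.1) :=
      .of_run (KeyedRun.singleton ht (hP _ _ inside.target) (hP _ _ final.source.1)) le_rfl
    exact (central.trans (crossing.trans (outside final))).of_le (by omega) (by omega)

end FiniteExceptions

/-- The transitions `E` connect states in `Q`, of which there are at most `b`, and have updates of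
norm at most `b`. -/
structure OfSize {d : ℕ} (E : Set (Trans d)) (Q : Finset ℕ) (b : ℕ) : Prop where
  source_mem : ∀ t ∈ E, t.1 ∈ Q
  target_mem : ∀ t ∈ E, t.2.2 ∈ Q
  card_le : Q.card ≤ b
  stepBounded : StepBounded E b

lemma middleLength_mono {N N' : ℕ} (h : N ≤ N') (H : ℕ) : middleLength N H ≤ middleLength N' H := by
  unfold middleLength
  gcongr

lemma middleDepth_mono {N N' : ℕ} (h : N ≤ N') (H b : ℕ) :
    middleDepth N H b ≤ middleDepth N' H b := by
  have := middleLength_mono h H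
  unfold middleDepth
  gcongr

section Strip

lemma mul_eq_mul_of_cross_eq_zero {f z : Vec 2} (h : cross f z = 0) (i j : Fin 2) :
    f i * z j = f j * z i := by
  rw [cross_apply, sub_eq_zero] at h
  fin_cases i <;> fin_cases j
  exacts [rfl, h, h.symm, rfl]

lemma apply_eq_zero_of_cross_eq_zero {f z : Vec 2} (hf : f ≠ 0) (h : cross f z = 0) {i : Fin 2}
    (hi : f i = 0) : z i = 0 := by
  obtain ⟨j, hj⟩ := Function.ne_iff.1 hf
  have := mul_eq_mul_of_cross_eq_zero h i j
  rw [hi, zero_mul] at this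
  exact (mul_eq_zero.1 this.symm).resolve_left hj

lemma eq_zero_of_cross_eq_zero_of_apply_eq_zero {f z : Vec 2} (h : cross f z = 0) {i : Fin 2}
    (hi : f i ≠ 0) (hz : z i = 0) : z = 0 := by
  funext j
  have := mul_eq_mul_of_cross_eq_zero h i j
  rw [hz, mul_zero] at this
  exact (mul_eq_zero.1 this).resolve_left hi

lemma eq_zero_of_cross_eq_zero {x y z : Vec 2} (hxy : cross x y ≠ 0) (hx : cross x z = 0)
    (hy : cross y z = 0) : z = 0 := by
  have hzy : cross z y = 0 := by rw [cross_antisymm, hy, neg_zero]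
  have := cramer x y z
  rw [hx, hzy, zero_smul, zero_smul, add_zero] at this
  exact (smul_eq_zero.1 this).resolve_left hxy

/-- The points of `ℕ²` at bounded distance from a line of direction `f`; distances are measured by
the determinant with `f`. -/
def Strip (f : Vec 2) (g : ℤ) (B : ℕ) : Set (Vec 2) := {w | 0 ≤ w ∧ |cross f w - g| ≤ B}

lemma card_Icc_strip (g : ℤ) (B : ℕ) : (Finset.Icc (g - B) (g + B)).card = 2 * B + 1 := by
  rw [Int.card_Icc]
  omega

lemma Strip.cross_mem_Icc {f w : Vec 2} {g : ℤ} {B : ℕ} (hw : w ∈ Strip f g B) :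
    cross f w ∈ Finset.Icc (g - B) (g + B) := by
  have := abs_le.1 hw.2
  exact Finset.mem_Icc.2 ⟨by omega, by omega⟩

lemma exists_finset_low_coordinate (Q : Finset ℕ) (f : Vec 2) (g : ℤ) (B D : ℕ) (i : Fin 2) :
    ∃ V : Finset (ℕ × Vec 2), V.card ≤ Q.card * (D * (2 * B + 1)) ∧
      ∀ s ∈ Q, ∀ w ∈ Strip f g B, f i ≠ 0 → w i < D → (s, w) ∈ V := by
  let low : Set (ℕ × Vec 2) := {c | c.1 ∈ Q ∧ c.2 ∈ Strip f g B ∧ f i ≠ 0 ∧ c.2 i < D}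
  let code : ℕ × Vec 2 → ℕ × (ℤ × ℤ) := fun c => (c.1, c.2 i, cross f c.2)
  let codes := Q ×ˢ (Finset.Ico (0 : ℤ) D ×ˢ Finset.Icc (g - B) (g + B))
  have mapsTo : Set.MapsTo code low codes := fun c ⟨hs, hw, _, hi⟩ =>
    Finset.mem_product.2 ⟨hs, Finset.mem_product.2
      ⟨Finset.mem_Ico.2 ⟨hw.1 i, hi⟩, Strip.cross_mem_Icc hw⟩⟩
  have injOn : Set.InjOn code low := by
    rintro ⟨s, w⟩ ⟨-, -, hi, -⟩ ⟨s', w'⟩ - heq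
    obtain ⟨rfl, hwi, hw⟩ : s = s' ∧ w i = w' i ∧ cross f w = cross f w' := by
      simpa [code] using heq
    rw [sub_eq_zero.1 (eq_zero_of_cross_eq_zero_of_apply_eq_zero (z := w - w')
      (by rw [map_sub, hw, sub_self]) hi (sub_eq_zero.2 hwi))]
  have finite : low.Finite := codes.finite_toSet.of_injOn mapsTo injOn
  refine ⟨finite.toFinset, ?_, fun s hs w hw hf hi => finite.mem_toFinset.2 ⟨hs, hw, hf, hi⟩⟩
  calc finite.toFinset.card ≤ codes.card :=
        Finset.card_le_card_of_injOn code (by simpa using mapsTo) (by simpa using injOn)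
    _ = _ := by simp only [codes, Finset.card_product, card_Icc_strip, Int.card_Ico]; simp

lemma exists_finset_low (Q : Finset ℕ) (f : Vec 2) (g : ℤ) (B D : ℕ) :
    ∃ V : Finset (ℕ × Vec 2), V.card ≤ 2 * (Q.card * (D * (2 * B + 1))) ∧
      ∀ s ∈ Q, ∀ w ∈ Strip f g B, (∃ i, f i ≠ 0 ∧ w i < D) → (s, w) ∈ V := by
  classical
  choose V card_le mem using exists_finset_low_coordinate Q f g B D
  refine ⟨Finset.univ.biUnion V, ?_, fun s hs w hw ⟨i, hf, hi⟩ =>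
    Finset.mem_biUnion.2 ⟨i, Finset.mem_univ i, mem i s hs w hw hf hi⟩⟩
  simpa using Finset.card_biUnion_le_card_mul Finset.univ V _ fun i _ => card_le i

/-- Number of pairs of a state and a value of `cross f` inside a strip of width `B`. -/
def stripStates (b B : ℕ) : ℕ := b * (2 * B + 1)

/-- How far from the axes a run in a strip of width `B` and direction at most `M` can be treated by
`KeyedRun.compressible_middle`. -/
def stripDepth (b M B : ℕ) : ℕ := middleDepth (stripStates b B) (2 * M * b) b

/-- Length of the schemes for runs in a strip of width `B` and direction at most `M`. -/
def stripLength (b M B : ℕ) : ℕ :=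
  2 * (2 * (b * (stripDepth b M B * (2 * B + 1)))) +
    5 * middleLength (stripStates b B) (2 * M * b) + 2

variable {E : Set (Trans 2)} {Q : Finset ℕ} {b M B p q : ℕ} {f u v : Vec 2} {g : ℤ}
  {π : List (Trans 2)}

lemma guards_strip (hf : f ≠ 0) : Guards (cross f)
    (fun s k => (∃ w ∈ Strip f g B, cross f w = k) ∧ s ∈ Q) {i | f i ≠ 0} := by
  rintro s w ⟨⟨w', ⟨hw', -⟩, heq⟩, -⟩ i hi
  have := apply_eq_zero_of_cross_eq_zero (z := w' - w) hf (by rw [map_sub, heq, sub_self])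
    (not_not.1 hi)
  exact (hw' i).trans_eq (sub_eq_zero.1 this)

lemma KeyedRun.compressible_deep_in_strip (hE : OfSize E Q b) (hf : f ≠ 0)
    (hM : ∀ i, |f i| ≤ (M : ℤ)) (u_deep : ∀ i, f i ≠ 0 → (stripDepth b M B : ℤ) ≤ u i)
    (v_deep : ∀ i, f i ≠ 0 → (stripDepth b M B : ℤ) ≤ v i)
    (h : KeyedRun E (AddMonoidHom.id _) (fun s w => w ∈ Strip f g B ∧ s ∈ Q) p u π q v) :
    Compressible E 2 (5 * middleLength (stripStates b B) (2 * M * b)) p u q v := by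
  have keyed : KeyedRun E (cross f) (fun s k => (∃ w ∈ Strip f g B, cross f w = k) ∧ s ∈ Q)
      p (cross f u) π q (cross f v) :=
    h.map (cross f) (fun w z => map_add _ w z) (fun s w hw => ⟨⟨w, hw.1, rfl⟩, hw.2⟩)
      fun t _ ht => ht
  have hV : ∀ s k, ((∃ w ∈ Strip f g B, cross f w = k) ∧ s ∈ Q) →
      (s, k) ∈ Q ×ˢ Finset.Icc (g - B) (g + B) := by
    rintro s _ ⟨⟨w, hw, rfl⟩, hs⟩
    exact Finset.mem_product.2 ⟨hs, Strip.cross_mem_Icc hw⟩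
  have hcard : (Q ×ˢ Finset.Icc (g - B) (g + B)).card ≤ stripStates b B := by
    rw [Finset.card_product, card_Icc_strip]
    exact Nat.mul_le_mul_right _ hE.card_le
  let f' : Vec 2 := ![-f 1, f 0]
  have f'_le : ∀ i, |f' i| ≤ (M : ℤ) := Fin.forall_fin_two.2 ⟨by simpa [f'] using hM 1, hM 0⟩
  have independent : cross f f' ≠ 0 := by
    have : cross f f' = f 0 * f 0 + f 1 * f 1 := by simp [cross_apply, f']
    exact this ▸ (sq_add_sq_pos hf).ne'
  have depth_le := middleDepth_mono hcard (2 * M * b) b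
  refine (keyed.compressible_middle hE.stepBounded (guards_strip hf)
    (fun z => eq_zero_of_cross_eq_zero independent) (H := 2 * M * b)
    (fun t ht => by exact_mod_cast abs_cross_le f'_le (hE.stepBounded t ht)) hV h.key_eq
    (fun i hi => ?_) fun i hi => ?_).of_le le_rfl
    (Nat.mul_le_mul_left 5 (middleLength_mono hcard _))
  · exact le_trans (by exact_mod_cast depth_le) (u_deep i hi)
  · exact le_trans (by exact_mod_cast depth_le) (v_deep i hi)

theorem KeyedRun.compressible_of_strip (hE : OfSize E Q b) (hf : f ≠ 0)
    (hM : ∀ i, |f i| ≤ (M : ℤ)) (hp : p ∈ Q)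
    (h : KeyedRun E (AddMonoidHom.id _) (fun _ w => w ∈ Strip f g B) p u π q v) :
    Compressible E 2 (stripLength b M B) p u q v := by
  obtain ⟨V, card_le, mem⟩ := exists_finset_low Q f g B (stripDepth b M B)
  refine ((h.with_states hE.target_mem hp).compressible_of_finite_compl (V := V)
    (fun _ w => ∀ i, f i ≠ 0 → (stripDepth b M B : ℤ) ≤ w i) (fun s w hw => hw.1.1)
    (fun s w hw low => mem s hw.2 w hw.1 (by push Not at low; exact low))
    fun hw hw' inner => inner.compressible_deep_in_strip hE hf hM hw hw').of_le le_rfl ?_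
  have : V.card ≤ 2 * (b * (stripDepth b M B * (2 * B + 1))) := by
    grw [card_le, hE.card_le]
  unfold stripLength
  omega

end Strip

/-! ### Excursions -/

section FreeRun

variable {d : ℕ} {E : Set (Trans d)} {Q : Finset ℕ} {b p q r : ℕ} {π σ : List (Trans d)}

/-- A path of transitions in `E`, that is, a run in `ℤ^d`; encoded as a keyed run with trivial key
so that the decomposition lemmas apply to it. -/
abbrev FreeRun (E : Set (Trans d)) (p : ℕ) (π : List (Trans d)) (q : ℕ) : Prop :=
  KeyedRun E (0 : Vec d →+ Unit) (fun _ _ => True) p 0 π q 0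

/-- A cycle of `E` of length at most `b`. -/
abbrev ShortCycle (E : Set (Trans d)) (b : ℕ) (c : List (Trans d)) : Prop :=
  ShortKeyedCycle E (0 : Vec d →+ Unit) (fun _ _ => True) b c

lemma KeyedRun.freeRun {Γ : Type*} [AddCommGroup Γ] {ω : Vec d →+ Γ} {P : ℕ → Γ → Prop} {g g' : Γ}
    (h : KeyedRun E ω P p g π q g') : FreeRun E p π q :=
  h.map (fun _ => 0) (fun _ _ => rfl) (fun _ _ _ => trivial) fun _ _ ht => ht

lemma FreeRun.exists_decomposition (hE : OfSize E Q b) (hp : p ∈ Q) (h : FreeRun E p π q) :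
    ∃ (σ : List (Trans d)) (cs : List (List (Trans d))), FreeRun E p σ q ∧ σ.length ≤ b ∧
      (∀ c ∈ cs, ShortCycle E b c) ∧ disp π = disp σ + (cs.map disp).sum := by
  have card_le : (Q ×ˢ (Finset.univ : Finset Unit)).card ≤ b := by simpa using hE.card_le
  obtain ⟨σ, cs, hσ, hlen, hcs, hdisp⟩ := (h.with_states hE.target_mem hp).exists_decomposition
    (Q ×ˢ Finset.univ) fun s k hs => by simpa using hs.2
  refine ⟨σ, cs, hσ.freeRun, hlen.trans card_le, fun c hc => ?_, hdisp⟩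
  obtain ⟨hne, hlen, r, k, hrun⟩ := hcs c hc
  exact ⟨hne, hlen.trans card_le, r, 0, hrun.freeRun⟩

lemma FreeRun.exists_short (hE : OfSize E Q b) (hp : p ∈ Q) (h : FreeRun E p π q) :
    ∃ σ, FreeRun E p σ q ∧ σ.length ≤ b := by
  obtain ⟨σ, -, hσ, hlen, -⟩ := FreeRun.exists_decomposition hE hp h
  exact ⟨σ, hσ, hlen⟩

lemma FreeRun.exists_cycle_decomposition (hE : OfSize E Q b) (hp : p ∈ Q) (h : FreeRun E p π p) :
    ∃ cs : List (List (Trans d)), (∀ c ∈ cs, ShortCycle E b c) ∧ disp π = (cs.map disp).sum := by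
  obtain ⟨σ, cs, hσ, hlen, hcs, hdisp⟩ := FreeRun.exists_decomposition hE hp h
  by_cases hne : σ = []
  · exact ⟨cs, hcs, by simpa [hne] using hdisp⟩
  · exact ⟨σ :: cs, List.forall_mem_cons.2 ⟨⟨hne, hlen, p, 0, hσ⟩, hcs⟩, by simpa using hdisp⟩

/-- Every transition of `E` lies on a closed path through `p`. -/
def StronglyConnectedAt (E : Set (Trans d)) (p : ℕ) : Prop :=
  ∀ t ∈ E, (∃ π, FreeRun E p π t.1) ∧ ∃ π, FreeRun E t.1 π p

end FreeRun

/-- There is a cycle of displacement `z` and a round trip from `p` through its base point of total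
displacement `s`; the cycle and both halves of the round trip have length at most `L`. -/
def Excursion {d : ℕ} (E : Set (Trans d)) (p L : ℕ) (z s : Vec d) : Prop :=
  ∃ (r : ℕ) (out β back : List (Trans d)), FreeRun E p out r ∧ FreeRun E r β r ∧
    FreeRun E r back p ∧ β ≠ [] ∧ out.length ≤ L ∧ β.length ≤ L ∧ back.length ≤ L ∧
    disp β = z ∧ disp out + disp back = s

namespace Excursion

variable {d : ℕ} {E : Set (Trans d)} {b p L L' : ℕ} {z s : Vec d}

lemma of_le (h : Excursion E p L z s) (hL : L ≤ L') : Excursion E p L' z s := by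
  obtain ⟨r, out, β, back, hout, hβ, hback, hne, lout, lβ, lback, hdisp⟩ := h
  exact ⟨r, out, β, back, hout, hβ, hback, hne, lout.trans hL, lβ.trans hL, lback.trans hL, hdisp⟩

lemma of_loop {β : List (Trans d)} (h : FreeRun E p β p) (hne : β ≠ []) (hL : β.length ≤ L) :
    Excursion E p L (disp β) 0 :=
  ⟨p, [], β, [], .refl trivial, h, .refl trivial, hne, by simp, hL, by simp, rfl, by simp⟩

lemma abs_cycle_le (hb : StepBounded E b) (h : Excursion E p L z s) (i : Fin d) :
    |z i| ≤ (L * b : ℤ) := by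
  obtain ⟨r, out, β, back, -, hβ, -, -, -, lβ, -, rfl, -⟩ := h
  exact hb.abs_disp_le hβ.mem lβ i

lemma abs_detour_le (hb : StepBounded E b) (h : Excursion E p L z s) (i : Fin d) :
    |s i| ≤ (2 * (L * b) : ℤ) := by
  obtain ⟨r, out, β, back, hout, -, hback, -, lout, -, lback, -, rfl⟩ := h
  rw [Pi.add_apply]
  linarith [abs_add_le (disp out i) (disp back i), hb.abs_disp_le hout.mem lout i,
    hb.abs_disp_le hback.mem lback i]

lemma exists_loop (h : Excursion E p L z s) (n : ℕ) :
    ∃ π, FreeRun E p π p ∧ disp π = s + n • z ∧ π.length ≤ (n + 2) * L := by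
  obtain ⟨r, out, β, back, hout, hβ, hback, -, lout, lβ, lback, rfl, rfl⟩ := h
  refine ⟨out ++ (List.replicate n β).flatten ++ back, (hout.trans (hβ.iterate n)).trans hback, ?_,
    ?_⟩
  · rw [disp_append, disp_append, disp_flatten_replicate]
    abel
  · simp only [List.length_append, List.length_flatten, List.map_replicate, List.sum_replicate,
      smul_eq_mul]
    linarith [Nat.mul_le_mul_left n lβ]

lemma exists_repeated_loop (h : Excursion E p L z s) {k : ℕ} (hk : 0 < k) (n : ℕ) :
    ∃ π, FreeRun E p π p ∧ disp π = k • s + n • z ∧ π.length ≤ (n + 2 * k) * L := by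
  obtain ⟨k, rfl⟩ := Nat.exists_eq_add_one.2 hk
  obtain ⟨π, hπ, dπ, lπ⟩ := h.exists_loop n
  obtain ⟨σ, hσ, dσ, lσ⟩ := h.exists_loop 0
  refine ⟨π ++ (List.replicate k σ).flatten, hπ.trans (hσ.iterate k), ?_, ?_⟩
  · rw [disp_append, disp_flatten_replicate, dπ, dσ, zero_smul, add_zero, succ_nsmul]
    abel
  · simp only [List.length_append, List.length_flatten, List.map_replicate, List.sum_replicate,
      smul_eq_mul]
    linarith [Nat.mul_le_mul_left k lσ]

end Excursion

lemma ShortCycle.exists_excursion {d : ℕ} {E : Set (Trans d)} {Q : Finset ℕ} {b p : ℕ}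
    {c : List (Trans d)} (hE : OfSize E Q b) (hp : p ∈ Q) (hconn : StronglyConnectedAt E p)
    (hc : ShortCycle E b c) : ∃ s, Excursion E p b (disp c) s := by
  obtain ⟨hne, hlen, r, k, hrun⟩ := hc
  obtain ⟨t, c, rfl⟩ := List.exists_cons_of_ne_nil hne
  obtain ⟨-, ht, rfl, -⟩ := id hrun
  obtain ⟨⟨π, hπ⟩, ⟨π', hπ'⟩⟩ := hconn t ht
  obtain ⟨σ, hσ, lσ⟩ := FreeRun.exists_short hE hp hπ
  obtain ⟨σ', hσ', lσ'⟩ := FreeRun.exists_short hE (hE.source_mem t ht) hπ'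
  exact ⟨_, t.1, σ, t :: c, σ', hσ, hrun.freeRun, hσ', hne, lσ, hlen, lσ', rfl, rfl⟩

section Axis

/-- How far a combination of two vectors of norm at most `R` has to be stretched to dominate a
perturbation of norm at most `S`. -/
def axisStretch (R S : ℕ) : ℕ := 3 * (R * S) + 2 * (R * R * (R * S)) + 1

/-- Bound on the multiplicities in `exists_axis_combination`. -/
def axisCoeff (R S : ℕ) : ℕ := axisStretch R S * (R * R) + R * S

lemma mul_self_apply_le {y : Vec 2} {R : ℤ} (hy : ∀ j, |y j| ≤ R) (i : Fin 2) :
    y i * y i ≤ R * R :=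
  (le_abs_self _).trans (abs_mul_le_of_abs_le (hy i) (hy i))

lemma axisCoeff_bounds {y s : Vec 2} {R S : ℕ} (hy : ∀ j, |y j| ≤ (R : ℤ))
    (hs : ∀ j, |s j| ≤ (S : ℤ)) {i : Fin 2} (hi : y i ≠ 0) :
    (axisStretch R S - R * S : ℤ) ≤ axisStretch R S * (y i * y i) + y i * s i ∧
      axisStretch R S * (y i * y i) + y i * s i ≤ (axisCoeff R S : ℤ) := by
  have hys := abs_le.1 (abs_mul_le_of_abs_le (hy i) (hs i))
  have hpos : 0 < y i * y i := mul_self_pos.2 hi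
  have lower : (axisStretch R S : ℤ) ≤ axisStretch R S * (y i * y i) :=
    le_mul_of_one_le_right (by positivity) (by omega)
  have upper : (axisStretch R S : ℤ) * (y i * y i) ≤ axisStretch R S * (R * R) :=
    mul_le_mul_of_nonneg_left (mul_self_apply_le hy i) (by positivity)
  rw [axisCoeff]
  push_cast
  constructor <;> linarith

lemma axis_combination_between {x y s : Vec 2} {R S : ℕ} (hx : ∀ j, |x j| ≤ (R : ℤ))
    (hy : ∀ j, |y j| ≤ (R : ℤ)) (hs : ∀ j, |s j| ≤ (S : ℤ)) (hxy : 0 < cross x y) {k m : ℕ}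
    (hk : 0 < k) (hkR : k ≤ R * R) (hm : (axisStretch R S - R * S : ℤ) ≤ m) :
    0 < cross x (k • s + m • x + (axisStretch R S * k) • y) ∧
      0 < cross (k • s + m • x + (axisStretch R S * k) • y) y := by
  have cross_xs := neg_le_of_abs_le (abs_cross_le hx hs)
  have cross_sy := neg_le_of_abs_le (abs_cross_le hs hy)
  have RS_nonneg : (0 : ℤ) ≤ R * S := by positivity
  have RRRS_nonneg : (0 : ℤ) ≤ R * R * (R * S) := by positivity
  have stretch_le : (axisStretch R S : ℤ) ≤ axisStretch R S * cross x y :=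
    le_mul_of_one_le_right (by positivity) (by omega)
  have stretch_eq : (axisStretch R S : ℤ) = 3 * (R * S) + 2 * (R * R * (R * S)) + 1 := by
    simp [axisStretch]
  have m_le : (m : ℤ) ≤ m * cross x y := le_mul_of_one_le_right (by positivity) (by omega)
  have sy_le : (k : ℤ) * (2 * (R * S)) ≤ R * R * (2 * (R * S)) := by gcongr; exact_mod_cast hkR
  have k_cross_sy := mul_le_mul_of_nonneg_left cross_sy (Int.natCast_nonneg k)
  constructor
  · calc (0 : ℤ) < k * (cross x s + axisStretch R S * cross x y) :=
          mul_pos (by exact_mod_cast hk) (by linarith)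
      _ = _ := by
        simp only [map_add, map_nsmul, cross_self]
        simp only [nsmul_eq_mul, Nat.cast_mul]
        ring
  · calc (0 : ℤ) < k * cross s y + m * cross x y := by linarith
      _ = _ := by
        simp only [map_add, map_nsmul, AddMonoidHom.add_apply, AddMonoidHom.nsmul_apply, cross_self]
        simp only [nsmul_eq_mul]
        ring

/- Take `k = -xᵢyᵢ`, `m = t yᵢ² + yᵢsᵢ` and `n = t k` with `t` the stretch. The terms in `t` point
along the axis, between `x` and `y`, and dominate the others. -/
lemma exists_axis_combination {x y s : Vec 2} {R S : ℕ} (hx : ∀ j, |x j| ≤ (R : ℤ))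
    (hy : ∀ j, |y j| ≤ (R : ℤ)) (hs : ∀ j, |s j| ≤ (S : ℤ)) (hxy : 0 < cross x y) {i : Fin 2}
    (hi : x i * y i < 0) :
    ∃ k m n : ℕ, 0 < k ∧ k ≤ axisCoeff R S ∧ m ≤ axisCoeff R S ∧ n ≤ axisCoeff R S ∧
      (k • s + m • x + n • y) i = 0 ∧ 0 < cross x (k • s + m • x + n • y) ∧
      0 < cross (k • s + m • x + n • y) y := by
  obtain ⟨k, hk⟩ := Int.eq_ofNat_of_zero_le (neg_nonneg.2 hi.le)
  have hk₀ : 0 < k := by omega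
  have hkR : k ≤ R * R := by
    zify
    rw [← hk]
    exact (neg_le_abs _).trans (abs_mul_le_of_abs_le (hx i) (hy i))
  have hyi : y i ≠ 0 := fun h => by simp [h] at hi
  obtain ⟨lower, upper⟩ := axisCoeff_bounds hy hs hyi
  have stretch_large : R * S ≤ axisStretch R S := by unfold axisStretch; omega
  obtain ⟨m, hm⟩ := Int.eq_ofNat_of_zero_le (lower.trans' (by zify at stretch_large; omega))
  rw [hm] at lower upper
  have n_le : axisStretch R S * k ≤ axisCoeff R S :=
    (Nat.mul_le_mul_left _ hkR).trans (Nat.le_add_right _ _)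
  have k_le : k ≤ axisStretch R S * k := Nat.le_mul_of_pos_left k (by unfold axisStretch; omega)
  refine ⟨k, m, axisStretch R S * k, hk₀, k_le.trans n_le, by exact_mod_cast upper, n_le, ?_,
    axis_combination_between hx hy hs hxy hk₀ hkR lower⟩
  simp only [Pi.add_apply, nsmul_eq_mul, Pi.mul_apply, Pi.natCast_apply]
  rw [Nat.cast_mul, show (k : ℤ) = _ from hk.symm, show (m : ℤ) = _ from hm.symm]
  ring

variable {E : Set (Trans 2)} {b p L : ℕ} {x y s s' e : Vec 2}

/-- Length of the excursions obtained from excursions of length `L` by rotating onto an axis. -/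
def axisLength (b L : ℕ) : ℕ := L + 6 * axisCoeff (L * b) (4 * (L * b)) * L

lemma Excursion.exists_axis (hb : StepBounded E b) (hx : Excursion E p L x s)
    (hy : Excursion E p L y s') (hxy : 0 < cross x y) {i : Fin 2} (hi : x i * y i < 0) :
    ∃ z, Excursion E p (axisLength b L) z 0 ∧ z i = 0 ∧ 0 < cross x z ∧ 0 < cross z y := by
  have detour_le : ∀ j, |(s + s') j| ≤ ((4 * (L * b) : ℕ) : ℤ) := fun j => by
    rw [Pi.add_apply]
    push_cast
    linarith [abs_add_le (s j) (s' j), hx.abs_detour_le hb j, hy.abs_detour_le hb j]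
  obtain ⟨k, m, n, hk, k_le, m_le, n_le, on_axis, between⟩ :=
    exists_axis_combination (R := L * b) (by exact_mod_cast hx.abs_cycle_le hb)
      (by exact_mod_cast hy.abs_cycle_le hb) detour_le hxy hi
  obtain ⟨π, hπ, dπ, lπ⟩ := hx.exists_repeated_loop hk m
  obtain ⟨σ, hσ, dσ, lσ⟩ := hy.exists_repeated_loop hk n
  have hdisp : disp (π ++ σ) = k • (s + s') + m • x + n • y := by
    rw [disp_append, dπ, dσ, nsmul_add]
    abel
  rw [← hdisp] at on_axis between
  refine ⟨disp (π ++ σ), .of_loop (hπ.trans hσ) ?_ ?_, on_axis, between⟩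
  · intro hnil
    simp [hnil] at between
  · have : (m + 2 * k) * L + (n + 2 * k) * L ≤ 6 * axisCoeff (L * b) (4 * (L * b)) * L := by
      rw [← add_mul]
      exact Nat.mul_le_mul_right L (by omega)
    rw [List.length_append, axisLength]
    omega

lemma mul_apply_nonneg_of_between {x y z : Vec 2} (hxy : 0 < cross x y) (hxz : 0 ≤ cross x z)
    (hzy : 0 ≤ cross z y) {j : Fin 2} (hj : 0 ≤ x j * y j) : 0 ≤ x j * z j ∧ 0 ≤ z j * y j := by
  have hcramer : cross x y * z j = cross z y * x j + cross x z * y j := congrFun (cramer x y z) j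
  constructor <;> refine nonneg_of_mul_nonneg_right (a := cross x y) ?_ hxy
  · calc 0 ≤ cross z y * (x j * x j) + cross x z * (x j * y j) :=
          add_nonneg (mul_nonneg hzy (mul_self_nonneg _)) (mul_nonneg hxz hj)
      _ = _ := by linear_combination -x j * hcramer
  · calc 0 ≤ cross z y * (x j * y j) + cross x z * (y j * y j) :=
          add_nonneg (mul_nonneg hzy hj) (mul_nonneg hxz (mul_self_nonneg _))
      _ = _ := by linear_combination -y j * hcramer

lemma Excursion.exists_same_sign_apply (hb : StepBounded E b) (hx : Excursion E p L x s)
    (hy : Excursion E p L y s') (he : InCone x y e) (i : Fin 2) :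
    ∃ x' s₁ y' s₂, Excursion E p (axisLength b L) x' s₁ ∧ Excursion E p (axisLength b L) y' s₂ ∧
      InCone x' y' e ∧ 0 ≤ x' i * y' i ∧ ∀ j, 0 ≤ x j * y j → 0 ≤ x' j * y' j := by
  have hL : L ≤ axisLength b L := Nat.le_add_right _ _
  obtain ⟨hxy, hxe, hey⟩ := he
  rcases le_or_gt 0 (x i * y i) with hi | hi
  · exact ⟨x, s, y, s', hx.of_le hL, hy.of_le hL, ⟨hxy, hxe, hey⟩, hi, fun _ => id⟩
  obtain ⟨z, hz, hzi, hxz, hzy⟩ := hx.exists_axis hb hy hxy hi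
  have between (j : Fin 2) := mul_apply_nonneg_of_between (j := j) hxy hxz.le hzy.le
  rcases le_total 0 (cross z e) with hze | hze
  · exact ⟨z, 0, y, s', hz, hy.of_le hL, ⟨hzy, hze, hey⟩, by simp [hzi],
      fun j hj => (between j hj).2⟩
  · exact ⟨x, s, z, 0, hx.of_le hL, hz, ⟨hxz, hxe, by rw [cross_antisymm]; omega⟩, by simp [hzi],
      fun j hj => (between j hj).1⟩

/-- Length of the excursions whose cycles span a cone inside one quadrant. -/
def quadrantLength (b L : ℕ) : ℕ := axisLength b (axisLength b L)

lemma Excursion.exists_same_sign (hb : StepBounded E b) (hx : Excursion E p L x s)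
    (hy : Excursion E p L y s') (he : InCone x y e) :
    ∃ x' s₁ y' s₂, Excursion E p (quadrantLength b L) x' s₁ ∧
      Excursion E p (quadrantLength b L) y' s₂ ∧ InCone x' y' e ∧ ∀ i, 0 ≤ x' i * y' i := by
  obtain ⟨x₁, s₁, y₁, s₂, hx₁, hy₁, he₁, sign₀, -⟩ := hx.exists_same_sign_apply hb hy he 0
  obtain ⟨x₂, s₃, y₂, s₄, hx₂, hy₂, he₂, sign₁, preserved⟩ :=
    hx₁.exists_same_sign_apply hb hy₁ he₁ 1
  exact ⟨x₂, s₃, y₂, s₄, hx₂, hy₂, he₂, Fin.forall_fin_two.2 ⟨preserved 0 sign₀, sign₁⟩⟩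

end Axis

/-! ### Entering and leaving the interior -/

lemma guards_univ {d : ℕ} {Γ : Type*} [AddCommGroup Γ] (ω : Vec d →+ Γ) (P : ℕ → Γ → Prop) :
    Guards ω P Set.univ :=
  fun _ _ _ _ hi => absurd trivial hi

lemma FreeRun.natRun {d : ℕ} {E : Set (Trans d)} {b L p q : ℕ} {π : List (Trans d)} {w : Vec d}
    (hb : StepBounded E b) (h : FreeRun E p π q) (hL : π.length ≤ L)
    (hw : ∀ i, (L * b : ℤ) ≤ w i) : NatRun E p w π q (w + disp π) :=
  KeyedRun.natRun hb (guards_univ _ _) rfl h hL fun i _ => hw i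

section Entry

variable {E : Set (Trans 2)} {Q : Finset ℕ} {b D p q : ℕ} {u v : Vec 2} {π : List (Trans 2)}

/-- A coordinate above this height stays above `D` while the other one climbs to `D`. -/
def climbHeight (b D : ℕ) : ℕ := D + (b * D + 1) * b

/- Cycles on which the state and the `i`-th coordinate agree can be cut out of the climb in that
coordinate; the other coordinate is too large to be harmed. -/
lemma NatRun.exists_climb (hE : OfSize E Q b) (hp : p ∈ Q) {i j : Fin 2} (hij : ∀ k, k ≠ j → k = i)
    (hu : (climbHeight b D : ℤ) ≤ u j) (h : NatRun E p u π q v)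
    (hπ : ¬ KeyedRun E (AddMonoidHom.id _) (fun _ w => 0 ≤ w ∧ w i < D) p u π q v) :
    ∃ s ∈ Q, ∃ (w : Vec 2) (σ ρ : List (Trans 2)), NatRun E p u σ s w ∧ σ.length ≤ b * D + 1 ∧
      (∀ k, (D : ℤ) ≤ w k) ∧ FreeRun E s ρ q := by
  rcases (h.with_states hE.target_mem hp).exists_first (fun _ w => (D : ℤ) ≤ w i) with
    avoids | ⟨s, w, π₁, π₂, -, hw, first, rest⟩
  · exact absurd (avoids.weaken fun _ w hw => ⟨hw.1.1, not_le.1 hw.2⟩) hπ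
  let height : Vec 2 →+ ℤ := Pi.evalAddMonoidHom (fun _ => ℤ) i
  have climb : KeyedRun E height
      (fun s' k => (0 ≤ k ∧ s' ∈ Q) ∧ (¬ (D : ℤ) ≤ k ∨ (s' = s ∧ k = w i))) p (u i) π₁ s (w i) :=
    first.map height (fun _ _ => rfl)
      (fun s' x hx => ⟨⟨hx.1.1 i, hx.1.2⟩, hx.2.imp id fun h => ⟨h.1, congrFun h.2 i⟩⟩)
      fun _ _ ht => ht
  obtain ⟨σ, hσ, lσ⟩ := climb.exists_short_first (V := Q ×ˢ Finset.Ico (0 : ℤ) D)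
    fun s' k hk hD => by simpa [hk] using hD
  replace lσ : σ.length ≤ b * D + 1 := by
    grw [lσ, Finset.card_product, Int.card_Ico, hE.card_le]
    simp
  have huj : (D + (b * D + 1) * b : ℤ) ≤ u j := by exact_mod_cast hu
  have guards : Guards height (fun s' k => 0 ≤ k ∧ s' ∈ Q) {j} := fun s' x hx k hk =>
    hij k hk ▸ hx.1
  have hrun := hσ.natRun hE.stepBounded guards rfl lσ (by
    rintro _ rfl; push_cast; linarith [Int.natCast_nonneg D])
  refine ⟨s, rest.source.2, u + disp σ, σ, π₂, hrun, lσ, fun k => ?_, rest.freeRun⟩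
  rw [Pi.add_apply]
  by_cases hk : k = j
  · have := neg_le_of_abs_le (hE.stepBounded.abs_disp_le hσ.mem lσ k)
    push_cast at this
    subst hk
    linarith
  · obtain rfl := hij k hk
    exact hw.trans_eq hσ.key_eq

/-- A run reaching this height in both coordinates has a short variant ending above `D`; see
`NatRun.exists_entry`. -/
def entryHeight (b D : ℕ) : ℕ := climbHeight b (D + b * b)

/-- Length of the runs in `NatRun.exists_entry`. -/
def entryLength (b D : ℕ) : ℕ :=
  (b * (entryHeight b D * entryHeight b D) + 1) + (b * (D + b * b) + 1) + b

lemma le_climbHeight (b D : ℕ) : D ≤ climbHeight b D := Nat.le_add_right _ _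

lemma NatRun.exists_climb_both (hE : OfSize E Q b) (hp : p ∈ Q) (h : NatRun E p u π q v)
    (hπ : ∀ i, ¬ KeyedRun E (AddMonoidHom.id _) (fun _ w => 0 ≤ w ∧ w i < climbHeight b D)
      p u π q v) :
    ∃ s ∈ Q, ∃ (w : Vec 2) (σ ρ : List (Trans 2)), NatRun E p u σ s w ∧
      σ.length ≤ (b * (climbHeight b D * climbHeight b D) + 1) + (b * D + 1) ∧
      (∀ k, (D : ℤ) ≤ w k) ∧ FreeRun E s ρ q := by
  set H := climbHeight b D
  rcases (h.with_states hE.target_mem hp).exists_first (fun _ w => ∃ j, (H : ℤ) ≤ w j) with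
    avoids | ⟨s, w, π₁, π₂, rfl, ⟨j, hj⟩, first, rest⟩
  · exact absurd (avoids.weaken fun _ w hw => ⟨hw.1.1, not_le.1 fun h₀ => hw.2 ⟨0, h₀⟩⟩) (hπ 0)
  obtain ⟨σ, hσ, lσ⟩ := first.exists_short_first
    (V := Q ×ˢ Fintype.piFinset fun _ : Fin 2 => Finset.Ico (0 : ℤ) H) fun s' x hx low =>
      Finset.mem_product.2 ⟨hx.2, Fintype.mem_piFinset.2 fun k =>
        Finset.mem_Ico.2 ⟨hx.1 k, not_le.1 fun hk => low ⟨k, hk⟩⟩⟩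
  replace lσ : σ.length ≤ b * (H * H) + 1 := by
    grw [lσ, Finset.card_product, Fintype.card_piFinset, hE.card_le]
    simp [pow_two]
  obtain ⟨i, hij⟩ : ∃ i : Fin 2, ∀ k, k ≠ j → k = i := ⟨j.rev, by clear * -; decide +revert⟩
  have climbs : ¬ KeyedRun E (AddMonoidHom.id _) (fun _ x => 0 ≤ x ∧ x i < D) s w π₂ q v := by
    intro low
    have hDH : (D : ℤ) ≤ H := by exact_mod_cast le_climbHeight b D
    refine hπ i (KeyedRun.trans (first.weaken ?_) (low.weaken fun _ x hx =>
      ⟨hx.1, hx.2.trans_le hDH⟩))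
    rintro _ x ⟨⟨hx, -⟩, below | ⟨-, rfl⟩⟩
    · exact ⟨hx, not_le.1 fun hi => below ⟨i, hi⟩⟩
    · exact ⟨hx, low.source.2.trans_le hDH⟩
  obtain ⟨s', hs', w', σ', ρ, hσ', lσ', hw', hρ⟩ := NatRun.exists_climb hE rest.source.2 hij hj
    (rest.weaken fun _ _ hx => hx.1) climbs
  refine ⟨s', hs', w', σ ++ σ', ρ, (hσ.weaken fun _ _ hx => hx.1).trans hσ', ?_, hw', hρ⟩
  rw [List.length_append]
  omega

lemma NatRun.exists_entry (hE : OfSize E Q b) (hp : p ∈ Q) (h : NatRun E p u π q v)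
    (hπ : ∀ i, ¬ KeyedRun E (AddMonoidHom.id _) (fun _ w => 0 ≤ w ∧ w i < entryHeight b D)
      p u π q v) :
    ∃ w σ, NatRun E p u σ q w ∧ σ.length ≤ entryLength b D ∧ ∀ k, (D : ℤ) ≤ w k := by
  obtain ⟨s, hs, w, σ, ρ, hσ, lσ, hw, hρ⟩ := h.exists_climb_both hE hp hπ
  obtain ⟨ρ, hρ, lρ⟩ := FreeRun.exists_short hE hs hρ
  push_cast at hw
  have := FreeRun.natRun hE.stepBounded hρ lρ fun k => le_trans (by simp) (hw k)
  refine ⟨w + disp ρ, σ ++ ρ, hσ.trans this, ?_, fun k => ?_⟩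
  · rw [List.length_append, entryLength, entryHeight]
    omega
  · rw [Pi.add_apply]
    linarith [neg_le_of_abs_le (hE.stepBounded.abs_disp_le hρ.mem lρ k), hw k]

end Entry

section Reversal

variable {d : ℕ} {E : Set (Trans d)} {P : ℕ → Vec d → Prop} {π : List (Trans d)} {p q : ℕ}
  {u v : Vec d}

/-- The transition that undoes `t`. -/
def reverseTrans (t : Trans d) : Trans d := (t.2.2, -t.2.1, t.1)

lemma reverseTrans_involutive : Function.Involutive (reverseTrans : Trans d → Trans d) :=
  fun t => by simp [reverseTrans]

/-- The path that undoes `π`. -/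
def reversePath (π : List (Trans d)) : List (Trans d) := (π.map reverseTrans).reverse

lemma reversePath_reversePath (π : List (Trans d)) : reversePath (reversePath π) = π := by
  simp [reversePath, Function.comp_def, reverseTrans_involutive _]

lemma length_reversePath (π : List (Trans d)) : (reversePath π).length = π.length := by
  simp [reversePath]

lemma KeyedRun.reverse (h : KeyedRun E (AddMonoidHom.id _) P p u π q v) :
    KeyedRun (reverseTrans ⁻¹' E) (AddMonoidHom.id _) P q v (reversePath π) p u := by
  induction π generalizing p u with
  | nil => obtain ⟨hP, rfl, rfl⟩ := h; exact refl hP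
  | cons t π ih =>
    obtain ⟨hP, ht, rfl, htail⟩ := h
    have undo : u + t.2.1 + (reverseTrans t).2.1 = u := by simp [reverseTrans]
    rw [reversePath, List.map_cons, List.reverse_cons]
    have := singleton (E := reverseTrans ⁻¹' E) (ω := AddMonoidHom.id _) (P := P)
      (t := reverseTrans t) (g := u + t.2.1)
      (by rwa [Set.mem_preimage, reverseTrans_involutive]) htail.source
      (by rw [AddMonoidHom.id_apply, undo]; exact hP)
    rw [AddMonoidHom.id_apply, undo] at this
    exact (ih htail).trans this

lemma KeyedRun.of_reverse
    (h : KeyedRun (reverseTrans ⁻¹' E) (AddMonoidHom.id _) P q v π p u) :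
    KeyedRun E (AddMonoidHom.id _) P p u (reversePath π) q v := by
  simpa only [Set.preimage_preimage, reverseTrans_involutive _, Set.preimage_id'] using h.reverse

lemma OfSize.reverse {Q : Finset ℕ} {b : ℕ} (hE : OfSize E Q b) :
    OfSize (reverseTrans ⁻¹' E) Q b where
  source_mem t ht := hE.target_mem _ ht
  target_mem t ht := hE.source_mem _ ht
  card_le := hE.card_le
  stepBounded t ht i := by simpa [reverseTrans] using hE.stepBounded _ ht i

end Reversal

lemma NatRun.exists_exit {E : Set (Trans 2)} {Q : Finset ℕ} {b D p q : ℕ} {u v : Vec 2}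
    {π : List (Trans 2)} (hE : OfSize E Q b) (hq : q ∈ Q) (h : NatRun E p u π q v)
    (hπ : ∀ i, ¬ KeyedRun E (AddMonoidHom.id _) (fun _ w => 0 ≤ w ∧ w i < entryHeight b D)
      p u π q v) :
    ∃ w σ, NatRun E p w σ q v ∧ σ.length ≤ entryLength b D ∧ ∀ k, (D : ℤ) ≤ w k := by
  obtain ⟨w, σ, hσ, lσ, hw⟩ := NatRun.exists_entry hE.reverse hq h.reverse fun i low =>
    hπ i (reversePath_reversePath π ▸ low.of_reverse)
  exact ⟨w, reversePath σ, hσ.of_reverse, (length_reversePath σ).trans_le lσ, hw⟩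

/-! ### Runs through the interior -/

section CycleVectors

variable {E : Set (Trans 2)} {Q : Finset ℕ} {b B L p q : ℕ} {u v w w' z s f : Vec 2}
  {π : List (Trans 2)}

open Classical in
/-- The displacements of the cycles of length at most `b`, provided that the updates have entries
of absolute value at most `b`: the box then contains all of them. -/
noncomputable def cycleVectors (E : Set (Trans 2)) (b : ℕ) : Finset (Vec 2) :=
  {z ∈ Fintype.piFinset fun _ : Fin 2 => Finset.Icc (-(b * b : ℤ)) (b * b) |
    ∃ c, ShortCycle E b c ∧ disp c = z}

/-- Bound on the number of vectors in `cycleVectors E b`. -/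
def cycleVectorCount (b : ℕ) : ℕ := (2 * (b * b) + 1) ^ 2

lemma card_cycleVectors_le (E : Set (Trans 2)) (b : ℕ) :
    (cycleVectors E b).card ≤ cycleVectorCount b := by
  classical
  refine (Finset.card_filter_le _ _).trans_eq ?_
  rw [Fintype.card_piFinset_const, Int.card_Icc, cycleVectorCount]
  congr 1
  lia

lemma mem_cycleVectors : z ∈ cycleVectors E b ↔
    (∀ i, |z i| ≤ (b * b : ℤ)) ∧ ∃ c, ShortCycle E b c ∧ disp c = z := by
  simp [cycleVectors, abs_le]

lemma ShortCycle.disp_mem_cycleVectors {c : List (Trans 2)} (hb : StepBounded E b)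
    (hc : ShortCycle E b c) : disp c ∈ cycleVectors E b :=
  mem_cycleVectors.2 ⟨hb.abs_disp_le hc.mem hc.2.1, c, hc, rfl⟩

lemma FreeRun.disp_mem_span (hE : OfSize E Q b) (hp : p ∈ Q) (h : FreeRun E p π p) :
    disp π ∈ Submodule.span ℤ (cycleVectors E b : Set (Vec 2)) := by
  obtain ⟨cs, hcs, hdisp⟩ := FreeRun.exists_cycle_decomposition hE hp h
  rw [hdisp]
  exact list_sum_mem (List.forall_mem_map.2 fun c hc =>
    Submodule.subset_span ((hcs c hc).disp_mem_cycleVectors hE.stepBounded))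

lemma Excursion.detour_mem_span (hE : OfSize E Q b) (hp : p ∈ Q) (h : Excursion E p L z s) :
    s ∈ Submodule.span ℤ (cycleVectors E b : Set (Vec 2)) := by
  obtain ⟨π, hπ, dπ, -⟩ := h.exists_loop 0
  rw [zero_smul, add_zero] at dπ
  exact dπ ▸ FreeRun.disp_mem_span hE hp hπ

lemma Excursion.cycle_mem_span (hE : OfSize E Q b) (hp : p ∈ Q) (h : Excursion E p L z s) :
    z ∈ Submodule.span ℤ (cycleVectors E b : Set (Vec 2)) := by
  obtain ⟨π, hπ, dπ, -⟩ := h.exists_loop 1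
  rw [one_smul, ← sub_eq_iff_eq_add'] at dπ
  exact dπ ▸ Submodule.sub_mem _ (FreeRun.disp_mem_span hE hp hπ) (h.detour_mem_span hE hp)

lemma FreeRun.le_cross_disp (hE : OfSize E Q b) (hf : ∀ i, |f i| ≤ (b * b : ℤ))
    (hpos : ∀ c ∈ cycleVectors E b, 0 ≤ cross f c) (hp : p ∈ Q) (h : FreeRun E p π q) :
    -(2 * (b * b) * (b * b) : ℤ) ≤ cross f (disp π) := by
  obtain ⟨σ, cs, hσ, lσ, hcs, hdisp⟩ := FreeRun.exists_decomposition hE hp h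
  rw [hdisp, map_add, map_sum_disp]
  have simple := neg_le_of_abs_le (abs_cross_le hf (hE.stepBounded.abs_disp_le hσ.mem lσ))
  have cycles : 0 ≤ (cs.map fun c => cross f (disp c)).sum :=
    List.sum_nonneg (List.forall_mem_map.2 fun c hc =>
      hpos _ ((hcs c hc).disp_mem_cycleVectors hE.stepBounded))
  linarith

/-- The run stays in no strip of width `B` whose direction has entries of absolute value at most
`b * b`, the bound on the entries of the vectors in `cycleVectors E b`. -/
def LeavesStrips (E : Set (Trans 2)) (b B p : ℕ) (u : Vec 2) (π : List (Trans 2)) (q : ℕ)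
    (v : Vec 2) : Prop :=
  ∀ f : Vec 2, f ≠ 0 → (∀ i, |f i| ≤ (b * b : ℤ)) → ∀ g : ℤ,
    ¬ KeyedRun E (AddMonoidHom.id _) (fun _ w => w ∈ Strip f g B) p u π q v

/- A run that leaves the strip around its source cannot do so on the negative side of `f`, nor come
back, by more than a simple path can. -/
lemma LeavesStrips.le_cross_disp (hE : OfSize E Q b) (hns : LeavesStrips E b B p u π q v)
    (hB : 2 * (b * b) * (b * b) ≤ B) (hf₀ : f ≠ 0) (hf : ∀ i, |f i| ≤ (b * b : ℤ))
    (hpos : ∀ c ∈ cycleVectors E b, 0 ≤ cross f c) (hp : p ∈ Q) (h : NatRun E p u π q v) :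
    (B - 2 * (b * b) * (b * b) : ℤ) ≤ cross f (disp π) := by
  rcases (h.with_states hE.target_mem hp).exists_first
    (fun _ w => ¬ |cross f w - cross f u| ≤ B) with
    stays | ⟨s, w, π₁, π₂, rfl, hw, first, rest⟩
  · exact absurd (stays.weaken fun _ w hw => ⟨hw.1.1, not_not.1 hw.2⟩) (hns f hf₀ hf _)
  have low₁ := FreeRun.le_cross_disp hE hf hpos hp first.freeRun
  have low₂ := FreeRun.le_cross_disp hE hf hpos rest.source.2 rest.freeRun
  rw [first.key_eq, AddMonoidHom.id_apply, map_add, add_sub_cancel_left, abs_le] at hw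
  rw [disp_append, map_add]
  zify at hB
  by_contra! hlt
  exact hw ⟨by linarith, by linarith⟩

lemma LeavesStrips.exists_cross_ne_zero (hE : OfSize E Q b) (hns : LeavesStrips E b B p u π q v)
    (hb : 0 < b) (hB : 2 * (b * b) * (b * b) < B) (hp : p ∈ Q) (h : NatRun E p u π q v) :
    ∃ x ∈ cycleVectors E b, ∃ y ∈ cycleVectors E b, cross x y ≠ 0 := by
  have not_parallel : ∀ f : Vec 2, f ≠ 0 → (∀ i, |f i| ≤ (b * b : ℤ)) →
      ¬ ∀ c ∈ cycleVectors E b, cross f c = 0 := by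
    intro f hf₀ hf hzero
    have pos := hns.le_cross_disp hE hB.le hf₀ hf (fun c hc => (hzero c hc).ge) hp h
    have neg := hns.le_cross_disp hE hB.le (neg_ne_zero.2 hf₀) (by simpa using hf)
      (fun c hc => by simp [hzero c hc]) hp h
    rw [map_neg, AddMonoidHom.neg_apply] at neg
    zify at hB
    linarith
  by_contra! parallel
  by_cases hzero : ∀ c ∈ cycleVectors E b, c = 0
  · refine not_parallel (fun _ => 1) (fun h => one_ne_zero (congrFun h 0)) (fun _ => ?_)
      fun c hc => by rw [hzero c hc, map_zero]
    rw [abs_one]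
    exact_mod_cast Nat.mul_pos hb hb
  · push Not at hzero
    obtain ⟨c, hc, hc₀⟩ := hzero
    exact not_parallel c hc₀ (mem_cycleVectors.1 hc).1 (parallel c hc)

end CycleVectors

section Tour

variable {E : Set (Trans 2)} {C : Finset (Vec 2)} {detour : Vec 2 → Vec 2} {b L p : ℕ}

lemma exists_loop_of_excursions (hC : ∀ c ∈ C, Excursion E p L c (detour c)) {n : Vec 2 → ℕ}
    {N : ℕ} (hn : ∀ c ∈ C, n c ≤ N) :
    ∃ π, FreeRun E p π p ∧ disp π = ∑ c ∈ C, (detour c + n c • c) ∧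
      π.length ≤ C.card * ((N + 2) * L) := by
  classical
  induction C using Finset.induction_on with
  | empty => exact ⟨[], .refl trivial, by simp, by simp⟩
  | insert c C hc ih =>
    obtain ⟨hcExc, hC⟩ := Finset.forall_mem_insert _ _ _ |>.1 hC
    obtain ⟨hcn, hn⟩ := Finset.forall_mem_insert _ _ _ |>.1 hn
    obtain ⟨π, hπ, dπ, lπ⟩ := ih hC hn
    obtain ⟨σ, hσ, dσ, lσ⟩ := hcExc.exists_loop (n c)
    refine ⟨σ ++ π, hσ.trans hπ, ?_, ?_⟩
    · rw [disp_append, Finset.sum_insert hc, dπ, dσ]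
    · rw [List.length_append, Finset.card_insert_of_notMem hc, add_mul, one_mul]
      linarith [Nat.mul_le_mul_right L (Nat.add_le_add_right hcn 2)]

/-- Displacement of a tour through all cycles in `C` that takes each of them `J` times. -/
def tourDisp (C : Finset (Vec 2)) (detour : Vec 2 → Vec 2) (J : ℕ) : Vec 2 :=
  ∑ c ∈ C, (detour c + J • c)

/- Running every cycle `J` times leaves room to run any of them up to `J` times less or more. -/
lemma exists_tour (hC : ∀ c ∈ C, Excursion E p L c (detour c)) {R W J : ℕ}
    (hR : ∀ c ∈ C, ∀ i, |c i| ≤ (R : ℤ)) (hind : ∃ x ∈ C, ∃ y ∈ C, cross x y ≠ 0)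
    (hJ : coeffBound R W C.card ≤ J) {ρ : Vec 2} (hρ : ρ ∈ Submodule.span ℤ (C : Set (Vec 2)))
    (hW : ∀ i, |ρ i| ≤ (W : ℤ)) :
    ∃ π, FreeRun E p π p ∧ disp π = tourDisp C detour J + ρ ∧
      π.length ≤ C.card * ((2 * J + 2) * L) := by
  obtain ⟨a, rfl, ha⟩ := exists_small_coefficients hR hind hρ hW
  have room (c : Vec 2) := abs_le.1 ((ha c).trans (Int.ofNat_le.2 hJ))
  obtain ⟨π, hπ, dπ, lπ⟩ := exists_loop_of_excursions (n := fun c => (J + a c).toNat)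
    (N := 2 * J) hC fun c _ => by have := room c; omega
  refine ⟨π, hπ, ?_, lπ⟩
  rw [dπ, tourDisp, ← Finset.sum_add_distrib]
  refine Finset.sum_congr rfl fun c _ => ?_
  rw [add_assoc, ← natCast_zsmul, ← natCast_zsmul, ← add_smul,
    Int.toNat_of_nonneg (by linarith [room c])]

lemma abs_tourDisp_le {R J : ℕ} (hb : StepBounded E b)
    (hC : ∀ c ∈ C, Excursion E p L c (detour c)) (hR : ∀ c ∈ C, ∀ i, |c i| ≤ (R : ℤ)) (i : Fin 2) :
    |tourDisp C detour J i| ≤ C.card * (2 * (L * b) + J * R : ℤ) := by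
  refine abs_sum_apply_le C _ (fun c hc i => ?_) i
  simp only [Pi.add_apply, nsmul_eq_mul, Pi.mul_apply, Pi.natCast_apply]
  have hJ := abs_mul_le_of_abs_le (Nat.abs_cast J : |(J : ℤ)| = J).le (hR c hc i)
  linarith [abs_add_le (detour c i) (J * c i), (hC c hc).abs_detour_le hb i]

/- The loop and the two excursions form a scheme whose cycles move every coordinate in the same
direction. -/
lemma Excursion.compressible {x y s₁ s₂ w w' : Vec 2} {N m n : ℕ} {π : List (Trans 2)}
    (hb : StepBounded E b) (hx : Excursion E p L x s₁) (hy : Excursion E p L y s₂)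
    (same_sign : ∀ i, 0 ≤ x i * y i) (hπ : FreeRun E p π p) (lπ : π.length ≤ N)
    (hw : ∀ i, (6 * ((N + 2 * L) * b) : ℤ) ≤ w i) (hw' : ∀ i, (6 * ((N + 2 * L) * b) : ℤ) ≤ w' i)
    (hdisp : w' = w + disp π + s₁ + s₂ + (m • x + n • y)) :
    Compressible E 2 (5 * (N + 2 * L)) p w p w' := by
  obtain ⟨r₁, out₁, β₁, back₁, hout₁, hβ₁, hback₁, ne₁, lout₁, lβ₁, lback₁, rfl, rfl⟩ := hx
  obtain ⟨r₂, out₂, β₂, back₂, hout₂, hβ₂, hback₂, ne₂, lout₂, lβ₂, lback₂, rfl, rfl⟩ := hy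
  let S : TwoCycleScheme E (0 : Vec 2 →+ Unit) (fun _ _ => True) (N + 2 * L) p 0 p 0 :=
    { pre_run := hπ.trans hout₁
      cyc₁_run := hβ₁
      mid_run := hback₁.trans hout₂
      cyc₂_run := hβ₂
      post_run := hback₂
      cyc₁_ne_nil := ne₁
      cyc₂_ne_nil := ne₂
      pre_length := by rw [List.length_append]; omega
      cyc₁_length := by omega
      mid_length := by rw [List.length_append]; omega
      cyc₂_length := by omega
      post_length := by omega }
  refine S.compressible m n hb (guards_univ _ _) le_rfl rfl ?_ (fun i _ => ?_) (fun i _ => ?_)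
    fun i _ => ?_
  · rw [hdisp, TwoCycleScheme.displacement, disp_append, disp_append]
    abel
  · push_cast; linarith [hw i]
  · push_cast; linarith [hw' i]
  · rcases mul_nonneg_iff.1 (same_sign i) with ⟨h₁, h₂⟩ | ⟨h₁, h₂⟩
    · exact .inl ⟨by simpa using mul_nonneg (Int.natCast_nonneg m) h₁,
        by simpa using mul_nonneg (Int.natCast_nonneg n) h₂⟩
    · exact .inr ⟨mul_nonpos_of_nonneg_of_nonpos (Int.natCast_nonneg m) h₁,
        mul_nonpos_of_nonneg_of_nonpos (Int.natCast_nonneg n) h₂⟩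

end Tour

/-- Length of the excursions to the two cycles of the scheme in `Compressible.of_interior`. -/
def coneLength (b : ℕ) : ℕ := quadrantLength b b

/-- How often a tour has to take every short cycle in order to be adjustable. -/
def tourCount (b : ℕ) : ℕ := coeffBound (b * b) (6 * (coneLength b * b)) (cycleVectorCount b)

/-- Bound on the length of an adjusted tour. -/
def tourLength (b : ℕ) : ℕ := cycleVectorCount b * ((2 * tourCount b + 2) * b)

/-- Length of the paths and cycles of the scheme in `Compressible.of_interior`. -/
def interiorLength (b : ℕ) : ℕ := tourLength b + 2 * coneLength b

/-- Height of the ends of the runs in `Compressible.of_interior`. -/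
def interiorHeight (b : ℕ) : ℕ := 6 * (interiorLength b * b)

section Interior

variable {E : Set (Trans 2)} {Q : Finset ℕ} {b p : ℕ} {u v w w' : Vec 2} {π : List (Trans 2)}
  {detour : Vec 2 → Vec 2}

/- After a full tour, the rest of the displacement is approximated in the cone of two cycles. The
error is small and in the lattice of the cycles, so it is corrected by adjusting the tour. -/
lemma Compressible.of_interior (hE : OfSize E Q b) (hp : p ∈ Q)
    (hdetour : ∀ c ∈ cycleVectors E b, Excursion E p b c (detour c))
    (hind : ∃ x ∈ cycleVectors E b, ∃ y ∈ cycleVectors E b, cross x y ≠ 0)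
    (hw : ∀ i, (interiorHeight b : ℤ) ≤ w i) (hw' : ∀ i, (interiorHeight b : ℤ) ≤ w' i)
    (lattice : w' - w ∈ Submodule.span ℤ (cycleVectors E b : Set (Vec 2)))
    (supported : ∀ f, f ∈ cycleVectors E b ∨ -f ∈ cycleVectors E b →
      (∀ c ∈ cycleVectors E b, 0 ≤ cross f c) →
      0 ≤ cross f (w' - w - tourDisp (cycleVectors E b) detour (tourCount b))) :
    Compressible E 2 (5 * interiorLength b) p w p w' := by
  set C := cycleVectors E b
  set tour := tourDisp C detour (tourCount b) with htour
  have hR : ∀ c ∈ C, ∀ i, |c i| ≤ ((b * b : ℕ) : ℤ) := fun c hc i =>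
    mod_cast (mem_cycleVectors.1 hc).1 i
  obtain ⟨c₁, hc₁, c₂, hc₂, cone⟩ := exists_inCone hind supported
  obtain ⟨x, s₁, y, s₂, hx, hy, cone, same_sign⟩ :=
    (hdetour c₁ hc₁).exists_same_sign hE.stepBounded (hdetour c₂ hc₂) cone
  obtain ⟨m, n, approx⟩ := cone.exists_nat_approximation
    (hx.abs_cycle_le hE.stepBounded) (hy.abs_cycle_le hE.stepBounded)
  set ρ := w' - w - tour - (m • x + n • y) - s₁ - s₂ with hρ
  have tour_mem : tour ∈ Submodule.span ℤ (C : Set (Vec 2)) :=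
    Submodule.sum_mem _ fun c hc => Submodule.add_mem _ ((hdetour c hc).detour_mem_span hE hp)
      (nsmul_mem (Submodule.subset_span hc) _)
  have ρ_mem : ρ ∈ Submodule.span ℤ (C : Set (Vec 2)) :=
    sub_mem (sub_mem (sub_mem (sub_mem lattice tour_mem)
      (add_mem (nsmul_mem (hx.cycle_mem_span hE hp) m) (nsmul_mem (hy.cycle_mem_span hE hp) n)))
      (hx.detour_mem_span hE hp)) (hy.detour_mem_span hE hp)
  have ρ_small : ∀ i, |ρ i| ≤ ((6 * (coneLength b * b) : ℕ) : ℤ) := fun i => by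
    rw [hρ, Pi.sub_apply, Pi.sub_apply, coneLength]
    have h₁ := abs_le.1 (hx.abs_detour_le hE.stepBounded i)
    have h₂ := abs_le.1 (hy.abs_detour_le hE.stepBounded i)
    have h₃ := abs_le.1 (approx i)
    push_cast
    exact abs_le.2 ⟨by linarith, by linarith⟩
  obtain ⟨π, hπ, dπ, lπ⟩ := exists_tour hdetour hR hind
    (coeffBound_mono _ _ (card_cycleVectors_le E b)) ρ_mem ρ_small
  refine hx.compressible hE.stepBounded hy same_sign hπ
    (lπ.trans (Nat.mul_le_mul_right _ (card_cycleVectors_le E b)))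
    (fun i => by exact_mod_cast hw i) (fun i => by exact_mod_cast hw' i) (m := m) (n := n) ?_
  rw [dπ, ← tourCount, ← htour, hρ]
  abel

/-- Length of the runs that lead from the source to the interior and from there to the target. -/
def accessLength (b : ℕ) : ℕ := entryLength b (interiorHeight b)

/-- Bound on the displacement that a run spends on entering, touring and leaving the interior. -/
def overhead (b : ℕ) : ℕ :=
  2 * (accessLength b * b) + cycleVectorCount b * (2 * (b * b) + tourCount b * (b * b))

/-- A closed run that stays in no strip of this width is compressed via the interior. -/
def stripWidth (b : ℕ) : ℕ :=
  entryHeight b (interiorHeight b) + 2 * (b * b) * (b * b) + 2 * (b * b) * overhead b + 1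

lemma LeavesStrips.not_low {B D q : ℕ} (hns : LeavesStrips E b B p u π q v) (hb : 0 < b)
    (hD : D ≤ B) (i : Fin 2) :
    ¬ KeyedRun E (AddMonoidHom.id _) (fun _ w => 0 ≤ w ∧ w i < D) p u π q v := by
  intro low
  have abs_cross (x : Vec 2) : |cross (Pi.single i.rev 1) x| = |x i| := by
    fin_cases i <;> simp [cross_apply]
  refine hns (Pi.single i.rev 1) (by simp) (fun j => ?_) 0 (low.weaken fun _ x hx => ⟨hx.1, ?_⟩)
  · have : (0 : ℤ) < b * b := by positivity
    rw [Pi.single_apply]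
    split_ifs
    · rwa [abs_one]
    · rw [abs_zero]; exact this.le
  · rw [sub_zero, abs_cross, abs_of_nonneg (hx.1 i)]
    exact hx.2.le.trans (Int.ofNat_le.2 hD)

lemma LeavesStrips.cross_nonneg (hE : OfSize E Q b)
    (hns : LeavesStrips E b (stripWidth b) p u π p v) (hp : p ∈ Q) (h : NatRun E p u π p v)
    {z : Vec 2} (hz : ∀ i, |z i| ≤ (overhead b : ℤ))
    {f : Vec 2} (hf : f ∈ cycleVectors E b ∨ -f ∈ cycleVectors E b)
    (hpos : ∀ c ∈ cycleVectors E b, 0 ≤ cross f c) : 0 ≤ cross f (disp π - z) := by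
  rcases eq_or_ne f 0 with rfl | hf₀
  · simp
  have f_small : ∀ i, |f i| ≤ (b * b : ℤ) := by
    rcases hf with hf | hf
    · exact (mem_cycleVectors.1 hf).1
    · simpa using (mem_cycleVectors.1 hf).1
  have far := hns.le_cross_disp hE (by rw [stripWidth]; omega) hf₀ f_small hpos hp h
  have near := le_of_abs_le (abs_cross_le f_small hz)
  rw [stripWidth] at far
  push_cast at far
  rw [map_sub]
  linarith [Int.natCast_nonneg (entryHeight b (interiorHeight b))]

theorem LeavesStrips.compressible (hE : OfSize E Q b)
    (hns : LeavesStrips E b (stripWidth b) p u π p v) (hp : p ∈ Q)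
    (hconn : StronglyConnectedAt E p) (h : NatRun E p u π p v) :
    Compressible E 2 (2 * accessLength b + 5 * interiorLength b) p u p v := by
  have hb : 0 < b := (Finset.card_pos.2 ⟨p, hp⟩).trans_le hE.card_le
  have not_low := hns.not_low hb (D := entryHeight b (interiorHeight b)) (by rw [stripWidth]; omega)
  obtain ⟨w, α, hα, lα, hw⟩ := NatRun.exists_entry hE hp h not_low
  obtain ⟨w', γ, hγ, lγ, hw'⟩ := NatRun.exists_exit hE hp h not_low
  have : ∀ c ∈ cycleVectors E b, ∃ s, Excursion E p b c s := fun c hc => by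
    obtain ⟨-, c, hcycle, rfl⟩ := mem_cycleVectors.1 hc
    exact ShortCycle.exists_excursion hE hp hconn hcycle
  choose! detour hdetour using this
  have hdisp : w' - w = disp π - (disp α + disp γ) := by
    linear_combination h.disp_eq - hα.disp_eq - hγ.disp_eq
  refine ((Compressible.of_run hα lα).trans (.of_interior hE hp hdetour
    (hns.exists_cross_ne_zero hE hb (by rw [stripWidth]; omega) hp h) hw hw' ?_ ?_)).trans
    (.of_run hγ lγ) |>.of_le le_rfl (by rw [accessLength]; omega)
  · rw [hdisp]
    exact sub_mem (FreeRun.disp_mem_span hE hp h.freeRun)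
      (add_mem (FreeRun.disp_mem_span hE hp hα.freeRun) (FreeRun.disp_mem_span hE hp hγ.freeRun))
  · intro f hf hpos
    rw [hdisp, sub_sub]
    refine hns.cross_nonneg hE hp h (fun i => ?_) hf hpos
    have tour := abs_tourDisp_le (R := b * b) (J := tourCount b) hE.stepBounded hdetour
      (fun c hc i => mod_cast (mem_cycleVectors.1 hc).1 i) i
    grw [card_cycleVectors_le] at tour
    have entry := hE.stepBounded.abs_disp_le hα.mem lα i
    have exit := hE.stepBounded.abs_disp_le hγ.mem lγ i
    rw [overhead, accessLength, Pi.add_apply, Pi.add_apply]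
    push_cast at tour ⊢
    linarith [abs_add_three (disp α i) (disp γ i)
      (tourDisp (cycleVectors E b) detour (tourCount b) i)]

end Interior

/-! ### Closed runs and chaining -/

section Chaining

variable {E : Set (Trans 2)} {Q : Finset ℕ} {b p q : ℕ} {u v : Vec 2} {π : List (Trans 2)}

lemma OfSize.mono {d : ℕ} {E E' : Set (Trans d)} {Q : Finset ℕ} {b : ℕ} (hE : OfSize E Q b)
    (hE' : ∀ t ∈ E', t ∈ E) : OfSize E' Q b where
  source_mem t ht := hE.source_mem t (hE' t ht)
  target_mem t ht := hE.target_mem t (hE' t ht)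
  card_le := hE.card_le
  stepBounded t ht := hE.stepBounded t (hE' t ht)

lemma NatRun.stronglyConnectedAt {d : ℕ} {p : ℕ} {u v : Vec d} {π : List (Trans d)}
    (h : NatRun {t | t ∈ π} p u π p v) : StronglyConnectedAt {t | t ∈ π} p := by
  intro t ht
  obtain ⟨π₁, π₂, hπ⟩ := List.append_of_mem (show t ∈ π from ht)
  generalize {t | t ∈ π} = E at h ⊢
  subst hπ
  obtain ⟨r, w, h₁, h₂⟩ := KeyedRun.append_iff.1 h
  obtain rfl : t.1 = r := h₂.2.2.1
  exact ⟨⟨π₁, h₁.freeRun⟩, ⟨t :: π₂, h₂.freeRun⟩⟩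

/-- Length of the schemes for closed runs. -/
def closedRunLength (b : ℕ) : ℕ :=
  stripLength b (b * b) (stripWidth b) + (2 * accessLength b + 5 * interiorLength b)

lemma NatRun.compressible_of_closed (hE : OfSize E Q b) (hp : p ∈ Q) (h : NatRun E p u π p v) :
    Compressible E 2 (closedRunLength b) p u p v := by
  have hE' := hE.mono (E' := {t | t ∈ π}) h.mem
  have h' : NatRun {t | t ∈ π} p u π p v :=
    h.map id (fun _ _ => rfl) (fun _ _ hw => hw) fun _ ht _ => ht
  suffices Compressible {t | t ∈ π} 2 (closedRunLength b) p u p v from this.mono h.mem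
  by_cases hns : LeavesStrips {t | t ∈ π} b (stripWidth b) p u π p v
  · exact (hns.compressible hE' hp h'.stronglyConnectedAt h').of_le le_rfl (Nat.le_add_left _ _)
  · unfold LeavesStrips at hns
    push Not at hns
    obtain ⟨f, hf, hfb, g, hstrip⟩ := hns
    exact (hstrip.compressible_of_strip hE' hf (mod_cast hfb) hp).of_le le_rfl
      (Nat.le_add_right _ _)

/- After its last visit to the initial state the run avoids that state, so `W` loses an element. -/
lemma NatRun.compressible_of_states (hE : OfSize E Q b) {W : Finset ℕ} (hW : W ⊆ Q)
    (h : KeyedRun E (AddMonoidHom.id _) (fun s w => 0 ≤ w ∧ s ∈ W) p u π q v) :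
    Compressible E (2 * W.card) (W.card * (closedRunLength b + 1)) p u q v := by
  induction W using Finset.strongInduction generalizing p u π with
  | H W ih =>
    have hp := h.source.2
    have card_W := Finset.card_erase_add_one hp
    have length_W : W.card * (closedRunLength b + 1) =
        (W.erase p).card * (closedRunLength b + 1) + (closedRunLength b + 1) := by
      rw [← card_W, add_one_mul]
    rcases h.exists_last fun s _ => s = p with avoids | ⟨s, w, π₁, rfl, closed, final⟩
    · exact absurd rfl avoids.source.2
    have loop := NatRun.compressible_of_closed hE (hW hp) (closed.weaken fun _ _ hw => hw.1)
    rcases final with ⟨rfl, rfl⟩ | ⟨t, ht, rfl, π₂, rest⟩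
    · exact loop.of_le (by omega) (by omega)
    have leave : Compressible E 0 1 t.1 w t.2.2 (w + t.2.1) :=
      .of_run (KeyedRun.singleton ht closed.target.1 rest.source.1.1) le_rfl
    have tail := ih (W.erase t.1) (Finset.erase_ssubset hp) ((Finset.erase_subset _ _).trans hW)
      (rest.weaken fun _ _ hw => ⟨hw.1.1, Finset.mem_erase.2 ⟨hw.2, hw.1.2⟩⟩)
    exact (loop.trans (leave.trans tail)).of_le (by omega) (by omega)

end Chaining

/-! ### Polynomial bounds -/

/-- Bounded by a power of the argument; the arguments `0` and `1`, whose powers do not grow, are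
left out. -/
@[fun_prop]
def PolynomiallyBounded (f : ℕ → ℕ) : Prop := ∃ c, ∀ b, 2 ≤ b → f b ≤ b ^ c

section Polynomial

variable {f g h : ℕ → ℕ}

@[fun_prop]
lemma polynomiallyBounded_id : PolynomiallyBounded fun b => b := ⟨1, fun b _ => (pow_one b).ge⟩

@[fun_prop]
lemma polynomiallyBounded_const (k : ℕ) : PolynomiallyBounded fun _ => k :=
  ⟨k, fun _ hb => (Nat.lt_pow_self hb).le⟩

@[fun_prop]
lemma PolynomiallyBounded.mul (hf : PolynomiallyBounded f) (hg : PolynomiallyBounded g) :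
    PolynomiallyBounded fun b => f b * g b := by
  obtain ⟨c, hc⟩ := hf
  obtain ⟨e, he⟩ := hg
  exact ⟨c + e, fun b hb => (Nat.mul_le_mul (hc b hb) (he b hb)).trans_eq (pow_add b c e).symm⟩

@[fun_prop]
lemma PolynomiallyBounded.add (hf : PolynomiallyBounded f) (hg : PolynomiallyBounded g) :
    PolynomiallyBounded fun b => f b + g b := by
  obtain ⟨c, hc⟩ := hf
  obtain ⟨e, he⟩ := hg
  refine ⟨c + e + 1, fun b hb => ?_⟩
  calc f b + g b ≤ b ^ (c + e) + b ^ (c + e) := by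
        grw [hc b hb, he b hb]
        gcongr <;> omega
    _ = b ^ (c + e) * 2 := by ring
    _ ≤ b ^ (c + e + 1) := by rw [pow_succ]; gcongr

@[fun_prop]
lemma PolynomiallyBounded.pow (hf : PolynomiallyBounded f) (n : ℕ) :
    PolynomiallyBounded fun b => f b ^ n := by
  obtain ⟨c, hc⟩ := hf
  exact ⟨c * n, fun b hb => (Nat.pow_le_pow_left (hc b hb) n).trans_eq (pow_mul b c n).symm⟩

@[fun_prop]
lemma PolynomiallyBounded.middleLength (hf : PolynomiallyBounded f)
    (hg : PolynomiallyBounded g) : PolynomiallyBounded fun b => middleLength (f b) (g b) := by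
  unfold VASS.middleLength
  fun_prop

@[fun_prop]
lemma PolynomiallyBounded.stripLength (hf : PolynomiallyBounded f) (hg : PolynomiallyBounded g)
    (hh : PolynomiallyBounded h) : PolynomiallyBounded fun b => stripLength (f b) (g b) (h b) := by
  unfold VASS.stripLength stripDepth middleDepth stripStates
  fun_prop

@[fun_prop]
lemma PolynomiallyBounded.axisCoeff (hf : PolynomiallyBounded f) (hg : PolynomiallyBounded g) :
    PolynomiallyBounded fun b => axisCoeff (f b) (g b) := by
  unfold VASS.axisCoeff axisStretch
  fun_prop

@[fun_prop]
lemma PolynomiallyBounded.axisLength (hf : PolynomiallyBounded f) (hg : PolynomiallyBounded g) :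
    PolynomiallyBounded fun b => axisLength (f b) (g b) := by
  unfold VASS.axisLength
  fun_prop

@[fun_prop]
lemma PolynomiallyBounded.entryHeight (hf : PolynomiallyBounded f) (hg : PolynomiallyBounded g) :
    PolynomiallyBounded fun b => entryHeight (f b) (g b) := by
  unfold VASS.entryHeight climbHeight
  fun_prop

@[fun_prop]
lemma polynomiallyBounded_coneLength : PolynomiallyBounded coneLength := by
  unfold coneLength quadrantLength
  fun_prop

@[fun_prop]
lemma polynomiallyBounded_cycleVectorCount : PolynomiallyBounded cycleVectorCount := by
  unfold cycleVectorCount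
  fun_prop

@[fun_prop]
lemma polynomiallyBounded_tourCount : PolynomiallyBounded tourCount := by
  unfold tourCount coeffBound
  fun_prop

@[fun_prop]
lemma polynomiallyBounded_interiorLength : PolynomiallyBounded interiorLength := by
  unfold interiorLength tourLength
  fun_prop

@[fun_prop]
lemma polynomiallyBounded_interiorHeight : PolynomiallyBounded interiorHeight := by
  unfold interiorHeight
  fun_prop

@[fun_prop]
lemma polynomiallyBounded_accessLength : PolynomiallyBounded accessLength := by
  unfold accessLength entryLength
  fun_prop

@[fun_prop]
lemma polynomiallyBounded_stripWidth : PolynomiallyBounded stripWidth := by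
  unfold stripWidth overhead
  fun_prop

@[fun_prop]
lemma polynomiallyBounded_closedRunLength : PolynomiallyBounded closedRunLength := by
  unfold closedRunLength
  fun_prop

end Polynomial

/-! ### Reachability in `ℕ²` -/

lemma finite_lists_of_length_le {α : Type*} {S : Set α} (hS : S.Finite) (n : ℕ) :
    {l : List α | l.length ≤ n ∧ ∀ x ∈ l, x ∈ S}.Finite := by
  have : Finite S := hS
  refine ((List.finite_length_le S n).image (List.map Subtype.val)).subset ?_
  rintro l ⟨hlen, hmem⟩
  lift l to List S using hmem
  exact ⟨l, by simpa using hlen, rfl⟩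

lemma finite_lps {d : ℕ} (T : Finset (Trans d)) (L k : ℕ) :
    {ρ : LPS d | (∃ p q, IsLPSFrom T p q ρ) ∧ lpsLen ρ ≤ L ∧ numCycles ρ ≤ k}.Finite := by
  have finite_paths := finite_lists_of_length_le T.finite_toSet L
  refine (finite_paths.prod
    (finite_lists_of_length_le (finite_paths.prod finite_paths) k)).subset ?_
  rintro ρ ⟨⟨p, q, hmem, -⟩, hlen, hcyc⟩
  have piece {π : List (Trans d)} (hπ : π.Sublist (lpsSupport ρ)) :
      π.length ≤ L ∧ ∀ t ∈ π, t ∈ (T : Set (Trans d)) :=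
    ⟨hπ.length_le.trans hlen, fun t ht => hmem t (hπ.subset ht)⟩
  have block {s} (hs : s ∈ ρ.2) : (s.1 ++ s.2).Sublist (lpsSupport ρ) :=
    .trans (List.sublist_flatten_of_mem (List.mem_map.2 ⟨s, hs, rfl⟩))
      (List.sublist_append_right _ _)
  exact ⟨piece (List.sublist_append_left _ _), hcyc, fun s hs =>
    ⟨piece ((List.sublist_append_left _ _).trans (block hs)),
      piece ((List.sublist_append_right _ _).trans (block hs))⟩⟩

lemma stepBounded_tnorm {d : ℕ} (T : Finset (Trans d)) :
    StepBounded (T : Set (Trans d)) (tnorm T) := by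
  intro t ht i
  have entry_le : (t.2.1 i).natAbs ≤ vnorm t.2.1 :=
    Finset.le_sup (f := fun i => (t.2.1 i).natAbs) (Finset.mem_univ i)
  have norm_le : vnorm t.2.1 ≤ tnorm T :=
    Finset.le_sup (f := fun t : Trans d => vnorm t.2.1) (Finset.mem_coe.1 ht)
  rw [Int.abs_eq_natAbs]
  exact_mod_cast entry_le.trans norm_le

lemma ofSize_card_add_tnorm {d : ℕ} {Q : Finset ℕ} {T : Finset (Trans d)}
    (hT : ∀ t ∈ T, t.1 ∈ Q ∧ t.2.2 ∈ Q) : OfSize (T : Set (Trans d)) Q (Q.card + tnorm T) where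
  source_mem t ht := (hT t ht).1
  target_mem t ht := (hT t ht).2
  card_le := Nat.le_add_right _ _
  stepBounded t ht i := (stepBounded_tnorm T t ht i).trans (by push_cast; omega)

lemma NatRun.eq_of_stepBounded_zero {d : ℕ} {E : Set (Trans d)} {π : List (Trans d)} {p q : ℕ}
    {u v : Vec d} (hE : StepBounded E 0) (h : NatRun E p u π q v) : v = u := by
  have : disp π = 0 := funext fun i => by simpa using hE.abs_disp_le h.mem le_rfl i
  rw [h.disp_eq, this, add_zero]

/- The size of the system is `1` only if there is one state and all updates vanish; its powers are
then `1`, too small for the general bound. -/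
lemma exists_compressible_pow : ∃ c : ℕ, ∀ (Q : Finset ℕ) (T : Finset (Trans 2)),
    (∀ t ∈ T, t.1 ∈ Q ∧ t.2.2 ∈ Q) → ∀ {p q : ℕ} {u v : Vec 2} {π},
      p ∈ Q → NatRun T p u π q v →
        Compressible (T : Set (Trans 2)) (2 * Q.card) ((Q.card + tnorm T) ^ c) p u q v := by
  obtain ⟨c, hc⟩ : PolynomiallyBounded fun b => b * (closedRunLength b + 1) := by fun_prop
  refine ⟨c, fun Q T hT p q u v π hp h => ?_⟩
  have hE := ofSize_card_add_tnorm hT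
  have h' := h.with_states hE.target_mem hp
  rcases le_or_gt 2 (Q.card + tnorm T) with hb | hb
  · exact (NatRun.compressible_of_states hE subset_rfl h').of_le le_rfl
      ((Nat.mul_le_mul_right _ hE.card_le).trans (hc _ hb))
  · have := Finset.card_pos.2 ⟨p, hp⟩
    obtain rfl : p = q := Finset.card_le_one.1 (by omega) p hp q h'.target.2
    have hzero : tnorm T = 0 := by omega
    obtain rfl := h.eq_of_stepBounded_zero (hzero ▸ stepBounded_tnorm T)
    exact .nil h.source

theorem statement4_general :
    ∃ c : ℕ, ∀ (Q : Finset ℕ) (T : Finset (Trans 2)),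
      (∀ t ∈ T, t.1 ∈ Q ∧ t.2.2 ∈ Q) →
      ∃ X : Finset (LPS 2),
        (∀ ρ ∈ X, ∃ p q, IsLPSFrom T p q ρ) ∧
        (∀ p ∈ Q, ∀ (q : ℕ) (u v : Vec 2),
          Reach T (NatSet 2) p u q v ↔ SReach T X (NatSet 2) p u q v) ∧
        (∀ ρ ∈ X, lpsLen ρ ≤ (Q.card + tnorm T) ^ c) ∧
        (∀ ρ ∈ X, numCycles ρ ≤ 2 * Q.card) := by
  obtain ⟨c, hc⟩ := exists_compressible_pow
  refine ⟨c, fun Q T hT => ?_⟩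
  let schemes := finite_lps T ((Q.card + tnorm T) ^ c) (2 * Q.card)
  have mem_schemes {ρ} : ρ ∈ schemes.toFinset ↔ (∃ p q, IsLPSFrom T p q ρ) ∧
      lpsLen ρ ≤ (Q.card + tnorm T) ^ c ∧ numCycles ρ ≤ 2 * Q.card := schemes.mem_toFinset
  refine ⟨schemes.toFinset, fun ρ hρ => (mem_schemes.1 hρ).1, fun p hp q u v => ⟨?_, ?_⟩,
    fun ρ hρ => (mem_schemes.1 hρ).2.1, fun ρ hρ => (mem_schemes.1 hρ).2.2⟩
  · rintro ⟨π, hπ⟩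
    obtain ⟨ρ, σ, hρ, hcyc, hlen, hσ, hrun⟩ := (hc Q T hT hp (run_natSet_iff.1 hπ)).exists_lps
    exact ⟨ρ, mem_schemes.2 ⟨⟨p, q, hρ⟩, hlen, hcyc⟩, σ, hσ, run_natSet_iff.2 hrun⟩
  · rintro ⟨-, -, π, -, hπ⟩
    exact ⟨π, hπ⟩

/-- Proposition, part (b). Reachability of a 2-VASS via runs
staying entirely in the region `O = [D,∞)²` is captured by small linear path
schemes (evaluated over ℕ²) with at most `2·|Q|` cycles. -/
theorem statement4 :
    ∃ c₁ c₂ : ℕ, ∀ (Q : Finset ℕ) (T : Finset (Trans 2)),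
      (∀ t ∈ T, t.1 ∈ Q ∧ t.2.2 ∈ Q) →
      ∃ D : ℕ, D ≤ (Q.card + tnorm T) ^ c₁ ∧
      ∃ X : Finset (LPS 2),
        (∀ ρ ∈ X, ∃ p q, IsLPSFrom T p q ρ) ∧
        (∀ p ∈ Q, ∀ q ∈ Q, ∀ u v : Vec 2,
          (∀ i, (D : ℤ) ≤ u i) → (∀ i, (D : ℤ) ≤ v i) →
          (Reach T {w : Vec 2 | ∀ i, (D : ℤ) ≤ w i} p u q v ↔
            SReach T X (NatSet 2) p u q v)) ∧
        (∀ ρ ∈ X, lpsLen ρ ≤ (Q.card + tnorm T) ^ c₂) ∧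
        (∀ ρ ∈ X, numCycles ρ ≤ 2 * Q.card) := by
  obtain ⟨c, hc⟩ := statement4_general
  refine ⟨0, c, fun Q T hT => ⟨0, Nat.zero_le _, ?_⟩⟩
  obtain ⟨X, hX, hreach, hlen, hcyc⟩ := hc Q T hT
  exact ⟨X, hX, fun p hp q _ u v _ _ => hreach p hp q u v, hlen, hcyc⟩

end VASS
end

section
/- There exists a constant c ∈ ℕ such that the following holds. Let b ∈ ℤ², let P ⊆ ℤ² be a finite set with b ∈ P, and let Z be a quadrant. Then there exist a finite index set I and, for each i ∈ I, a vector c_i ∈ ℤ² and a finite set P_i ⊆ ℤ², such that L(b;P) ∩ Z = ⋃_{i∈I} L(c_i; P_i), and for each i ∈ I: (i) |P_i| ≤ 2; (ii) P_i ⊆ (P ∪ L(b;P)) ∩ Z; and (iii) there exists e ≤ (‖P‖+2)^c such that {c_i} ∪ (P_i ∩ L(b;P)) ⊆ b + cone_{[0,e]}(P). -/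
namespace LinSets

/-- Integer vectors of dimension 2. -/
abbrev Vec2 := Fin 2 → ℤ

/-- The norm of a vector: maximum of absolute values of its components. -/
def vnorm (z : Vec2) : ℕ := Finset.univ.sup fun i => (z i).natAbs

/-- The norm of a finite set of vectors. -/
def pnorm (P : Finset Vec2) : ℕ := P.sup vnorm

/-- The linear set `L(b;P) = b + cone_ℕ(P)`. -/
def LinSet (b : Vec2) (P : Finset Vec2) : Set Vec2 :=
  {v | ∃ lam : Vec2 → ℕ, v = b + ∑ p ∈ P, (lam p : ℤ) • p}

/-- `cone_{[0,e]}(P)`: non-negative integer combinations of `P` with all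
coefficients at most `e`. -/
def ConeLe (e : ℕ) (P : Finset Vec2) : Set Vec2 :=
  {v | ∃ lam : Vec2 → ℕ, (∀ p ∈ P, lam p ≤ e) ∧ v = ∑ p ∈ P, (lam p : ℤ) • p}

/-- A quadrant of ℤ². -/
def IsQuadrant (Z : Set Vec2) : Prop :=
  ∃ ε : Fin 2 → Bool, Z = {v | ∀ i, if ε i then 0 ≤ v i else v i ≤ 0}

/-!
Since `b ∈ P`, a vector of `L(b;P)` in the quadrant is a sum of elements of `P`. A Steinitz-type
rearrangement, carried out for one coordinate after the other, groups the summands into blocks of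
polynomial size whose sums all lie in the quadrant. The block containing `b` gives a base, the
other blocks give elements of a finite set `G` of small vectors of the quadrant. Let `q` and `r`
span the extreme rays of the cone of `G`, chosen in `P ∪ L(b;P)`. By Cramer's rule a common
multiple `D` brings every element of `G` into the monoid generated by `q` and `r`, so all but
fewer than `D` copies of each element of `G` are absorbed by these two periods.
-/

section Blocks

variable {α : Type*} {f : α → ℤ} {M : ℕ} {s : Multiset α}

theorem abs_sum_map_le (hf : ∀ a ∈ s, |f a| ≤ M) : |(s.map f).sum| ≤ M * s.card := by
  calc |(s.map f).sum| ≤ ((s.map f).map abs).sum := Multiset.abs_sum_le_sum_abs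
    _ ≤ ((s.map f).map abs).card • (M : ℤ) := Multiset.sum_le_card_nsmul _ _ (by simpa using hf)
    _ = M * s.card := by simp [mul_comm]

theorem exists_nonneg_of_sum_map_nonneg (hs : s ≠ 0) (hsum : 0 ≤ (s.map f).sum) :
    ∃ a ∈ s, 0 ≤ f a := by
  by_contra! hneg
  have hlt : (s.map f).sum < (s.map fun _ ↦ (0 : ℤ)).sum := Multiset.sum_lt_sum_of_nonempty hs hneg
  simp only [Multiset.sum_map_zero] at hlt
  omega

theorem exists_mem_abs_add_le_of_nonneg (hs : s ≠ 0) (hf : ∀ a ∈ s, |f a| ≤ M) {c : ℤ}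
    (hc : 0 ≤ c) (hcM : |c| ≤ M) (hsum : |c + (s.map f).sum| ≤ M) :
    ∃ a ∈ s, |c + f a| ≤ M := by
  by_cases hneg : ∃ a ∈ s, f a ≤ 0
  · obtain ⟨a, ha, hfa⟩ := hneg
    have := hf a ha
    exact ⟨a, ha, by grind⟩
  · push Not at hneg
    obtain ⟨a, ha⟩ := Multiset.exists_mem_of_ne_zero hs
    have hle : f a ≤ (s.map f).sum :=
      Multiset.single_le_sum (by simpa using fun b hb ↦ (hneg b hb).le) _
        (Multiset.mem_map_of_mem f ha)
    have := hneg a ha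
    exact ⟨a, ha, by grind⟩

theorem exists_mem_abs_add_le (hs : s ≠ 0) (hf : ∀ a ∈ s, |f a| ≤ M) {c : ℤ}
    (hc : |c| ≤ M) (hsum : |c + (s.map f).sum| ≤ M) : ∃ a ∈ s, |c + f a| ≤ M := by
  rcases le_total 0 c with h | h
  · exact exists_mem_abs_add_le_of_nonneg hs hf h hc hsum
  · obtain ⟨a, ha, hle⟩ := exists_mem_abs_add_le_of_nonneg (f := fun a ↦ -f a) hs
      (by simpa using hf) (c := -c) (by omega) (by rwa [abs_neg])
      (by rwa [Multiset.sum_map_neg, ← neg_add, abs_neg])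
    exact ⟨a, ha, by rwa [← neg_add, abs_neg] at hle⟩

/- One-dimensional Steinitz lemma: always append an element that pulls the running sum towards
zero. -/
theorem exists_list_abs_prefix_sum_le (hf : ∀ a ∈ s, |f a| ≤ M) {c : ℤ} (hc : |c| ≤ M)
    (hsum : |c + (s.map f).sum| ≤ M) :
    ∃ l : List α, (l : Multiset α) = s ∧ ∀ k, |c + ((l.take k).map f).sum| ≤ M := by
  induction s using Multiset.strongInductionOn generalizing c with
  | ih s ih =>
    rcases eq_or_ne s 0 with rfl | hs
    · exact ⟨[], rfl, by simpa using hc⟩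
    obtain ⟨a, ha, hca⟩ := exists_mem_abs_add_le hs hf hc hsum
    obtain ⟨s, rfl⟩ := Multiset.exists_cons_of_mem ha
    rw [Multiset.map_cons, Multiset.sum_cons, ← add_assoc] at hsum
    obtain ⟨l, rfl, hl⟩ := ih s (Multiset.lt_cons_self s a)
      (fun b hb ↦ hf b (Multiset.mem_cons_of_mem hb)) hca hsum
    refine ⟨a :: l, rfl, fun k ↦ ?_⟩
    cases k with
    | zero => simpa using hc
    | succ k => simpa [add_assoc] using hl k

theorem exists_lt_prefix_sum_eq (l : List α) (hl : ∀ k, |((l.take k).map f).sum| ≤ M) :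
    ∃ i j, i < j ∧ j ≤ 2 * M + 1 ∧ ((l.take i).map f).sum = ((l.take j).map f).sum := by
  have hcard : (Finset.Icc (-M : ℤ) M).card < (Finset.range (2 * M + 2)).card := by
    rw [Int.card_Icc, Finset.card_range]
    omega
  obtain ⟨i, hi, j, hj, hij, heq⟩ := Finset.exists_ne_map_eq_of_card_lt_of_maps_to hcard
    (f := fun k ↦ ((l.take k).map f).sum) fun k _ ↦ by simpa using abs_le.1 (hl k)
  rw [Finset.mem_range] at hi hj
  rcases hij.lt_or_gt with h | h
  · exact ⟨i, j, h, by omega, heq⟩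
  · exact ⟨j, i, h, by omega, heq.symm⟩

theorem exists_sum_map_eq_zero (hf : ∀ a ∈ s, |f a| ≤ M) (hsum : |(s.map f).sum| ≤ M)
    (hcard : 2 * M + 1 < s.card) :
    ∃ t ≤ s, t ≠ 0 ∧ t.card ≤ 2 * M + 1 ∧ (t.map f).sum = 0 := by
  obtain ⟨l, rfl, hl⟩ := exists_list_abs_prefix_sum_le hf (c := 0) (by simp) (by simpa using hsum)
  obtain ⟨i, j, hij, hj, heq⟩ := exists_lt_prefix_sum_eq l (by simpa using hl)
  rw [Multiset.coe_card] at hcard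
  have hlen : ((l.take j).drop i).length = j - i := by
    rw [List.length_drop, List.length_take_of_le (by omega)]
  have hsplit := congrArg (fun l ↦ (l.map f).sum) (List.take_append_drop i (l.take j))
  simp only [List.map_append, List.sum_append, List.take_take, min_eq_left hij.le] at hsplit
  refine ⟨((l.take j).drop i : List α),
    ((List.drop_sublist _ _).trans (List.take_sublist _ _)).subperm, ?_, ?_, ?_⟩
  · rw [← Multiset.card_pos, Multiset.coe_card]
    omega
  · rw [Multiset.coe_card]
    omega
  · rw [Multiset.map_coe, Multiset.sum_coe]
    omega

theorem exists_small_block (hs : s ≠ 0) (hf : ∀ a ∈ s, |f a| ≤ M) (hsum : 0 ≤ (s.map f).sum) :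
    ∃ t ≤ s, t ≠ 0 ∧ t.card ≤ 2 * M + 1 ∧
      0 ≤ (t.map f).sum ∧ (t.map f).sum ≤ (s.map f).sum := by
  by_cases hcard : s.card ≤ 2 * M + 1
  · exact ⟨s, le_rfl, hs, hcard, hsum, le_rfl⟩
  by_cases hM : (s.map f).sum ≤ M
  · obtain ⟨t, hts, ht0, htc, ht⟩ :=
      exists_sum_map_eq_zero hf (by rwa [abs_of_nonneg hsum]) (not_le.1 hcard)
    exact ⟨t, hts, ht0, htc, ht.ge, ht.trans_le hsum⟩
  · obtain ⟨a, ha, hfa⟩ := exists_nonneg_of_sum_map_nonneg hs hsum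
    have := le_of_abs_le (hf a ha)
    exact ⟨{a}, Multiset.singleton_le.2 ha, Multiset.singleton_ne_zero a, by simp,
      by simpa using hfa, by simpa using this.trans (not_le.1 hM).le⟩

theorem exists_join_eq_of_sum_map_nonneg (hf : ∀ a ∈ s, |f a| ≤ M) (hsum : 0 ≤ (s.map f).sum) :
    ∃ T : Multiset (Multiset α), T.join = s ∧
      ∀ t ∈ T, t.card ≤ 2 * M + 1 ∧ 0 ≤ (t.map f).sum := by
  induction s using Multiset.strongInductionOn with
  | ih s ih =>
    rcases eq_or_ne s 0 with rfl | hs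
    · exact ⟨0, by simp, by simp⟩
    obtain ⟨t, hts, ht0, htc, ht, hle⟩ := exists_small_block hs hf hsum
    obtain ⟨u, rfl⟩ := Multiset.le_iff_exists_add.1 hts
    rw [Multiset.map_add, Multiset.sum_add] at hle
    obtain ⟨T, rfl, hT⟩ := ih u (lt_add_of_pos_left u (pos_of_ne_zero ht0))
      (fun a ha ↦ hf a (Multiset.mem_add.2 (.inr ha))) (by omega)
    exact ⟨t ::ₘ T, Multiset.join_cons t T, by simpa using ⟨⟨htc, ht⟩, hT⟩⟩

/-- The size of the blocks obtained by treating `d` integer coordinates of absolute value at most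
`M` one after the other. -/
def blockSize (M : ℕ) : ℕ → ℕ
  | 0 => 1
  | d + 1 => (2 * (M * blockSize M d) + 1) * blockSize M d

theorem sum_map_join (T : Multiset (Multiset α)) (f : α → ℤ) :
    (T.join.map f).sum = (T.map fun t ↦ (t.map f).sum).sum := by
  rw [Multiset.map_join, Multiset.sum_join, Multiset.map_map]
  rfl

theorem card_join_le {T : Multiset (Multiset α)} {n : ℕ} (hT : ∀ t ∈ T, t.card ≤ n) :
    T.join.card ≤ T.card * n := by
  simpa using Multiset.sum_le_card_nsmul (T.map Multiset.card) n (by simpa using hT)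

theorem exists_join_eq_of_forall_sum_map_nonneg {ι : Type*} (J : Finset ι) {f : ι → α → ℤ}
    (hf : ∀ i ∈ J, ∀ a ∈ s, |f i a| ≤ M) (hsum : ∀ i ∈ J, 0 ≤ (s.map (f i)).sum) :
    ∃ T : Multiset (Multiset α), T.join = s ∧
      ∀ t ∈ T, t.card ≤ blockSize M J.card ∧ ∀ i ∈ J, 0 ≤ (t.map (f i)).sum := by
  classical
  induction J using Finset.induction_on with
  | empty => exact ⟨s.map ({·}), by simp [Multiset.join], by simp [blockSize]⟩
  | insert i J hi ih =>
    rw [Finset.forall_mem_insert] at hf hsum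
    obtain ⟨T, rfl, hT⟩ := ih hf.2 hsum.2
    have hbound : ∀ t ∈ T, |(t.map (f i)).sum| ≤ (M * blockSize M J.card : ℕ) := fun t ht ↦ by
      calc |(t.map (f i)).sum| ≤ M * t.card :=
            abs_sum_map_le fun a ha ↦ hf.1 a (Multiset.mem_join.2 ⟨t, ht, ha⟩)
        _ ≤ (M * blockSize M J.card : ℕ) := by
            exact_mod_cast Nat.mul_le_mul_left M (hT t ht).1
    -- Group whole blocks: the coordinates in `J` then remain nonnegative.
    obtain ⟨U, rfl, hU⟩ := exists_join_eq_of_sum_map_nonneg hbound (sum_map_join T _ ▸ hsum.1)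
    refine ⟨U.map Multiset.join, Multiset.sum_join.symm, ?_⟩
    simp only [Multiset.mem_map, forall_exists_index, and_imp, forall_apply_eq_imp_iff₂]
    intro t ht
    have htU : ∀ u ∈ t, u ∈ U.join := fun u hu ↦ Multiset.mem_join.2 ⟨t, ht, hu⟩
    refine ⟨?_, Finset.forall_mem_insert _ _ _ |>.2 ⟨?_, fun j hj ↦ ?_⟩⟩
    · rw [Finset.card_insert_of_notMem hi]
      exact (card_join_le fun u hu ↦ (hT u (htU u hu)).1).trans
        (Nat.mul_le_mul_right _ (hU t ht).1)
    · exact sum_map_join t _ ▸ (hU t ht).2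
    · rw [sum_map_join]
      exact Multiset.sum_nonneg (by simpa using fun u hu ↦ (hT u (htU u hu)).2 j hj)

theorem exists_eq_add_nsmul_of_subset {G : Finset α} {D : ℕ} (hD : 0 < D)
    (hs : ∀ a ∈ s, a ∈ G) :
    ∃ t u : Multiset α, s = t + D • u ∧ t.card ≤ G.card * D := by
  classical
  induction s using Multiset.strongInductionOn with
  | ih s ih =>
    by_cases hcount : ∃ a ∈ s, D ≤ s.count a
    · obtain ⟨a, -, ha⟩ := hcount
      obtain ⟨s, rfl⟩ := Multiset.le_iff_exists_add.1 (Multiset.le_count_iff_replicate_le.1 ha)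
      obtain ⟨t, u, rfl, ht⟩ := ih s
        (lt_add_of_pos_left s (pos_of_ne_zero (by simpa [← Multiset.card_eq_zero] using hD.ne')))
        fun b hb ↦ hs b (Multiset.mem_add.2 (.inr hb))
      refine ⟨t, a ::ₘ u, ?_, ht⟩
      rw [← Multiset.singleton_add, nsmul_add, Multiset.nsmul_singleton, add_left_comm]
    · push Not at hcount
      refine ⟨s, 0, by simp, ?_⟩
      rw [← Multiset.sum_count_eq_card hs]
      refine Finset.sum_le_card_nsmul _ _ _ fun a _ ↦ ?_
      by_cases ha : a ∈ s
      · exact (hcount a ha).le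
      · simp [ha]

end Blocks
section BoundedSums

variable {E : Type*} [AddCommMonoid E] {P : Set E} {m n : ℕ} {v w : E}

theorem sum_filter_ne_zero [DecidableEq E] (s : Multiset E) : (s.filter (· ≠ 0)).sum = s.sum := by
  have hzero : (s.filter (¬ · ≠ 0)).sum = 0 := Multiset.sum_eq_zero (by simp)
  rw [← Multiset.sum_filter_add_sum_filter_not (· ≠ 0) (s := s), hzero, add_zero]

/-- The sums of at most `n` elements of `P`, counted with multiplicity. -/
def sumsLE (P : Set E) (n : ℕ) : Set E :=
  {v | ∃ s : Multiset E, (∀ p ∈ s, p ∈ P) ∧ s.card ≤ n ∧ s.sum = v}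

theorem sumsLE_mono (h : m ≤ n) : sumsLE P m ⊆ sumsLE P n := by
  rintro v ⟨s, hsP, hs, rfl⟩
  exact ⟨s, hsP, hs.trans h, rfl⟩

theorem mem_closure_of_mem_sumsLE (hv : v ∈ sumsLE P n) : v ∈ AddSubmonoid.closure P := by
  obtain ⟨s, hsP, -, rfl⟩ := hv
  exact AddSubmonoid.multiset_sum_mem _ s fun p hp ↦ AddSubmonoid.subset_closure (hsP p hp)

theorem add_mem_sumsLE (hv : v ∈ sumsLE P m) (hw : w ∈ sumsLE P n) : v + w ∈ sumsLE P (m + n) := by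
  obtain ⟨s, hsP, hs, rfl⟩ := hv
  obtain ⟨t, htP, ht, rfl⟩ := hw
  refine ⟨s + t, fun p hp ↦ (Multiset.mem_add.1 hp).elim (hsP p) (htP p), ?_, Multiset.sum_add s t⟩
  rw [Multiset.card_add]
  exact add_le_add hs ht

theorem multiset_sum_mem_sumsLE {U : Multiset E} (hU : ∀ u ∈ U, u ∈ sumsLE P n) :
    U.sum ∈ sumsLE P (U.card * n) := by
  induction U using Multiset.induction_on with
  | empty => exact ⟨0, by simp⟩
  | cons u U ih =>
    rw [Multiset.forall_mem_cons] at hU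
    rw [Multiset.sum_cons, Multiset.card_cons, add_one_mul, add_comm (_ * _)]
    exact add_mem_sumsLE hU.1 (ih hU.2)

theorem abs_apply_le_of_mem_sumsLE {ι : Type*} {P : Set (ι → ℤ)} {M : ℕ} {v : ι → ℤ}
    (hP : ∀ p ∈ P, ∀ i, |p i| ≤ M) (hv : v ∈ sumsLE P n) (i : ι) : |v i| ≤ (M * n : ℕ) := by
  obtain ⟨s, hsP, hs, rfl⟩ := hv
  calc |s.sum i| = |(s.map fun p ↦ p i).sum| := by rw [Pi.multiset_sum_apply]
    _ ≤ M * s.card := abs_sum_map_le fun p hp ↦ hP p (hsP p hp) i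
    _ ≤ (M * n : ℕ) := by exact_mod_cast Nat.mul_le_mul_left M hs

end BoundedSums

section Orthants

variable {ι : Type*} {ε : ι → ℤˣ} {P : Set (ι → ℤ)} {b v : ι → ℤ} {M n : ℕ}

theorem abs_units_mul (u : ℤˣ) (a : ℤ) : |(u : ℤ) * a| = |a| := by
  rw [abs_mul, Int.isUnit_iff_abs_eq.1 u.isUnit, one_mul]

/-- The orthant of `ι → ℤ` in which the `i`-th coordinate is zero or has the sign `ε i`. -/
def orthant (ε : ι → ℤˣ) : AddSubmonoid (ι → ℤ) where
  carrier := {v | ∀ i, 0 ≤ (ε i : ℤ) * v i}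
  zero_mem' i := by simp
  add_mem' hv hw i := by simpa [mul_add] using add_nonneg (hv i) (hw i)

theorem mem_orthant : v ∈ orthant ε ↔ ∀ i, 0 ≤ (ε i : ℤ) * v i := Iff.rfl

/-- The nonzero vectors of the orthant `ε` that are sums of at most `n` elements of `P`. -/
def orthantSums (ε : ι → ℤˣ) (P : Set (ι → ℤ)) (n : ℕ) : Set (ι → ℤ) :=
  {v | v ∈ sumsLE P n ∧ v ∈ orthant ε ∧ v ≠ 0}

theorem exists_finset_card_le_of_abs_le [Fintype ι] {S : Set (ι → ℤ)}
    (hS : ∀ v ∈ S, ∀ i, |v i| ≤ n) :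
    ∃ G : Finset (ι → ℤ), G = S ∧ G.card ≤ (2 * n + 1) ^ Fintype.card ι := by
  classical
  have hbox : S ⊆ Finset.Icc (fun _ ↦ -n : ι → ℤ) (fun _ ↦ n) := fun v hv ↦ by
    simpa [Pi.le_def, ← forall_and, ← abs_le] using hS v hv
  lift S to Finset (ι → ℤ) using (Finset.finite_toSet _).subset hbox
  refine ⟨S, rfl, (Finset.card_le_card (by exact_mod_cast hbox)).trans_eq ?_⟩
  rw [Pi.card_Icc, Finset.prod_const, Int.card_Icc, Finset.card_univ]
  congr 1
  omega

theorem finite_setOf_sub_mem_sumsLE [Finite ι] (hP : ∀ p ∈ P, ∀ i, |p i| ≤ M) (b : ι → ℤ) (n : ℕ) :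
    {c | c - b ∈ sumsLE P n}.Finite := by
  have := Fintype.ofFinite ι
  obtain ⟨G, hG, -⟩ := exists_finset_card_le_of_abs_le (S := sumsLE P n)
    fun v ↦ abs_apply_le_of_mem_sumsLE hP
  exact (hG ▸ G.finite_toSet).preimage (sub_left_injective (b := b)).injOn

variable [Fintype ι]

theorem exists_join_eq_of_sum_mem_orthant {s : Multiset (ι → ℤ)} (hs : ∀ p ∈ s, ∀ i, |p i| ≤ M)
    (hsum : s.sum ∈ orthant ε) :
    ∃ T : Multiset (Multiset (ι → ℤ)), T.join = s ∧
      ∀ t ∈ T, t.card ≤ blockSize M (Fintype.card ι) ∧ t.sum ∈ orthant ε := by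
  have hsum_apply (t : Multiset (ι → ℤ)) (i : ι) :
      (t.map fun p ↦ (ε i : ℤ) * p i).sum = ε i * t.sum i := by
    rw [Multiset.sum_map_mul_left, Pi.multiset_sum_apply]
  simpa only [hsum_apply, Finset.mem_univ, true_imp_iff, ← mem_orthant, Finset.card_univ] using
    exists_join_eq_of_forall_sum_map_nonneg Finset.univ
      (f := fun i (p : ι → ℤ) ↦ (ε i : ℤ) * p i)
      (fun i _ p hp ↦ by rw [abs_units_mul]; exact hs p hp i)
      (fun i _ ↦ by rw [hsum_apply]; exact hsum i)

theorem exists_base_add_sum_orthantSums (hP : ∀ p ∈ P, ∀ i, |p i| ≤ M) (hb : b ∈ P)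
    (hv : v ∈ orthant ε) (hvb : v - b ∈ AddSubmonoid.closure P) :
    ∃ c ∈ orthant ε, c - b ∈ sumsLE P (blockSize M (Fintype.card ι)) ∧
      ∃ U : Multiset (ι → ℤ),
        (∀ u ∈ U, u ∈ orthantSums ε P (blockSize M (Fintype.card ι))) ∧ v = c + U.sum := by
  classical
  obtain ⟨s, hsP, hsv⟩ := AddSubmonoid.exists_multiset_of_mem_closure hvb
  have hsum : (b ::ₘ s).sum = v := by rw [Multiset.sum_cons, hsv, add_sub_cancel]
  have hbs : ∀ p ∈ b ::ₘ s, p ∈ P := Multiset.forall_mem_cons.2 ⟨hb, hsP⟩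
  obtain ⟨T, hT, hblock⟩ :=
    exists_join_eq_of_sum_mem_orthant (fun p hp ↦ hP p (hbs p hp)) (hsum ▸ hv)
  have hTP : ∀ t ∈ T, ∀ p ∈ t, p ∈ P := fun t ht p hp ↦
    hbs p (hT ▸ Multiset.mem_join.2 ⟨t, ht, hp⟩)
  obtain ⟨t₀, ht₀, hbt₀⟩ := Multiset.mem_join.1 (hT ▸ Multiset.mem_cons_self b s)
  obtain ⟨T, rfl⟩ := Multiset.exists_cons_of_mem ht₀
  obtain ⟨t₀, rfl⟩ := Multiset.exists_cons_of_mem hbt₀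
  rw [Multiset.forall_mem_cons] at hblock hTP
  refine ⟨(b ::ₘ t₀).sum, hblock.1.2, ⟨t₀, ?_, ?_, ?_⟩,
    (T.map Multiset.sum).filter (· ≠ 0), ?_, ?_⟩
  · exact (Multiset.forall_mem_cons.1 hTP.1).2
  · exact (Multiset.card_le_card (Multiset.le_cons_self t₀ b)).trans hblock.1.1
  · simp
  · simp only [Multiset.mem_filter, Multiset.mem_map]
    rintro _ ⟨⟨t, ht, rfl⟩, hne⟩
    exact ⟨⟨t, hTP.2 t ht, (hblock.2 t ht).1, rfl⟩, (hblock.2 t ht).2, hne⟩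
  · rw [sum_filter_ne_zero, ← Multiset.sum_join, ← Multiset.sum_add, ← Multiset.join_cons, hT, hsum]

/-- The sum of the coordinates of a vector with the signs `ε`; it is the `ℓ¹` norm on
`orthant ε`. -/
def height (ε : ι → ℤˣ) : (ι → ℤ) →+ ℤ where
  toFun v := ∑ i, (ε i : ℤ) * v i
  map_zero' := by simp
  map_add' v w := by simp [mul_add, Finset.sum_add_distrib]

theorem height_apply (v : ι → ℤ) : height ε v = ∑ i, (ε i : ℤ) * v i := rfl

theorem abs_height_le (hv : ∀ i, |v i| ≤ M) : |height ε v| ≤ Fintype.card ι * M :=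
  calc |height ε v| ≤ ∑ i, |(ε i : ℤ) * v i| := Finset.abs_sum_le_sum_abs _ _
    _ ≤ ∑ _ : ι, (M : ℤ) := Finset.sum_le_sum fun i _ ↦ (abs_units_mul (ε i) _).trans_le (hv i)
    _ = Fintype.card ι * M := by simp

theorem abs_apply_le_height (hv : v ∈ orthant ε) (i : ι) : |v i| ≤ height ε v :=
  calc |v i| = ε i * v i := by rw [← abs_of_nonneg (hv i), abs_units_mul]
    _ ≤ height ε v := Finset.single_le_sum (f := fun i ↦ (ε i : ℤ) * v i) (fun i _ ↦ hv i)
      (Finset.mem_univ i)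

theorem height_nonneg (hv : v ∈ orthant ε) : 0 ≤ height ε v := Finset.sum_nonneg fun i _ ↦ hv i

theorem height_pos (hv : v ∈ orthant ε) (hne : v ≠ 0) : 0 < height ε v := by
  obtain ⟨i, hi⟩ := Function.ne_iff.1 hne
  exact (abs_pos.2 hi).trans_le (abs_apply_le_height hv i)

theorem ne_zero_of_height_pos (hv : 0 < height ε v) : v ≠ 0 := by
  rintro rfl
  simp at hv

theorem card_le_height_sum {U : Multiset (ι → ℤ)} (hU : ∀ u ∈ U, u ∈ orthantSums ε P n) :
    (U.card : ℤ) ≤ height ε U.sum := by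
  rw [map_multiset_sum]
  simpa using Multiset.card_nsmul_le_sum (s := U.map (height ε)) (a := 1)
    (Multiset.forall_mem_map_iff.2 fun u hu ↦
      Order.one_le_iff_pos.2 (height_pos (hU u hu).2.1 (hU u hu).2.2))

theorem sub_mem_sumsLE_of_height_le (hP : ∀ p ∈ P, ∀ i, |p i| ≤ M) (hb : b ∈ P)
    (hv : v ∈ orthant ε) (hvb : v - b ∈ AddSubmonoid.closure P) (hn : height ε v ≤ n) :
    v - b ∈ sumsLE P ((n + 1) * blockSize M (Fintype.card ι)) := by
  obtain ⟨c, hc, hcb, U, hU, rfl⟩ := exists_base_add_sum_orthantSums hP hb hv hvb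
  have hcard : U.card ≤ n := by
    have := card_le_height_sum hU
    have := height_nonneg hc
    rw [map_add] at hn
    omega
  rw [add_sub_right_comm, add_one_mul, add_comm (n * _)]
  exact add_mem_sumsLE hcb (sumsLE_mono (Nat.mul_le_mul_right _ hcard)
    (multiset_sum_mem_sumsLE fun u hu ↦ (hU u hu).1))

end Orthants
section Plane

variable {ε : Fin 2 → ℤˣ} {P : Set Vec2} {a b c g p q r v : Vec2} {s : Multiset Vec2} {M S : ℕ}

/-- The determinant of the `2 × 2` matrix with rows `u` and `v`. -/
def det (u v : Vec2) : ℤ := u 0 * v 1 - u 1 * v 0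

theorem det_self (v : Vec2) : det v v = 0 := sub_eq_zero.2 (mul_comm _ _)

theorem det_swap (u v : Vec2) : det u v = -det v u := by
  simp only [det]
  ring

theorem det_add_left (u v w : Vec2) : det (u + v) w = det u w + det v w := by
  simp only [det, Pi.add_apply]
  ring

theorem det_zsmul_left (k : ℤ) (u v : Vec2) : det (k • u) v = k * det u v := by
  simp only [det, Pi.smul_apply, smul_eq_mul]
  ring

theorem det_nsmul_left (k : ℕ) (u v : Vec2) : det (k • u) v = k * det u v := by
  rw [← natCast_zsmul, det_zsmul_left]

theorem det_sum_left (s : Multiset Vec2) (v : Vec2) :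
    det s.sum v = (s.map (det · v)).sum := by
  simp only [det, Multiset.sum_map_sub, Multiset.sum_map_mul_right, Pi.multiset_sum_apply]

theorem det_zsmul_eq (a b c : Vec2) : det a c • b = det b c • a + det a b • c := by
  ext i
  fin_cases i <;> simp [det] <;> ring

theorem det_mul_height_eq (a b c : Vec2) :
    det a c * height ε b = det b c * height ε a + det a b * height ε c := by
  simpa only [map_add, map_zsmul, smul_eq_mul] using congrArg (height ε) (det_zsmul_eq a b c)

theorem abs_det_le (hp : ∀ i, |p i| ≤ M) (hq : q ∈ orthant ε) :
    |det p q| ≤ M * height ε q := by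
  have habs (i : Fin 2) : |q i| = ε i * q i := by rw [← abs_of_nonneg (hq i), abs_units_mul]
  calc |det p q| ≤ |p 0 * q 1| + |p 1 * q 0| := abs_sub _ _
    _ ≤ M * |q 1| + M * |q 0| := by
      rw [abs_mul, abs_mul]
      gcongr <;> apply hp
    _ = M * height ε q := by
      rw [habs, habs, height_apply, Fin.sum_univ_two]
      ring

theorem height_zsmul_eq_of_det_eq_zero (h : det v q = 0) :
    height ε q • v = height ε v • q := by
  rw [det] at h
  ext i
  fin_cases i <;> simp [height_apply]
  · linear_combination (ε 1 : ℤ) * h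
  · linear_combination -(ε 0 : ℤ) * h

theorem mem_orthant_of_det_eq_zero (hq : q ∈ orthant ε) (hq₀ : q ≠ 0) (hv : 0 < height ε v)
    (h : det v q = 0) : v ∈ orthant ε := fun i ↦ by
  have hi : height ε q * (ε i * v i) = height ε v * (ε i * q i) := by
    have := congrFun (height_zsmul_eq_of_det_eq_zero (ε := ε) h) i
    simp only [Pi.smul_apply, smul_eq_mul] at this
    linear_combination (ε i : ℤ) * this
  exact nonneg_of_mul_nonneg_right (hi ▸ mul_nonneg hv.le (hq i)) (height_pos hq hq₀)

theorem det_nonneg_trans (ha : 0 < height ε a) (hb : 0 < height ε b) (hc : 0 < height ε c)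
    (hab : 0 ≤ det a b) (hbc : 0 ≤ det b c) : 0 ≤ det a c :=
  nonneg_of_mul_nonneg_left (det_mul_height_eq (ε := ε) a b c ▸ by positivity) hb

theorem exists_mem_forall_rel {α : Type*} {R : α → α → Prop} {G : Finset α} (hG : G.Nonempty)
    (htotal : ∀ a ∈ G, ∀ b ∈ G, R a b ∨ R b a)
    (htrans : ∀ a ∈ G, ∀ b ∈ G, ∀ c ∈ G, R a b → R b c → R a c) : ∃ a ∈ G, ∀ b ∈ G, R a b := by
  induction hG using Finset.Nonempty.cons_induction with
  | singleton a => simpa using htotal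
  | cons a G ha _ ih =>
    have haG : a ∈ Finset.cons a G ha := Finset.mem_cons_self a G
    have hGG {b} (hb : b ∈ G) : b ∈ Finset.cons a G ha := Finset.mem_cons_of_mem hb
    obtain ⟨q, hq, hqG⟩ := ih (fun b hb c hc ↦ htotal b (hGG hb) c (hGG hc))
      (fun b hb c hc d hd ↦ htrans b (hGG hb) c (hGG hc) d (hGG hd))
    rcases htotal q (hGG hq) a haG with h | h
    · exact ⟨q, hGG hq, (Finset.forall_mem_cons ha _).2 ⟨h, hqG⟩⟩
    · exact ⟨a, haG, (Finset.forall_mem_cons ha _).2 ⟨or_self_iff.1 (htotal a haG a haG),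
        fun b hb ↦ htrans a haG q (hGG hq) b (hGG hb) h (hqG b hb)⟩⟩

theorem exists_extreme_rays {G : Finset Vec2} (hG : G.Nonempty)
    (hpos : ∀ g ∈ G, 0 < height ε g) :
    ∃ q ∈ G, ∃ r ∈ G, ∀ g ∈ G, 0 ≤ det q g ∧ 0 ≤ det g r := by
  have htotal (u v : Vec2) : 0 ≤ det u v ∨ 0 ≤ det v u := by
    rw [det_swap v u]
    omega
  have htrans : ∀ a ∈ G, ∀ b ∈ G, ∀ c ∈ G, 0 ≤ det a b → 0 ≤ det b c → 0 ≤ det a c :=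
    fun a ha b hb c hc ↦ det_nonneg_trans (hpos a ha) (hpos b hb) (hpos c hc)
  obtain ⟨q, hq, hqG⟩ := exists_mem_forall_rel hG (fun a _ b _ ↦ htotal a b) htrans
  obtain ⟨r, hr, hrG⟩ := exists_mem_forall_rel (R := fun a b ↦ 0 ≤ det b a) hG
    (fun a _ b _ ↦ htotal b a) fun a ha b hb c hc hba hcb ↦ htrans c hc b hb a ha hcb hba
  exact ⟨q, hq, r, hr, fun g hg ↦ ⟨hqG g hg, hrG g hg⟩⟩

theorem det_nsmul_mem_closure_pair (hqr : 0 ≤ det q r) (hqg : 0 ≤ det q g) (hgr : 0 ≤ det g r) :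
    (det q r).toNat • g ∈ AddSubmonoid.closure {q, r} := by
  have hcramer : (det q r).toNat • g = (det g r).toNat • q + (det q g).toNat • r := by
    simpa only [← natCast_zsmul, Int.toNat_of_nonneg, *] using det_zsmul_eq q g r
  rw [hcramer]
  exact add_mem (nsmul_mem (AddSubmonoid.subset_closure (.inl rfl)) _)
    (nsmul_mem (AddSubmonoid.subset_closure (.inr rfl)) _)

theorem height_nsmul_mem_closure (hq : q ∈ orthant ε) (hg : g ∈ orthant ε) (h : det g q = 0) :
    (height ε q).toNat • g ∈ AddSubmonoid.closure {q} := by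
  have hparallel : (height ε q).toNat • g = (height ε g).toNat • q := by
    simpa only [← natCast_zsmul, Int.toNat_of_nonneg, height_nonneg, *] using
      height_zsmul_eq_of_det_eq_zero h
  rw [hparallel]
  exact nsmul_mem (AddSubmonoid.subset_closure (Set.mem_singleton q)) _

theorem exists_nsmul_mem_closure_pair {R : ℕ} (hq : q ∈ orthant ε) (hq₀ : q ≠ 0)
    (hr : r ∈ orthant ε) (hr₀ : r ≠ 0) (hqR : height ε q ≤ R) (hrR : height ε r ≤ R) :
    ∃ D : ℕ, 0 < D ∧ D ≤ R ^ 2 + R ∧ ∀ g ∈ orthant ε, 0 ≤ det q g → 0 ≤ det g r →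
      D • g ∈ AddSubmonoid.closure {q, r} := by
  have hqpos := height_pos hq hq₀
  rcases lt_or_ge 0 (det q r) with hdet | hdet
  · have hle : det q r ≤ R ^ 2 :=
      calc det q r ≤ R * height ε r :=
            (le_abs_self _).trans (abs_det_le (fun i ↦ (abs_apply_le_height hq i).trans hqR) hr)
        _ ≤ R ^ 2 := by rw [sq]; gcongr
    exact ⟨(det q r).toNat, by omega, by zify; omega, fun g _ ↦ det_nsmul_mem_closure_pair hdet.le⟩
  · refine ⟨(height ε q).toNat, by omega, by omega, fun g hg hqg hgr ↦ ?_⟩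
    have hqg₀ : det q g * height ε r = 0 := by
      have hle : det q r * height ε g ≤ 0 := mul_nonpos_of_nonpos_of_nonneg hdet (height_nonneg hg)
      rw [det_mul_height_eq] at hle
      have := mul_nonneg hgr hqpos.le
      have := mul_nonneg hqg (height_nonneg hr)
      omega
    have hgq : det g q = 0 := by
      rw [det_swap, (mul_eq_zero.1 hqg₀).resolve_right (height_pos hr hr₀).ne', neg_zero]
    exact AddSubmonoid.closure_mono (by simp) (height_nsmul_mem_closure hq hg hgq)

/-- A bound on the height of some vector of `P ∪ L(b;P)` on the ray of a vector `q` of height at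
most `S`: the term `2 * M` accounts for an element of `P`, the others for `w + (N + 1) • q` with
`w` parallel to `q` of height at most `N := 4 * M ^ 2 * S` in absolute value. -/
def raySize (M S : ℕ) : ℕ := 2 * M + 4 * M ^ 2 * S + (4 * M ^ 2 * S + 1) * S

theorem exists_mul_nonpos_of_sum_map_eq_zero {α : Type*} {f : α → ℤ} {s : Multiset α}
    (hsum : (s.map f).sum = 0) (d : ℤ) :
    (∃ a ∈ s, f a ≠ 0 ∧ f a * d ≤ 0) ∨ ∀ a ∈ s, f a = 0 := by
  by_contra! ⟨hpos, a, ha, hfa⟩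
  have hnonneg : ∀ x ∈ s.map (f · * d), 0 ≤ x := by
    simp only [Multiset.forall_mem_map_iff]
    intro b hb
    by_cases hfb : f b = 0
    · simp [hfb]
    · exact (hpos b hb hfb).le
  have hzero := Multiset.all_zero_of_le_zero_le_of_sum_eq_zero hnonneg
    (by rw [Multiset.sum_map_mul_right, hsum, zero_mul]) _ (Multiset.mem_map_of_mem _ ha)
  exact (hpos a ha hfa).ne' hzero

theorem exists_parallel_mem (hsM : ∀ p ∈ s, ∀ i, |p i| ≤ M) (hq : s.sum ∈ orthant ε)
    (hq₀ : s.sum ≠ 0) (hdet : ∀ p ∈ s, det p s.sum = 0) :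
    ∃ p ∈ s, p ∈ orthant ε ∧ p ≠ 0 ∧ height ε p ≤ 2 * M := by
  obtain ⟨p, hp, hpos⟩ : ∃ p ∈ s, 0 < height ε p := by
    by_contra! hneg
    have hle : (s.map (height ε)).sum ≤ 0 := by
      simpa using Multiset.sum_le_card_nsmul (s.map (height ε)) 0 (by simpa using hneg)
    rw [← map_multiset_sum] at hle
    exact hle.not_gt (height_pos hq hq₀)
  refine ⟨p, hp, mem_orthant_of_det_eq_zero hq hq₀ hpos (hdet p hp),
    ne_zero_of_height_pos hpos, ?_⟩
  simpa using (le_abs_self _).trans (abs_height_le (ε := ε) (hsM p hp))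

theorem abs_mul_add_abs_mul_eq_zero {x y : ℤ} (h : x * y ≤ 0) : |x| * y + |y| * x = 0 := by
  rcases mul_nonpos_iff.1 h with ⟨hx, hy⟩ | ⟨hx, hy⟩
  · rw [abs_of_nonneg hx, abs_of_nonpos hy]
    ring
  · rw [abs_of_nonpos hx, abs_of_nonneg hy]
    ring

theorem exists_combination_det_eq_zero (hb : ∀ i, |b i| ≤ M) (hp : ∀ i, |p i| ≤ M)
    (hq : q ∈ orthant ε) (hqS : height ε q ≤ S) (hpq : det p q ≠ 0)
    (hsign : det p q * det b q ≤ 0) :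
    ∃ k m : ℕ, det ((k + 1) • b + m • p) q = 0 ∧
      |height ε ((k + 1) • b + m • p)| ≤ (4 * M ^ 2 * S : ℕ) := by
  obtain ⟨k, hk⟩ := Nat.exists_eq_add_one_of_ne_zero (Int.natAbs_ne_zero.2 hpq)
  refine ⟨k, (det b q).natAbs, ?_, ?_⟩ <;> rw [← hk]
  · rw [det_add_left, det_nsmul_left, det_nsmul_left, Int.natCast_natAbs, Int.natCast_natAbs]
    exact abs_mul_add_abs_mul_eq_zero hsign
  · rw [map_add, map_nsmul, map_nsmul, nsmul_eq_mul, nsmul_eq_mul, Int.natCast_natAbs,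
      Int.natCast_natAbs]
    calc |(|det p q| * height ε b + |det b q| * height ε p)|
        ≤ |det p q| * |height ε b| + |det b q| * |height ε p| := by
          simpa only [abs_mul, abs_abs] using
            abs_add_le (|det p q| * height ε b) (|det b q| * height ε p)
      _ ≤ (M * S) * (2 * M) + (M * S) * (2 * M) := by
          gcongr
          · exact (abs_det_le hp hq).trans (by gcongr)
          · exact abs_height_le hb
          · exact (abs_det_le hb hq).trans (by gcongr)
          · exact abs_height_le hp
      _ = (4 * M ^ 2 * S : ℕ) := by
          push_cast
          ring

theorem exists_add_nsmul_mem_orthant {w : Vec2} {N : ℕ} (hq : q ∈ orthant ε) (hq₀ : q ≠ 0)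
    (hwq : det w q = 0) (hwN : |height ε w| ≤ N) :
    ∃ n : ℕ, w + n • q ∈ orthant ε ∧ w + n • q ≠ 0 ∧ det (w + n • q) q = 0 ∧
      height ε (w + n • q) ≤ N + (N + 1) * height ε q := by
  have hqpos := height_pos hq hq₀
  have hdet : det (w + (N + 1) • q) q = 0 := by
    rw [det_add_left, det_nsmul_left, det_self, hwq, mul_zero, add_zero]
  have hheight : height ε (w + (N + 1) • q) = height ε w + (N + 1) * height ε q := by
    rw [map_add, map_nsmul, nsmul_eq_mul, Nat.cast_succ]
  have hpos : 0 < height ε (w + (N + 1) • q) := by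
    rw [hheight]
    nlinarith [neg_abs_le (height ε w)]
  refine ⟨N + 1, mem_orthant_of_det_eq_zero hq hq₀ hpos hdet, ne_zero_of_height_pos hpos, hdet, ?_⟩
  · rw [hheight]
    gcongr
    exact (le_abs_self _).trans hwN

/- If `q` is a sum of elements of `P` not all parallel to `q`, then some summand `p` and `b` lie
weakly on opposite sides of the line through `q`, so that a combination of the two is parallel to
`q`; adding a large multiple of `q` moves it onto the ray. -/
theorem exists_parallel_mem_or_sub_mem (hP : ∀ p ∈ P, ∀ i, |p i| ≤ M) (hb : b ∈ P)
    (hqP : q ∈ AddSubmonoid.closure P) (hq : q ∈ orthant ε) (hq₀ : q ≠ 0)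
    (hqS : height ε q ≤ S) :
    ∃ v ∈ orthant ε, (v ∈ P ∨ v - b ∈ AddSubmonoid.closure P) ∧ v ≠ 0 ∧ det v q = 0 ∧
      height ε v ≤ raySize M S := by
  obtain ⟨s, hsP, rfl⟩ := AddSubmonoid.exists_multiset_of_mem_closure hqP
  have hsum : (s.map (det · s.sum)).sum = 0 := by rw [← det_sum_left, det_self]
  rcases exists_mul_nonpos_of_sum_map_eq_zero hsum (det b s.sum) with ⟨p, hp, hpq, hsign⟩ | hdet
  · obtain ⟨k, m, hdet, hheight⟩ :=
      exists_combination_det_eq_zero (hP b hb) (hP p (hsP p hp)) hq hqS hpq hsign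
    obtain ⟨n, hv, hv₀, hvq, hvS⟩ := exists_add_nsmul_mem_orthant hq hq₀ hdet hheight
    refine ⟨_, hv, .inr ?_, hv₀, hvq, hvS.trans ?_⟩
    · rw [succ_nsmul', add_assoc b, add_assoc b, add_sub_cancel_left]
      exact add_mem (add_mem (nsmul_mem (AddSubmonoid.subset_closure hb) k)
        (nsmul_mem (AddSubmonoid.subset_closure (hsP p hp)) m)) (nsmul_mem hqP n)
    · calc _ ≤ ((4 * M ^ 2 * S : ℕ) : ℤ) + ((4 * M ^ 2 * S : ℕ) + 1) * S := by gcongr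
        _ ≤ raySize M S := by
          rw [raySize, add_assoc]
          exact_mod_cast Nat.le_add_left _ _
  · obtain ⟨p, hp, hpε, hp₀, hpM⟩ := exists_parallel_mem (fun p hp ↦ hP p (hsP p hp)) hq hq₀ hdet
    refine ⟨p, hpε, .inl (hsP p hp), hp₀, hdet p hp, hpM.trans ?_⟩
    rw [raySize, add_assoc]
    exact_mod_cast Nat.le_add_right _ _

end Plane

section Decomposition

variable {ε : Fin 2 → ℤˣ} {b c v : Vec2} {M n : ℕ}

theorem exists_periods {P : Set Vec2} (hP : ∀ p ∈ P, ∀ i, |p i| ≤ M) (hb : b ∈ P)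
    {G : Finset Vec2} (hG : ∀ g ∈ G, g ∈ orthantSums ε P n) :
    ∃ Q : Finset Vec2, Q.card ≤ 2 ∧
      (∀ q ∈ Q, q ∈ orthant ε ∧ (q ∈ P ∨ q - b ∈ AddSubmonoid.closure P) ∧
        height ε q ≤ raySize M (2 * (M * n))) ∧
      ∃ D : ℕ, 0 < D ∧ D ≤ raySize M (2 * (M * n)) ^ 2 + raySize M (2 * (M * n)) + 1 ∧
        ∀ g ∈ G, D • g ∈ AddSubmonoid.closure (Q : Set Vec2) := by
  rcases G.eq_empty_or_nonempty with rfl | hne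
  · exact ⟨∅, by simp, by simp, 1, one_pos, by simp, by simp⟩
  have hpos : ∀ g ∈ G, 0 < height ε g := fun g hg ↦ height_pos (hG g hg).2.1 (hG g hg).2.2
  have hparallel : ∀ g ∈ G, ∃ v ∈ orthant ε, (v ∈ P ∨ v - b ∈ AddSubmonoid.closure P) ∧ v ≠ 0 ∧
      det v g = 0 ∧ height ε v ≤ raySize M (2 * (M * n)) := fun g hg ↦
    exists_parallel_mem_or_sub_mem hP hb (mem_closure_of_mem_sumsLE (hG g hg).1) (hG g hg).2.1
      (hG g hg).2.2 (by
        simpa using (le_abs_self _).trans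
          (abs_height_le (ε := ε) (abs_apply_le_of_mem_sumsLE hP (hG g hg).1)))
  obtain ⟨q, hq, r, hr, hqr⟩ := exists_extreme_rays hne hpos
  obtain ⟨q', hq', hq'P, hq'₀, hq'q, hq'R⟩ := hparallel q hq
  obtain ⟨r', hr', hr'P, hr'₀, hr'r, hr'R⟩ := hparallel r hr
  obtain ⟨D, hD, hDle, hDg⟩ := exists_nsmul_mem_closure_pair hq' hq'₀ hr' hr'₀ hq'R hr'R
  refine ⟨{q', r'}, Finset.card_le_two, ?_, D, hD, Nat.le_add_right_of_le hDle, fun g hg ↦ ?_⟩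
  · simpa using ⟨⟨hq', hq'P, hq'R⟩, hr', hr'P, hr'R⟩
  · rw [Finset.coe_pair]
    exact hDg g (hG g hg).2.1
      (det_nonneg_trans (height_pos hq' hq'₀) (hpos q hq) (hpos g hg) hq'q.ge (hqr g hg).1)
      (det_nonneg_trans (hpos g hg) (hpos r hr) (height_pos hr' hr'₀) (hqr g hg).2
        (by rw [det_swap, hr'r, neg_zero]))

/-- A bound on the coefficients of the bases of the decomposition: with `K := blockSize M 2`, a
block of size `K` and, for each of the at most `(2 * (M * K) + 1) ^ 2` small vectors of the
quadrant, fewer than `raySize ^ 2 + raySize + 1` copies of it. -/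
def baseBound (M : ℕ) : ℕ :=
  blockSize M 2 + (2 * (M * blockSize M 2) + 1) ^ 2 *
    (raySize M (2 * (M * blockSize M 2)) ^ 2 + raySize M (2 * (M * blockSize M 2)) + 1) *
      blockSize M 2

/-- A bound on the coefficients of the periods of the decomposition. -/
def periodBound (M : ℕ) : ℕ := (raySize M (2 * (M * blockSize M 2)) + 1) * blockSize M 2

theorem exists_periods_forall_exists_base {P : Set Vec2} (hP : ∀ p ∈ P, ∀ i, |p i| ≤ M)
    (hb : b ∈ P) (ε : Fin 2 → ℤˣ) :
    ∃ Q : Finset Vec2, Q.card ≤ 2 ∧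
      (∀ q ∈ Q, q ∈ orthant ε ∧ (q ∈ P ∨ q - b ∈ AddSubmonoid.closure P) ∧
        (q - b ∈ AddSubmonoid.closure P → q - b ∈ sumsLE P (periodBound M))) ∧
      ∀ v ∈ orthant ε, v - b ∈ AddSubmonoid.closure P → ∃ c ∈ orthant ε,
        c - b ∈ sumsLE P (baseBound M) ∧ v - c ∈ AddSubmonoid.closure (Q : Set Vec2) := by
  obtain ⟨G, hG, hGcard⟩ := exists_finset_card_le_of_abs_le
    (S := orthantSums ε P (blockSize M 2)) fun g hg ↦ abs_apply_le_of_mem_sumsLE hP hg.1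
  have hmemG {g : Vec2} : g ∈ G ↔ g ∈ orthantSums ε P (blockSize M 2) := by
    rw [← hG, Finset.mem_coe]
  obtain ⟨Q, hQcard, hQ, D, hD, hDle, hDG⟩ := exists_periods hP hb fun g hg ↦ hmemG.1 hg
  refine ⟨Q, hQcard, fun q hq ↦ ?_, fun v hv hvb ↦ ?_⟩
  · obtain ⟨hqε, hqP, hqR⟩ := hQ q hq
    exact ⟨hqε, hqP, fun hqb ↦ sub_mem_sumsLE_of_height_le hP hb hqε hqb hqR⟩
  obtain ⟨c, hc, hcb, U, hU, rfl⟩ := exists_base_add_sum_orthantSums hP hb hv hvb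
  obtain ⟨t, u, rfl, ht⟩ := exists_eq_add_nsmul_of_subset hD fun g hg ↦ hmemG.2 (hU g hg)
  have htU : ∀ g ∈ t, g ∈ orthantSums ε P (blockSize M 2) := fun g hg ↦
    hU g (Multiset.mem_add.2 (.inl hg))
  have huU : ∀ g ∈ u, g ∈ G := fun g hg ↦
    hmemG.2 (hU g (Multiset.mem_add.2 (.inr (Multiset.mem_nsmul.2 ⟨hD.ne', hg⟩))))
  refine ⟨c + t.sum, add_mem hc (AddSubmonoid.multiset_sum_mem _ t fun g hg ↦ (htU g hg).2.1),
    ?_, ?_⟩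
  · rw [add_sub_right_comm]
    refine add_mem_sumsLE hcb (sumsLE_mono ?_ (multiset_sum_mem_sumsLE fun g hg ↦ (htU g hg).1))
    exact Nat.mul_le_mul_right _ (ht.trans (Nat.mul_le_mul hGcard hDle))
  · rw [Multiset.sum_add, ← add_assoc, add_sub_cancel_left, Multiset.sum_nsmul,
      Multiset.smul_sum]
    exact AddSubmonoid.multiset_sum_mem _ _ (by simpa using fun g hg ↦ hDG g (huU g hg))

variable {P : Finset Vec2}

theorem mem_linSet_iff : v ∈ LinSet b P ↔ v - b ∈ AddSubmonoid.closure (P : Set Vec2) := by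
  constructor
  · rintro ⟨lam, rfl⟩
    rw [add_sub_cancel_left]
    refine sum_mem fun p hp ↦ ?_
    rw [natCast_zsmul]
    exact nsmul_mem (AddSubmonoid.subset_closure hp) _
  · intro hv
    obtain ⟨lam, -, hlam⟩ := AddSubmonoid.mem_closure_finset.1 hv
    refine ⟨lam, ?_⟩
    simp only [natCast_zsmul, hlam, add_sub_cancel]

theorem sumsLE_subset_coneLe : sumsLE (P : Set Vec2) n ⊆ ConeLe n P := by
  classical
  rintro _ ⟨s, hsP, hs, rfl⟩
  refine ⟨fun p ↦ s.count p, fun p _ ↦ (Multiset.count_le_card p s).trans hs, ?_⟩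
  simp only [natCast_zsmul]
  exact Finset.sum_multiset_count_of_subset s P fun p hp ↦ hsP p (Multiset.mem_toFinset.1 hp)

theorem exists_eq_orthant_of_isQuadrant {Z : Set Vec2} (hZ : IsQuadrant Z) :
    ∃ ε : Fin 2 → ℤˣ, Z = orthant ε := by
  obtain ⟨ε, rfl⟩ := hZ
  refine ⟨fun i ↦ if ε i then 1 else -1, Set.ext fun v ↦ forall_congr' fun i ↦ ?_⟩
  by_cases h : ε i <;> simp [h]

theorem abs_apply_le_pnorm {p : Vec2} (hp : p ∈ P) (i : Fin 2) : |p i| ≤ pnorm P := by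
  rw [Int.abs_eq_natAbs]
  exact_mod_cast (Finset.le_sup (f := fun i ↦ (p i).natAbs) (Finset.mem_univ i)).trans
    (Finset.le_sup (f := vnorm) hp)

theorem linSet_subset_linSet_inter_orthant {Q : Finset Vec2} (hb : b ∈ P)
    (hQ : ∀ q ∈ Q, q ∈ orthant ε ∧ (q ∈ P ∨ q - b ∈ AddSubmonoid.closure (P : Set Vec2)))
    (hc : c ∈ orthant ε) (hcb : c ∈ LinSet b P) : LinSet c Q ⊆ LinSet b P ∩ orthant ε := by
  have hQP : AddSubmonoid.closure (Q : Set Vec2) ≤ AddSubmonoid.closure P :=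
    AddSubmonoid.closure_le.2 fun q hq ↦ (hQ q hq).2.elim (AddSubmonoid.subset_closure ·)
      fun hqb ↦ by simpa using add_mem hqb (AddSubmonoid.subset_closure hb)
  have hQε : AddSubmonoid.closure (Q : Set Vec2) ≤ orthant ε :=
    AddSubmonoid.closure_le.2 fun q hq ↦ (hQ q hq).1
  intro v hv
  rw [mem_linSet_iff] at hv hcb
  refine ⟨mem_linSet_iff.2 ?_, ?_⟩
  · simpa using add_mem (hQP hv) hcb
  · simpa using add_mem (hQε hv) hc

theorem exists_linSet_inter_orthant_eq (hP : ∀ p ∈ P, ∀ i, |p i| ≤ M) (hb : b ∈ P)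
    (ε : Fin 2 → ℤˣ) :
    ∃ C Q : Finset Vec2, LinSet b P ∩ orthant ε = ⋃ c ∈ C, LinSet c Q ∧ Q.card ≤ 2 ∧
      (Q : Set Vec2) ⊆ (P ∪ LinSet b P) ∩ orthant ε ∧
      ∀ v, v ∈ C ∨ v ∈ Q ∧ v ∈ LinSet b P →
        v - b ∈ sumsLE (P : Set Vec2) (baseBound M + periodBound M) := by
  obtain ⟨Q, hQcard, hQ, hdecomp⟩ := exists_periods_forall_exists_base hP hb ε
  have hfin : {c | c ∈ orthant ε ∧ c - b ∈ sumsLE (P : Set Vec2) (baseBound M)}.Finite :=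
    (finite_setOf_sub_mem_sumsLE hP b (baseBound M)).subset fun c hc ↦ hc.2
  refine ⟨hfin.toFinset, Q, ?_, hQcard, fun q hq ↦ ?_, ?_⟩
  · apply subset_antisymm
    · rintro v ⟨hvb, hv⟩
      obtain ⟨c, hc, hcb, hvc⟩ := hdecomp v hv (mem_linSet_iff.1 hvb)
      exact Set.mem_biUnion (hfin.mem_toFinset.2 ⟨hc, hcb⟩) (mem_linSet_iff.2 hvc)
    · refine Set.iUnion₂_subset fun c hc ↦ ?_
      obtain ⟨hc, hcb⟩ := hfin.mem_toFinset.1 hc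
      exact linSet_subset_linSet_inter_orthant hb (fun q hq ↦ ⟨(hQ q hq).1, (hQ q hq).2.1⟩) hc
        (mem_linSet_iff.2 (mem_closure_of_mem_sumsLE hcb))
  · exact ⟨(hQ q hq).2.1.imp_right mem_linSet_iff.2, (hQ q hq).1⟩
  · rintro v (hv | ⟨hvQ, hv⟩)
    · exact sumsLE_mono (Nat.le_add_right _ _) (hfin.mem_toFinset.1 hv).2
    · exact sumsLE_mono (Nat.le_add_left _ _) ((hQ v hvQ).2.2 (mem_linSet_iff.1 hv))

end Decomposition

section PolynomialBounds

/-- The function `f` is bounded by a fixed power of `M + 2`. -/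
@[fun_prop]
def PolyBounded (f : ℕ → ℕ) : Prop := ∃ c, ∀ M, f M ≤ (M + 2) ^ c

variable {f g : ℕ → ℕ}

@[fun_prop]
theorem PolyBounded.const (k : ℕ) : PolyBounded fun _ ↦ k :=
  ⟨k, fun M ↦ Nat.lt_two_pow_self.le.trans (Nat.pow_le_pow_left (Nat.le_add_left 2 M) k)⟩

@[fun_prop]
theorem PolyBounded.id : PolyBounded fun M ↦ M := ⟨1, fun M ↦ by simp⟩

@[fun_prop]
theorem PolyBounded.mul (hf : PolyBounded f) (hg : PolyBounded g) :
    PolyBounded fun M ↦ f M * g M := by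
  obtain ⟨c, hc⟩ := hf
  obtain ⟨d, hd⟩ := hg
  exact ⟨c + d, fun M ↦ (Nat.mul_le_mul (hc M) (hd M)).trans_eq (pow_add _ c d).symm⟩

@[fun_prop]
theorem PolyBounded.add (hf : PolyBounded f) (hg : PolyBounded g) :
    PolyBounded fun M ↦ f M + g M := by
  obtain ⟨c, hc⟩ := hf
  obtain ⟨d, hd⟩ := hg
  refine ⟨c + d + 1, fun M ↦ ?_⟩
  have hcd : (M + 2) ^ c ≤ (M + 2) ^ (c + d) := Nat.pow_le_pow_right (by omega) (by omega)
  have hdc : (M + 2) ^ d ≤ (M + 2) ^ (c + d) := Nat.pow_le_pow_right (by omega) (by omega)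
  calc f M + g M ≤ (M + 2) ^ (c + d) * 2 := by linarith [hc M, hd M]
    _ ≤ (M + 2) ^ (c + d + 1) := Nat.mul_le_mul_left _ (Nat.le_add_left 2 M)

@[fun_prop]
theorem PolyBounded.pow (hf : PolyBounded f) (n : ℕ) : PolyBounded fun M ↦ f M ^ n := by
  obtain ⟨c, hc⟩ := hf
  exact ⟨c * n, fun M ↦ (Nat.pow_le_pow_left (hc M) n).trans_eq (pow_mul _ c n).symm⟩

theorem polyBounded_baseBound_add_periodBound :
    PolyBounded fun M ↦ baseBound M + periodBound M := by
  simp only [baseBound, periodBound, raySize, blockSize]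
  fun_prop

end PolynomialBounds

/-- decomposition of linear sets in dimension two. The
intersection of a linear set `L(b;P)` with `b ∈ P` with a quadrant `Z` is a
finite union of linear sets `L(cᵢ;Pᵢ)` with at most two small periods each,
all pointing into `Z`. -/
theorem statement5 :
    ∃ c : ℕ, ∀ (b : Vec2) (P : Finset Vec2) (Z : Set Vec2),
      b ∈ P → IsQuadrant Z →
      ∃ (I : Finset ℕ) (cv : ℕ → Vec2) (Ps : ℕ → Finset Vec2),
        (LinSet b P ∩ Z = ⋃ i ∈ I, LinSet (cv i) (Ps i)) ∧
        ∀ i ∈ I,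
          (Ps i).card ≤ 2 ∧
          (↑(Ps i) : Set Vec2) ⊆ (↑P ∪ LinSet b P) ∩ Z ∧
          ∃ e : ℕ, e ≤ (pnorm P + 2) ^ c ∧
            (insert (cv i) {p : Vec2 | p ∈ Ps i ∧ p ∈ LinSet b P} : Set Vec2) ⊆
              {v | ∃ w ∈ ConeLe e P, v = b + w} := by
  obtain ⟨k, hk⟩ := polyBounded_baseBound_add_periodBound
  refine ⟨k, fun b P Z hb hZ ↦ ?_⟩
  obtain ⟨ε, rfl⟩ := exists_eq_orthant_of_isQuadrant hZ
  obtain ⟨C, Q, hunion, hcard, hQ, hsmall⟩ :=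
    exists_linSet_inter_orthant_eq (fun p ↦ abs_apply_le_pnorm) hb ε
  obtain ⟨e⟩ : Nonempty (ℕ ≃ Vec2) := nonempty_equiv_of_countable
  refine ⟨C.map e.symm.toEmbedding, e, fun _ ↦ Q, ?_, fun i hi ↦ ⟨hcard, hQ, _, hk (pnorm P), ?_⟩⟩
  · simpa [hunion] using (e.surjective.iUnion_comp fun c ↦ ⋃ _ : c ∈ C, LinSet c Q).symm
  · intro v hv
    refine ⟨v - b, sumsLE_subset_coneLe (hsmall v ?_), (add_sub_cancel b v).symm⟩
    rcases hv with rfl | hv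
    · exact .inl (by simpa using hi)
    · exact .inr hv

end LinSets
end
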